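/- arXiv:1402.1818 — 3 statements merged into one kernel-verified Lean document; each statement's English description precedes it below -/
import Mathlib

section
/- For every positive integer k, there exists a standard Borel space X with a nonatomic σ-finite Borel measure μ satisfying μ(X) = ∞, and an invertible measure-preserving transformation T : X → X, such that: (i) the k-fold Cartesian product of T is ergodic; (ii) the (k+1)-fold Cartesian product of T is not ergodic (so T has ergodic index k); and (iii) for every positive integer n, the n-fold Cartesian product of T is conservative (so T has infinite conservative index). -/
/-!
The transformation is a tower over an odometer; equivalently, it is obtained by cutting and
stacking. Points of the base are digit sequences with `ρ j + 2` digits at stage `j`. The digit `a`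
at stage `j` sits at a position that dominates everything from the lower stages, and the tower has
the height for which base points differing in finitely many digits lie on one orbit, at a time
distance equal to the difference of their total displacements; almost all returns to the base are
of this form. The heights have infinite mean, so the invariant measure is infinite.

At a stage with spacing `W` the positions are `0`, `W`, `2 W + 1`, `27 W`, `81 W`, … . Only the
first three of them admit approximate coincidences of differences, namely between `W` and `W + 1`.

* Ergodicity of the `m`-fold product: at a stage with at least three digits, moving the digit of one
  coordinate from `1` to `2` and those of the others from `0` to `1` displaces that coordinate by
  `W + 1` and the others by `W`. The digits are in this configuration with probability
  `(ρ j + 2) ^ (-m)`. If these numbers have a divergent sum, then an invariant set is insensitive to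
  a shift of a single coordinate, hence to all changes of finitely many digits, and a zero-one law
  applies.
* Failure of ergodicity: if `∑ (3 / (ρ j + 2)) ^ m` over the stages with at least three digits is
  small, then with positive probability some coordinate has a digit that is at least `3` at each
  such stage. For such tuples the arithmetic of the positions forces all coordinates to be displaced
  equally at every stage, so whether two coordinates have the same digit is an invariant.
* Conservativity of all products: at a two-digit stage, exchanging the digits `0` and `1` displaces
  all coordinates with digit `0` by `W`, and all coordinates have digit `0` with a probability that
  does not depend on the stage.

Two-digit stages therefore alternate with stages having about `q ^ (1 / k)` digits, so that
`∑ (ρ j + 2) ^ (-m)` over the latter diverges for `m = k` and converges for `m = k + 1`.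
-/

open MeasureTheory

/-- `T` is *conservative* w.r.t. `μ`: for every measurable set `A` of positive measure
there is a positive integer `n` with `μ (T⁻ⁿ A ∩ A) > 0`. -/
def IsConservativeMap {X : Type*} [MeasurableSpace X] (μ : Measure X) (T : X → X) : Prop :=
  ∀ A : Set X, MeasurableSet A → 0 < μ A →
    ∃ n : ℕ, 0 < n ∧ 0 < μ (T^[n] ⁻¹' A ∩ A)

/-- `T` is *ergodic* w.r.t. `μ`: every measurable set `A` with `T⁻¹ A = A` mod `μ`
is null or conull. -/
def IsErgodicMap {X : Type*} [MeasurableSpace X] (μ : Measure X) (T : X → X) : Prop :=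
  ∀ A : Set X, MeasurableSet A → μ (symmDiff (T ⁻¹' A) A) = 0 →
    μ A = 0 ∨ μ Aᶜ = 0

namespace OdometerTower

open Set Filter Function ProbabilityTheory
open scoped ENNReal Topology symmDiff

section Measure

variable {α β : Type*} [MeasurableSpace α] [MeasurableSpace β]

theorem measure_eq_tsum_inter {κ : Type*} [Countable κ] {μ : Measure α} {E : κ → Set α}
    (hE : ∀ j, MeasurableSet (E j)) (hdisj : Pairwise (Disjoint on E)) (hcover : μ (⋃ j, E j)ᶜ = 0)
    {A : Set α} (hA : MeasurableSet A) : μ A = ∑' j, μ (A ∩ E j) := by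
  rw [← measure_iUnion (fun i j hij => (hdisj hij).mono inter_subset_right inter_subset_right)
    fun j => hA.inter (hE j), ← inter_iUnion, measure_inter_conull hcover]

theorem measurePreserving_of_eqOn {κ : Type*} [Countable κ] {μ : Measure α} {ν : Measure β}
    {f : α ≃ᵐ β} {g : κ → α ≃ᵐ β} {E : κ → Set α} (hE : ∀ j, MeasurableSet (E j))
    (hdisj : Pairwise (Disjoint on E)) (hcover : μ (⋃ j, E j)ᶜ = 0)
    (hcover' : ν (f '' (⋃ j, E j)ᶜ) = 0) (hg : ∀ j, MeasurePreserving (g j) μ ν)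
    (hfg : ∀ j, EqOn f (g j) (E j)) : MeasurePreserving f μ ν := by
  have himage : ∀ j, MeasurableSet (f '' E j) := fun j => f.measurableSet_image.2 (hE j)
  refine ⟨f.measurable, Measure.ext fun A hA => ?_⟩
  rw [image_compl_eq f.bijective, image_iUnion] at hcover'
  rw [Measure.map_apply f.measurable hA, measure_eq_tsum_inter hE hdisj hcover (f.measurable hA),
    measure_eq_tsum_inter himage (fun i j hij => disjoint_image_of_injective f.injective
      (hdisj hij)) hcover' hA]
  refine tsum_congr fun j => ?_
  have hpiece : f ⁻¹' A ∩ E j = g j ⁻¹' (A ∩ f '' E j) := by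
    rw [preimage_inter, (hfg j).image_eq, (g j).injective.preimage_image, inter_comm,
      (hfg j).inter_preimage_eq, inter_comm]
  rw [hpiece, (hg j).measure_preimage (hA.inter (himage j)).nullMeasurableSet]

theorem measurePreserving_perm_uniformOn [Finite α] [MeasurableSingletonClass α]
    (e : Equiv.Perm α) : MeasurePreserving e (uniformOn univ) (uniformOn univ) := by
  cases nonempty_fintype α
  have he : Measurable e := measurable_of_finite e
  refine ⟨he, Measure.ext_of_singleton fun a => ?_⟩
  rw [Measure.map_apply he (measurableSet_singleton a), uniformOn_univ, uniformOn_univ,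
    ← e.image_symm_eq_preimage, image_singleton, Measure.count_singleton, Measure.count_singleton]

theorem two_mul_measure_le_of_disjoint_preimage {μ : Measure α} {g : α → α} {A B : Set α}
    (hg : MeasurePreserving g μ μ) (hA : MeasurableSet A) (hAB : A ⊆ B) (hB : g ⁻¹' B = B)
    (hdisj : μ (A ∩ g ⁻¹' A) = 0) : 2 * μ A ≤ μ B := by
  calc 2 * μ A = μ A + μ (g ⁻¹' A) := by
        rw [hg.measure_preimage hA.nullMeasurableSet, two_mul]
    _ = μ (A ∪ g ⁻¹' A) := (measure_union₀ (hg.measurable hA).nullMeasurableSet hdisj).symm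
    _ ≤ μ B := measure_mono (union_subset hAB (hB ▸ preimage_mono hAB))

theorem two_mul_measure_inter_le_of_disjoint_preimage {κ : Type*} [Countable κ] {μ : Measure α}
    {g : κ → α → α} {E : κ → Set α} {D K : Set α} (hE : ∀ j, MeasurableSet (E j))
    (hdisj : Pairwise (Disjoint on E)) (hcover : μ (⋃ j, E j)ᶜ = 0) (hD : MeasurableSet D)
    (hK : MeasurableSet K) (hg : ∀ j, MeasurePreserving (g j) μ μ)
    (hgE : ∀ j, g j ⁻¹' (K ∩ E j) = K ∩ E j) (hgD : ∀ j, μ (D ∩ E j ∩ g j ⁻¹' D) = 0) :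
    2 * μ (D ∩ K) ≤ μ K := by
  rw [measure_eq_tsum_inter hE hdisj hcover (hD.inter hK),
    measure_eq_tsum_inter hE hdisj hcover hK, ← ENNReal.tsum_mul_left]
  refine ENNReal.tsum_le_tsum fun j => two_mul_measure_le_of_disjoint_preimage (hg j)
    ((hD.inter hK).inter (hE j)) (inter_subset_inter_left _ inter_subset_right) (hgE j)
    (measure_mono_null ?_ (hgD j))
  rintro x ⟨⟨⟨hxD, -⟩, hxE⟩, ⟨hgxD, -⟩, -⟩
  exact ⟨⟨hxD, hxE⟩, hgxD⟩

theorem measure_eq_zero_of_two_mul_inter_le {μ : Measure α} [IsFiniteMeasure μ]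
    {C : Set (Set α)} (hC : IsSetAlgebra C) (hgen : ‹MeasurableSpace α› = .generateFrom C)
    {D : Set α} (hD : MeasurableSet D) (h : ∀ K ∈ C, 2 * μ (D ∩ K) ≤ μ K) : μ D = 0 := by
  refine le_antisymm (ENNReal.le_of_forall_pos_le_add fun ε hε _ => ?_) bot_le
  obtain ⟨K, hK, hKD⟩ := exists_measure_symmDiff_lt_of_generateFrom_isSetRing (μ := μ)
    hC.isSetRing ⟨{univ}, countable_singleton _, by simpa using hC.univ_mem, by simp⟩ hgen hD
    (ENNReal.half_pos (ENNReal.coe_pos.2 hε).ne')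
  have hKmeas : MeasurableSet K := by rw [hgen]; exact .basic K hK
  have hdiff : μ (D \ K) ≤ ε / 2 := (measure_mono subset_union_right).trans hKD.le
  have hle : μ (D ∩ K) + μ (D ∩ K) ≤ ε / 2 + μ (D ∩ K) := by
    calc μ (D ∩ K) + μ (D ∩ K) = 2 * μ (D ∩ K) := (two_mul _).symm
      _ ≤ μ K := h K hK
      _ = μ (K \ D) + μ (D ∩ K) := by rw [inter_comm, measure_sdiff_add_inter K hD]
      _ ≤ ε / 2 + μ (D ∩ K) := by gcongr; exact (measure_mono subset_union_left).trans hKD.le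
  have hinter : μ (D ∩ K) ≤ ε / 2 := (ENNReal.add_le_add_iff_right (measure_ne_top _ _)).1 hle
  calc μ D = μ (D ∩ K) + μ (D \ K) := (measure_inter_add_sdiff D hKmeas).symm
    _ ≤ ε / 2 + ε / 2 := add_le_add hinter hdiff
    _ = 0 + ε := by rw [ENNReal.add_halves, zero_add]

end Measure

section InfiniteProduct

variable {α : ℕ → Type*}

/-- The map applying `σ` to the `j`-th coordinate of a sequence. -/
def moveAt (j : ℕ) (σ : α j → α j) (w : ∀ l, α l) : ∀ l, α l := update w j (σ (w j))

@[simp] theorem moveAt_same (j : ℕ) (σ : α j → α j) (w : ∀ l, α l) :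
    moveAt j σ w j = σ (w j) := update_self ..

theorem moveAt_of_ne {j l : ℕ} (h : l ≠ j) (σ : α j → α j) (w : ∀ l, α l) :
    moveAt j σ w l = w l := update_of_ne h ..

theorem moveAt_moveAt {j : ℕ} {σ : α j → α j} (hσ : Involutive σ) (w : ∀ l, α l) :
    moveAt j σ (moveAt j σ w) = w := by
  simp [moveAt, hσ (w j)]

theorem moveAt_preimage_cylinder {j : ℕ} {s : Finset ℕ} (hj : j ∉ s) (σ : α j → α j)
    (S : Set (∀ i : s, α i)) : moveAt j σ ⁻¹' cylinder s S = cylinder s S := by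
  ext w
  have : s.restrict (moveAt j σ w) = s.restrict w :=
    funext fun i => moveAt_of_ne (ne_of_mem_of_not_mem i.2 hj) σ w
  simp only [mem_preimage, mem_cylinder, this]

variable [∀ j, MeasurableSpace (α j)] {P : ∀ j, Measure (α j)} [∀ j, IsProbabilityMeasure (P j)]

theorem measurePreserving_moveAt {j : ℕ} {σ : α j → α j} (hσ : MeasurePreserving σ (P j) (P j)) :
    MeasurePreserving (moveAt j σ) (Measure.infinitePi P) (Measure.infinitePi P) := by
  have hmap : ∀ l, MeasurePreserving (update (fun l => id (α := α l)) j σ l) (P l) (P l) := by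
    intro l
    rcases eq_or_ne l j with rfl | h
    · rwa [update_self]
    · rw [update_of_ne h]
      exact .id _
  have heq : moveAt j σ = fun w l => update (fun l => id (α := α l)) j σ l (w l) := by
    funext w l
    rcases eq_or_ne l j with rfl | h
    · simp
    · simp [moveAt_of_ne h, update_of_ne h]
  rw [heq]
  refine ⟨measurable_pi_lambda _ fun l => (hmap l).measurable.comp (measurable_pi_apply l), ?_⟩
  rw [Measure.infinitePi_map_pi _ fun l => (hmap l).measurable]
  exact congrArg Measure.infinitePi (funext fun l => (hmap l).map_eq)

theorem infinitePi_eval_mem {j : ℕ} {s : Set (α j)} (hs : MeasurableSet s) :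
    Measure.infinitePi P {w | w j ∈ s} = P j s :=
  (measurePreserving_eval_infinitePi P j).measure_preimage hs.nullMeasurableSet

theorem ae_frequently_mem_of_tsum_eq_top {s : ∀ j, Set (α j)} (hs : ∀ j, MeasurableSet (s j))
    (hsum : ∑' j, P j (s j) = ∞) : ∀ᵐ w ∂Measure.infinitePi P, ∃ᶠ j in atTop, w j ∈ s j := by
  have hmeas : ∀ j, MeasurableSet {w : ∀ l, α l | w j ∈ s j} :=
    fun j => measurable_pi_apply j (hs j)
  have hindep : iIndepSet (fun j => {w : ∀ l, α l | w j ∈ s j}) (Measure.infinitePi P) := by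
    refine (iIndepSet_iff_meas_biInter hmeas).2 fun t => ?_
    simp only [infinitePi_eval_mem (hs _)]
    rw [← Measure.infinitePi_pi P fun j _ => hs j]
    congr 1
    ext w
    simp
  have hlimsup := measure_limsup_eq_one hmeas hindep
    (by simpa only [infinitePi_eval_mem (hs _)] using hsum)
  rw [← prob_compl_eq_zero_iff (.measurableSet_limsup hmeas)] at hlimsup
  filter_upwards [measure_eq_zero_iff_ae_notMem.1 hlimsup] with w hw
  exact mem_limsup_iff_frequently_mem.1 (not_not.1 hw)

theorem measure_eq_zero_or_one_of_tail_invariant {D : Set (∀ j, α j)} (hD : MeasurableSet D)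
    (htail : ∀ v w, (∀ᶠ j in atTop, v j = w j) → v ∈ D → w ∈ D) :
    Measure.infinitePi P D = 0 ∨ Measure.infinitePi P D = 1 := by
  have hindep := (iIndepFun_infinitePi (P := P) (X := fun _ ω => ω) fun _ => measurable_id)
  refine measure_zero_or_one_of_measurableSet_limsup_atTop
    (fun j => (measurable_pi_apply j).comap_le) hindep ?_
  have (j : ℕ) : Nonempty (α j) := (P j).nonempty_of_neZero
  let c : ∀ j, α j := fun j => Classical.arbitrary _
  rw [limsup_eq_iInf_iSup_of_nat, MeasurableSpace.measurableSet_iInf]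
  intro n
  let tail : (∀ j, α j) → ∀ j, α j := fun w j => if n ≤ j then w j else c j
  have hpre : D = tail ⁻¹' D := by
    have hagree : ∀ w, ∀ᶠ j in atTop, w j = tail w j := fun w =>
      (eventually_ge_atTop n).mono fun j hj => (if_pos hj).symm
    exact Subset.antisymm (fun w => htail _ _ (hagree w))
      fun w => htail _ _ ((hagree w).mono fun _ => Eq.symm)
  rw [hpre]
  refine (@measurable_pi_iff _ _ _ (_) _ _).2 (fun j => ?_) hD
  by_cases hj : n ≤ j
  · simp only [tail, if_pos hj]
    refine (comap_measurable (fun w : ∀ j, α j => w j)).mono ?_ le_rfl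
    exact le_iSup₂_of_le j hj le_rfl
  · simp only [tail, if_neg hj]
    exact @measurable_const _ _ _ (_) _

theorem measure_eq_zero_of_moveAt_preimage_null_of_preimage_eq {σ : ∀ j, α j → α j}
    (hσ : ∀ j, MeasurePreserving (σ j) (P j) (P j)) {s : ∀ j, Set (α j)}
    (hs : ∀ j, MeasurableSet (s j)) (hσs : ∀ j, σ j ⁻¹' s j = s j) (hsum : ∑' j, P j (s j) = ∞)
    {D : Set (∀ j, α j)} (hD : MeasurableSet D)
    (hnull : ∀ j, Measure.infinitePi P (D ∩ {w | w j ∈ s j} ∩ moveAt j (σ j) ⁻¹' D) = 0) :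
    Measure.infinitePi P D = 0 := by
  refine measure_eq_zero_of_two_mul_inter_le isSetAlgebra_measurableCylinders
    generateFrom_measurableCylinders.symm hD fun K hK => ?_
  obtain ⟨t, S, -, rfl⟩ := (mem_measurableCylinders K).1 hK
  obtain ⟨J, hJ⟩ : ∃ J, ∀ j, j + J ∉ t := by
    obtain ⟨J, hJ⟩ := t.exists_nat_subset_range
    exact ⟨J, fun j hj => by simpa using hJ hj⟩
  let R : ℕ → Set (∀ j, α j) := fun j => {w | w (j + J) ∈ s (j + J)}
  have hR : ∀ j, MeasurableSet (R j) := fun j => measurable_pi_apply (j + J) (hs (j + J))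
  have hcover : Measure.infinitePi P (⋃ j, disjointed R j)ᶜ = 0 := by
    rw [iUnion_disjointed, measure_eq_zero_iff_ae_notMem]
    filter_upwards [ae_frequently_mem_of_tsum_eq_top hs hsum] with w hw
    obtain ⟨j, hj, hwj⟩ := frequently_atTop.1 hw J
    obtain ⟨i, rfl⟩ := Nat.exists_eq_add_of_le' hj
    exact not_not.2 (mem_iUnion.2 ⟨i, hwj⟩)
  have hmoveR : ∀ j l, moveAt (j + J) (σ (j + J)) ⁻¹' R l = R l := by
    intro j l
    ext w
    rcases eq_or_ne l j with rfl | h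
    · simpa [R] using Set.ext_iff.1 (hσs (l + J)) (w (l + J))
    · simp [R, moveAt_of_ne (by lia : l + J ≠ j + J)]
  refine two_mul_measure_inter_le_of_disjoint_preimage (E := disjointed R)
    (g := fun j => moveAt (j + J) (σ (j + J))) (fun j => .disjointed hR j) (disjoint_disjointed R)
    hcover hD (.of_mem_measurableCylinders hK) (fun j => measurePreserving_moveAt (hσ _))
    (fun j => ?_) fun j => measure_mono_null (inter_subset_inter_left _
      (inter_subset_inter_right _ (disjointed_subset R j))) (hnull (j + J))
  rw [preimage_inter, moveAt_preimage_cylinder (hJ j), disjointed_eq_inter_compl]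
  simp only [preimage_inter, preimage_iInter, preimage_compl, hmoveR]

theorem measure_inter_union_moveAt_preimage_null {j : ℕ} {σ : α j → α j} (hinv : Involutive σ)
    (hσ : MeasurePreserving σ (P j) (P j)) {s : Set (α j)} (hs : MeasurableSet s)
    {D : Set (∀ j, α j)} (hD : MeasurableSet D)
    (hnull : Measure.infinitePi P (D ∩ {w | w j ∈ s} ∩ moveAt j σ ⁻¹' D) = 0) :
    Measure.infinitePi P (D ∩ {w | w j ∈ s ∪ σ ⁻¹' s} ∩ moveAt j σ ⁻¹' D) = 0 := by
  have hmove := measurePreserving_moveAt hσ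
  have hmeas : MeasurableSet (D ∩ {w | w j ∈ s} ∩ moveAt j σ ⁻¹' D) :=
    (hD.inter (measurable_pi_apply j hs)).inter (hmove.measurable hD)
  refine measure_mono_null (t := _ ∪ moveAt j σ ⁻¹' _) ?_
    (measure_union_null hnull ((hmove.measure_preimage hmeas.nullMeasurableSet).trans hnull))
  rintro w ⟨⟨hw, hs | hs⟩, hmw⟩
  · exact .inl ⟨⟨hw, hs⟩, hmw⟩
  · refine .inr ⟨⟨hmw, ?_⟩, ?_⟩
    · simpa using hs
    · simpa [moveAt_moveAt hinv] using hw

theorem measure_eq_zero_of_moveAt_preimage_null {σ : ∀ j, α j → α j} (hinv : ∀ j, Involutive (σ j))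
    (hσ : ∀ j, MeasurePreserving (σ j) (P j) (P j)) {s : ∀ j, Set (α j)}
    (hs : ∀ j, MeasurableSet (s j)) (hsum : ∑' j, P j (s j) = ∞) {D : Set (∀ j, α j)}
    (hD : MeasurableSet D)
    (hnull : ∀ j, Measure.infinitePi P (D ∩ {w | w j ∈ s j} ∩ moveAt j (σ j) ⁻¹' D) = 0) :
    Measure.infinitePi P D = 0 := by
  refine measure_eq_zero_of_moveAt_preimage_null_of_preimage_eq (s := fun j => s j ∪ σ j ⁻¹' s j)
    hσ (fun j => (hs j).union ((hσ j).measurable (hs j))) (fun j => ?_)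
    (top_unique (hsum ▸ ENNReal.tsum_le_tsum fun j => measure_mono subset_union_left)) hD
    fun j => measure_inter_union_moveAt_preimage_null (hinv j) (hσ j) (hs j) hD (hnull j)
  rw [preimage_union, ← preimage_comp, (hinv j).comp_self, preimage_id, union_comm]

end InfiniteProduct

theorem infinitePi_map_swap {ι κ : Type*} {α : ι → κ → Type*} [∀ i j, MeasurableSpace (α i j)]
    (P : ∀ i j, Measure (α i j)) [∀ i j, IsProbabilityMeasure (P i j)] :
    (Measure.infinitePi fun i => Measure.infinitePi fun j => P i j).map swap =
      Measure.infinitePi fun j => Measure.infinitePi fun i => P i j := by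
  let e : (Σ _ : ι, κ) ≃ Σ _ : κ, ι :=
    ⟨fun p => ⟨p.2, p.1⟩, fun p => ⟨p.2, p.1⟩, fun _ => rfl, fun _ => rfl⟩
  have hswap : (swap : (∀ i j, α i j) → ∀ j i, α i j) =
      MeasurableEquiv.piCurry (fun j i => α i j) ∘
        MeasurableEquiv.piCongrLeft (fun p : Σ _ : κ, ι => α p.2 p.1) e ∘
          (MeasurableEquiv.piCurry α).symm := rfl
  rw [hswap, ← Measure.map_map (MeasurableEquiv.measurable _)
      ((MeasurableEquiv.measurable _).comp (MeasurableEquiv.measurable _)),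
    ← Measure.map_map (MeasurableEquiv.measurable _) (MeasurableEquiv.measurable _),
    Measure.infinitePi_map_piCurry_symm]
  have hreindex := Measure.infinitePi_map_piCongrLeft (fun p : Σ _ : κ, ι => P p.2 p.1) e
  refine (congrArg (Measure.map _) hreindex).trans ?_
  exact Measure.infinitePi_map_piCurry fun j i => P i j

theorem measurePreserving_swap_pi_infinitePi {ι κ : Type*} [Fintype ι] {α : κ → Type*}
    [∀ j, MeasurableSpace (α j)] (P : ∀ j, Measure (α j)) [∀ j, IsProbabilityMeasure (P j)] :
    MeasurePreserving (swap : (ι → ∀ j, α j) → ∀ j, ι → α j)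
      (Measure.pi fun _ => Measure.infinitePi P)
      (Measure.infinitePi fun j => Measure.pi fun _ => P j) := by
  simp only [← Measure.infinitePi_eq_pi]
  exact ⟨by fun_prop, infinitePi_map_swap fun _ j => P j⟩

theorem measure_eq_zero_or_one_of_tail_invariant_tuple {ι : Type*} [Fintype ι] {α : ℕ → Type*}
    [∀ j, MeasurableSpace (α j)] {P : ∀ j, Measure (α j)} [∀ j, IsProbabilityMeasure (P j)]
    {D : Set (ι → ∀ j, α j)} (hD : MeasurableSet D)
    (htail : ∀ y z, (∃ N, ∀ i, ∀ j ≥ N, y i j = z i j) → y ∈ D → z ∈ D) :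
    Measure.pi (fun _ => Measure.infinitePi P) D = 0 ∨
      Measure.pi (fun _ => Measure.infinitePi P) D = 1 := by
  have hswap : MeasurableSet (swap ⁻¹' D : Set (∀ j, ι → α j)) := by
    have : Measurable (swap : (∀ j, ι → α j) → ι → ∀ j, α j) := by fun_prop
    exact this hD
  have hmeasure := (measurePreserving_swap_pi_infinitePi P).measure_preimage hswap.nullMeasurableSet
  rw [show swap ⁻¹' (swap ⁻¹' D) = D from rfl] at hmeasure
  rw [hmeasure]
  refine measure_eq_zero_or_one_of_tail_invariant hswap fun v w hvw hv => ?_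
  obtain ⟨N, hN⟩ := eventually_atTop.1 hvw
  exact htail (swap v) (swap w) ⟨N, fun i j hj => congrFun (hN j hj) i⟩ hv

theorem measurable_perm_zpow {α : Type*} [MeasurableSpace α] (e : α ≃ᵐ α) (n : ℤ) :
    Measurable (e.toEquiv ^ n : Equiv.Perm α) := by
  have hpow : ∀ (f : α ≃ᵐ α) (t : ℕ), Measurable (f.toEquiv ^ t : Equiv.Perm α) := fun f t => by
    rw [Equiv.Perm.coe_pow]
    exact f.measurable.iterate t
  cases n with
  | ofNat t =>
    rw [Int.ofNat_eq_natCast, zpow_natCast]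
    exact hpow e t
  | negSucc t =>
    rw [zpow_negSucc, ← inv_pow]
    exact hpow e.symm (t + 1)

theorem perm_zpow_comp_mem_iff {α ι : Type*} {e : Equiv.Perm α} {A : Set (ι → α)}
    (hA : ∀ x, e ∘ x ∈ A ↔ x ∈ A) (t : ℤ) (x : ι → α) : ⇑(e ^ t) ∘ x ∈ A ↔ x ∈ A := by
  induction t using Int.induction_on with
  | zero => rfl
  | succ t ih => rw [← ih, ← hA (⇑(e ^ (t : ℤ)) ∘ x), ← comp_assoc, ← Equiv.Perm.coe_mul,
      ← zpow_one_add, add_comm]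
  | pred t ih => rw [← ih, ← hA, ← comp_assoc, ← Equiv.Perm.coe_mul, ← zpow_one_add,
      add_sub_cancel]

/-- The data of a Kakutani skyscraper: a base transformation and a positive height function. -/
structure Skyscraper (Y : Type*) [MeasurableSpace Y] where
  base : Y ≃ᵐ Y
  height : Y → ℕ
  measurable_height : Measurable height
  height_pos : ∀ y, 0 < height y

namespace Skyscraper

variable {Y : Type*} [MeasurableSpace Y] (K : Skyscraper Y)

/-- The skyscraper itself: the points of `Y × ℤ` on the levels `0, …, height y - 1` above `y`. -/
def tower : Set (Y × ℤ) := {x | 0 ≤ x.2 ∧ x.2 < K.height x.1}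

theorem measurable_height_int : Measurable fun y => (K.height y : ℤ) :=
  measurable_from_nat.comp K.measurable_height

/-- The lift of the base transformation that takes each roof point `(y, height y)` to the base
point `(base y, 0)`. -/
noncomputable def drop : Y × ℤ ≃ᵐ Y × ℤ where
  toFun x := (K.base x.1, x.2 - K.height x.1)
  invFun x := (K.base.symm x.1, x.2 + K.height (K.base.symm x.1))
  left_inv x := by simp
  right_inv x := by simp
  measurable_toFun := (K.base.measurable.comp measurable_fst).prodMk
    (measurable_snd.sub (K.measurable_height_int.comp measurable_fst))
  measurable_invFun := by
    have hsymm : Measurable fun x : Y × ℤ => K.base.symm x.1 :=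
      K.base.symm.measurable.comp measurable_fst
    exact hsymm.prodMk (measurable_snd.add (K.measurable_height_int.comp hsymm))

/-- The involution of `Y × ℤ` that exchanges each roof point `(y, height y)` with the base point
`(base y, 0)` and fixes all other points. -/
noncomputable def exchange (x : Y × ℤ) : Y × ℤ :=
  if x.2 = K.height x.1 then K.drop x else if x.2 = 0 then K.drop.symm x else x

variable {K}

theorem height_int_ne_zero (y : Y) : (K.height y : ℤ) ≠ 0 :=
  Int.natCast_ne_zero.2 (K.height_pos y).ne'

theorem drop_apply (x : Y × ℤ) : K.drop x = (K.base x.1, x.2 - K.height x.1) := rfl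

theorem drop_symm_apply (x : Y × ℤ) :
    K.drop.symm x = (K.base.symm x.1, x.2 + K.height (K.base.symm x.1)) := rfl

@[simp] theorem exchange_roof (y : Y) : K.exchange (y, K.height y) = (K.base y, 0) := by
  simp [exchange, drop_apply]

@[simp] theorem exchange_zero (y : Y) :
    K.exchange (y, 0) = (K.base.symm y, (K.height (K.base.symm y) : ℤ)) := by
  simp [exchange, drop_symm_apply, (height_int_ne_zero y).symm]

theorem exchange_of_ne {x : Y × ℤ} (hroof : x.2 ≠ K.height x.1) (hzero : x.2 ≠ 0) :
    K.exchange x = x := by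
  simp [exchange, hroof, hzero]

variable (K) in
theorem involutive_exchange : Involutive K.exchange := by
  rintro ⟨y, n⟩
  by_cases hroof : n = K.height y
  · simp [hroof]
  by_cases hzero : n = 0
  · simp [hzero]
  simp [exchange_of_ne (x := (y, n)) hroof hzero]

variable (K) in
theorem measurable_exchange : Measurable K.exchange :=
  .ite (measurableSet_eq_fun measurable_snd (K.measurable_height_int.comp measurable_fst))
    K.drop.measurable
    (.ite (measurableSet_eq_fun measurable_snd measurable_const) K.drop.symm.measurable
      measurable_id)

variable (K) in
theorem measurableSet_tower : MeasurableSet K.tower :=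
  (measurableSet_le measurable_const measurable_snd).inter
    (measurableSet_lt measurable_snd (K.measurable_height_int.comp measurable_fst))

variable (K) in
/-- The tower transformation: move one level up, and from the roof to the base. It is defined on
all of `Y × ℤ` but only its restriction to `K.tower` matters; `exchange` makes it bijective. -/
noncomputable def map : Y × ℤ ≃ᵐ Y × ℤ :=
  ((MeasurableEquiv.refl Y).prodCongr (MeasurableEquiv.addRight (1 : ℤ))).trans
    (.ofInvolutive K.exchange K.involutive_exchange K.measurable_exchange)

theorem map_apply (y : Y) (n : ℤ) : K.map (y, n) = K.exchange (y, n + 1) := rfl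

theorem map_zpow_of_mem_tower {y : Y} {n : ℤ} (h : (y, n) ∈ K.tower) :
    (K.map.toEquiv ^ n) (y, 0) = (y, n) := by
  obtain ⟨h0, hn⟩ := h
  lift n to ℕ using h0
  rw [zpow_natCast]
  induction n with
  | zero => rfl
  | succ n ih =>
    dsimp only at ih hn
    rw [pow_succ', Equiv.Perm.mul_apply, ih (by lia)]
    refine (map_apply y n).trans (exchange_of_ne ?_ ?_) <;> dsimp only <;> lia

theorem map_pow_height (y : Y) : (K.map.toEquiv ^ K.height y) (y, 0) = (K.base y, 0) := by
  obtain ⟨n, hn⟩ := Nat.exists_eq_succ_of_ne_zero (K.height_pos y).ne'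
  have hbelow : (K.map.toEquiv ^ n) (y, 0) = (y, (n : ℤ)) := by
    rw [← zpow_natCast]
    exact map_zpow_of_mem_tower ⟨by positivity, by dsimp only; lia⟩
  rw [hn, pow_succ', Equiv.Perm.mul_apply, hbelow]
  refine (map_apply y n).trans ?_
  rw [show (n : ℤ) + 1 = K.height y by lia, exchange_roof]

theorem map_preimage_tower : K.map ⁻¹' K.tower = K.tower := by
  ext ⟨y, n⟩
  rw [mem_preimage, map_apply]
  have hpos := K.height_pos y
  by_cases hroof : n + 1 = K.height y
  · have hbase := K.height_pos (K.base y)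
    rw [hroof, exchange_roof]
    simp only [tower, mem_ofPred_eq]
    lia
  by_cases hzero : n + 1 = 0
  · rw [hzero, exchange_zero]
    simp only [tower, mem_ofPred_eq]
    lia
  rw [exchange_of_ne hroof hzero]
  simp only [tower, mem_ofPred_eq]
  lia

variable (K) in
/-- The measure on the skyscraper induced by a measure `ν` on its base. -/
noncomputable def measure (ν : Measure Y) : Measure (Y × ℤ) :=
  (ν.prod Measure.count).restrict K.tower

section Measure

variable {ν : Measure Y}

theorem measurePreserving_drop [SFinite ν] (hK : MeasurePreserving K.base ν ν) :
    MeasurePreserving K.drop (ν.prod Measure.count) (ν.prod Measure.count) :=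
  hK.skew_product (measurable_snd.sub (K.measurable_height_int.comp measurable_fst))
    (.of_forall fun y => (measurePreserving_sub_right Measure.count (K.height y : ℤ)).map_eq)

theorem measurePreserving_exchange [SFinite ν] (hK : MeasurePreserving K.base ν ν) :
    MeasurePreserving K.exchange (ν.prod Measure.count) (ν.prod Measure.count) := by
  let piece : Y × ℤ → Fin 3 := fun x => if x.2 = K.height x.1 then 0 else if x.2 = 0 then 1 else 2
  have hpiece : Measurable piece := by
    refine .ite (measurableSet_eq_fun measurable_snd (K.measurable_height_int.comp measurable_fst))
      measurable_const (.ite (measurableSet_eq_fun measurable_snd measurable_const)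
        measurable_const measurable_const)
  have hcover : (⋃ j, piece ⁻¹' {j})ᶜ = ∅ := by
    rw [← preimage_iUnion, iUnion_of_singleton, preimage_univ, compl_univ]
  refine measurePreserving_of_eqOn
    (f := .ofInvolutive K.exchange K.involutive_exchange K.measurable_exchange)
    (g := ![K.drop, K.drop.symm, .refl _]) (E := fun j => piece ⁻¹' {j})
    (fun j => hpiece (measurableSet_singleton j)) (pairwise_disjoint_fiber piece)
    (by rw [hcover, measure_empty]) (by rw [hcover, image_empty, measure_empty]) ?_ ?_
  · have hdrop := measurePreserving_drop hK
    exact Fin.forall_fin_succ.2 ⟨hdrop, Fin.forall_fin_two.2 ⟨hdrop.symm _, .id _⟩⟩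
  · rintro _ x rfl
    dsimp only [MeasurableEquiv.ofInvolutive_apply, exchange, piece]
    split_ifs <;> rfl

theorem measurePreserving_map [SFinite ν] (hK : MeasurePreserving K.base ν ν) :
    MeasurePreserving K.map (K.measure ν) (K.measure ν) := by
  have hshift : MeasurePreserving (Prod.map id (· + 1)) (ν.prod Measure.count)
      (ν.prod (Measure.count : Measure ℤ)) :=
    (MeasurePreserving.id ν).prod (measurePreserving_add_right _ 1)
  have hmap : MeasurePreserving K.map (ν.prod Measure.count) (ν.prod Measure.count) :=
    (measurePreserving_exchange hK).comp hshift
  have := hmap.restrict_preimage K.measurableSet_tower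
  rwa [map_preimage_tower] at this

theorem measure_univ [SFinite ν] : K.measure ν univ = ∫⁻ y, K.height y ∂ν := by
  rw [measure, Measure.restrict_apply_univ, Measure.prod_apply K.measurableSet_tower]
  refine lintegral_congr fun y => ?_
  have hfibre : Prod.mk y ⁻¹' K.tower = ((Finset.Ico (0 : ℤ) (K.height y) : Finset ℤ) : Set ℤ) := by
    ext n
    simp [tower]
  rw [hfibre, Measure.count_apply_finset]
  simp

instance [SigmaFinite ν] : SigmaFinite (K.measure ν) := by
  unfold measure
  infer_instance

instance [SFinite ν] [NullSingletonClass ν] : NullSingletonClass (K.measure ν) := by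
  unfold measure
  infer_instance

end Measure

section Product

variable {ι : Type*} {ν : Measure Y} {A : Set (ι → Y × ℤ)}

variable (K) in
/-- The part of `A` on the levels `n` of a product of copies of the skyscraper, as a set of tuples
of base points. -/
def level (A : Set (ι → Y × ℤ)) (n : ι → ℤ) : Set (ι → Y) :=
  {y | (fun i => (y i, n i)) ∈ A ∧ ∀ i, (y i, n i) ∈ K.tower}

variable (K) in
/-- The tuples of base points that are carried into `A` by the powers `n i` of the tower
transformation. In contrast to `K.level A n`, the powers may leave the first column. -/
def slice (A : Set (ι → Y × ℤ)) (n : ι → ℤ) : Set (ι → Y) :=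
  {y | (fun i => (K.map.toEquiv ^ n i) (y i, 0)) ∈ A}

theorem level_subset_slice (n : ι → ℤ) : K.level A n ⊆ K.slice A n := by
  rintro y ⟨hA, htower⟩
  simpa only [slice, mem_ofPred_eq, fun i => map_zpow_of_mem_tower (htower i)] using hA

theorem slice_add_const (hinv : ∀ x, K.map ∘ x ∈ A ↔ x ∈ A) (n : ι → ℤ) (t : ℤ) :
    K.slice A (fun i => n i + t) = K.slice A n := by
  ext y
  simp only [slice, mem_ofPred_eq, add_comm _ t, zpow_add, Equiv.Perm.mul_apply]
  exact perm_zpow_comp_mem_iff (e := K.map.toEquiv) hinv t _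

theorem measurableSet_slice [Countable ι] (hA : MeasurableSet A) (n : ι → ℤ) :
    MeasurableSet (K.slice A n) := by
  have : Measurable fun (y : ι → Y) i => (K.map.toEquiv ^ n i) (y i, (0 : ℤ)) :=
    measurable_pi_lambda _ fun i => (measurable_perm_zpow K.map (n i)).comp
      ((measurable_pi_apply i).prodMk measurable_const)
  exact this hA

theorem measurableSet_level [Countable ι] (hA : MeasurableSet A) (n : ι → ℤ) :
    MeasurableSet (K.level A n) := by
  have hlift : Measurable fun (y : ι → Y) i => (y i, n i) :=
    measurable_pi_lambda _ fun i => (measurable_pi_apply i).prodMk measurable_const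
  have : K.level A n = (fun (y : ι → Y) i => (y i, n i)) ⁻¹' (A ∩ univ.pi fun _ => K.tower) := by
    ext y
    simp [level]
  rw [this]
  exact hlift (hA.inter (.univ_pi fun _ => K.measurableSet_tower))

variable [Fintype ι]

theorem pi_measure_apply [SigmaFinite ν] (hA : MeasurableSet A) :
    Measure.pi (fun _ => K.measure ν) A = ∑' n, Measure.pi (fun _ => ν) (K.level A n) := by
  have htower : MeasurableSet (univ.pi fun _ : ι => K.tower) :=
    .univ_pi fun _ => K.measurableSet_tower
  have hcount : (Measure.pi fun _ : ι => (Measure.count : Measure ℤ)) = Measure.count :=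
    Measure.ext_of_singleton fun a => by simp [Measure.pi_singleton]
  have harrow := (measurePreserving_arrowProdEquivProdArrow Y ℤ ι (fun _ => ν)
    fun _ => Measure.count).symm
  unfold measure
  rw [← Measure.restrict_pi_pi, Measure.restrict_apply hA,
    ← harrow.measure_preimage (hA.inter htower).nullMeasurableSet,
    Measure.prod_apply_symm (harrow.measurable (hA.inter htower)), hcount, lintegral_count]
  refine tsum_congr fun n => congrArg _ ?_
  ext y
  simp only [mem_preimage, mem_inter_iff, Set.mem_univ_pi, level, mem_ofPred_eq]
  rfl

theorem pi_measure_eq_zero_of_slice [SigmaFinite ν] (hA : MeasurableSet A)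
    (h : ∀ n, Measure.pi (fun _ => ν) (K.slice A n) = 0) :
    Measure.pi (fun _ => K.measure ν) A = 0 := by
  rw [pi_measure_apply hA, ENNReal.tsum_eq_zero]
  exact fun n => measure_mono_null (level_subset_slice n) (h n)

theorem isErgodicMap_of_slice [SigmaFinite ν] (hK : MeasurePreserving K.base ν ν)
    (h : ∀ A : Set (ι → Y × ℤ), MeasurableSet A → (∀ x, K.map ∘ x ∈ A ↔ x ∈ A) →
      (∀ n, Measure.pi (fun _ => ν) (K.slice A n) = 0) ∨
        ∀ n, Measure.pi (fun _ => ν) (K.slice Aᶜ n) = 0) :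
    IsErgodicMap (Measure.pi fun _ : ι => K.measure ν) fun x i => K.map (x i) := by
  intro A hA hAinv
  have hprod : MeasurePreserving (fun (x : ι → Y × ℤ) i => K.map (x i))
      (Measure.pi fun _ => K.measure ν) (Measure.pi fun _ => K.measure ν) :=
    measurePreserving_pi _ _ fun _ => measurePreserving_map hK
  obtain ⟨B, hB, hBA, hBinv⟩ := hprod.quasiMeasurePreserving.exists_preimage_eq_of_preimage_ae
    hA.nullMeasurableSet (measure_symmDiff_eq_zero_iff.1 hAinv)
  rw [← measure_congr hBA, ← measure_congr hBA.compl]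
  exact (h B hB fun x => iff_of_eq (congrFun hBinv x)).imp
    (pi_measure_eq_zero_of_slice hB) (pi_measure_eq_zero_of_slice hB.compl)

theorem measure_slice_zero_le [SigmaFinite ν] (hA : MeasurableSet A) :
    Measure.pi (fun _ => ν) (K.slice A 0) ≤ Measure.pi (fun _ => K.measure ν) A := by
  rw [pi_measure_apply hA]
  refine le_trans (measure_mono fun y hy => ?_) (ENNReal.le_tsum 0)
  exact ⟨by simpa [slice] using hy, fun i => ⟨le_rfl, Nat.cast_pos.2 (K.height_pos (y i))⟩⟩

theorem not_isErgodicMap_of_disjoint_orbits [SigmaFinite ν] {D₀ D₁ : Set (ι → Y)}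
    (hD₀ : MeasurableSet D₀) (h₀ : Measure.pi (fun _ => ν) D₀ ≠ 0)
    (h₁ : Measure.pi (fun _ => ν) D₁ ≠ 0)
    (hdisj : ∀ y ∈ D₀, ∀ z ∈ D₁, ∀ t : ℤ, ¬ ∀ i, (K.map.toEquiv ^ t) (z i, 0) = (y i, 0)) :
    ¬ IsErgodicMap (Measure.pi fun _ : ι => K.measure ν) fun x i => K.map (x i) := by
  let B : Set (ι → Y × ℤ) := {x | (∀ i, (x i).2 = 0) ∧ (fun i => (x i).1) ∈ D₀}
  let A : Set (ι → Y × ℤ) := ⋃ t : ℤ, (fun x i => (K.map.toEquiv ^ t) (x i)) ⁻¹' B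
  have hB : MeasurableSet B := by
    have hzero : MeasurableSet {x : ι → Y × ℤ | ∀ i, (x i).2 = 0} := by
      rw [ofPred_forall]
      exact .iInter fun i =>
        (measurable_snd.comp (measurable_pi_apply i)) (measurableSet_singleton 0)
    have hfst : Measurable fun (x : ι → Y × ℤ) i => (x i).1 := by fun_prop
    exact hzero.inter (hfst hD₀)
  have hA : MeasurableSet A := .iUnion fun t => (measurable_pi_lambda _ fun i =>
    (measurable_perm_zpow K.map t).comp (measurable_pi_apply i)) hB
  have hinv : (fun x i => K.map (x i)) ⁻¹' A = A := by
    have hstep : ∀ (t : ℤ) (x : Y × ℤ),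
        (K.map.toEquiv ^ t) (K.map x) = (K.map.toEquiv ^ (t + 1)) x := fun t x => by
      rw [zpow_add_one, Equiv.Perm.mul_apply]
      rfl
    ext x
    simp only [A, mem_preimage, mem_iUnion, hstep]
    exact (Equiv.addRight (1 : ℤ)).exists_congr_left.trans (by simp)
  intro herg
  rcases herg A hA (by rw [hinv, symmDiff_self]; exact measure_empty) with h | h
  · refine h₀ (measure_mono_null (fun y hy => ?_) (le_zero_iff.1 (h ▸ measure_slice_zero_le hA)))
    exact mem_iUnion.2 ⟨0, fun i => by simp, by simpa using hy⟩
  · refine h₁ (measure_mono_null (fun z hz => ?_)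
      (le_zero_iff.1 (h ▸ measure_slice_zero_le hA.compl)))
    intro hzA
    obtain ⟨t, hbase, hy⟩ := mem_iUnion.1 hzA
    exact hdisj _ hy z hz t fun i => Prod.ext rfl (hbase i)

theorem isConservativeMap_of_base_recurrence [SigmaFinite ν]
    (h : ∀ D : Set (ι → Y), MeasurableSet D → 0 < Measure.pi (fun _ => ν) D →
      ∃ t : ℕ, 0 < t ∧ 0 < Measure.pi (fun _ => ν)
        {y | y ∈ D ∧ ∃ z ∈ D, ∀ i, (K.map.toEquiv ^ t) (y i, 0) = (z i, 0)}) :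
    IsConservativeMap (Measure.pi fun _ : ι => K.measure ν) fun x i => K.map (x i) := by
  intro A hA hpos
  obtain ⟨n, hn⟩ : ∃ n, Measure.pi (fun _ => ν) (K.level A n) ≠ 0 := by
    simpa [pi_measure_apply hA, ENNReal.tsum_eq_zero] using hpos.ne'
  obtain ⟨t, ht, hreturn⟩ := h _ (measurableSet_level hA n) (pos_iff_ne_zero.2 hn)
  have hmeas : Measurable fun (x : ι → Y × ℤ) i => K.map (x i) :=
    measurable_pi_lambda _ fun i => K.map.measurable.comp (measurable_pi_apply i)
  refine ⟨t, ht, ?_⟩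
  rw [pi_measure_apply ((hmeas.iterate t hA).inter hA)]
  refine (hreturn.trans_le (measure_mono ?_)).trans_le (ENNReal.le_tsum n)
  rintro y ⟨⟨hyA, hy⟩, z, ⟨hzA, hz⟩, hyz⟩
  refine ⟨⟨?_, hyA⟩, hy⟩
  have hiter : (fun (x : ι → Y × ℤ) i => K.map (x i))^[t] = Pi.map fun _ => K.map^[t] :=
    Pi.map_iterate (fun _ : ι => ⇑K.map) t
  rw [hiter]
  have hlevel : (fun i => K.map^[t] (y i, n i)) = fun i => (z i, n i) := by
    funext i
    rw [← map_zpow_of_mem_tower (hz i), ← hyz i, ← zpow_natCast, ← Equiv.Perm.mul_apply,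
      ← zpow_add, add_comm, zpow_add, Equiv.Perm.mul_apply, map_zpow_of_mem_tower (hy i),
      zpow_natCast, Equiv.Perm.coe_pow]
    rfl
  change (fun i => K.map^[t] (y i, n i)) ∈ A
  rwa [hlevel]

end Product

end Skyscraper

section Odometer

/-- The space of the odometer: the digit at stage `j` takes `ρ j + 2 ≥ 2` values. -/
abbrev Digits (ρ : ℕ → ℕ) : Type := ∀ j, Fin (ρ j + 2)

variable {ρ : ℕ → ℕ}

theorem fin_top_add_one (n : ℕ) : (⊤ : Fin (n + 2)) + 1 = 0 := Fin.last_add_one _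

theorem fin_add_one_eq_zero_iff {n : ℕ} {a : Fin (n + 2)} : a + 1 = 0 ↔ a = ⊤ := by
  rw [← fin_top_add_one, add_left_inj]

/-- Addition of one with carry to the right. -/
def addOne (y : Digits ρ) : Digits ρ := fun j => if ∀ l < j, y l = ⊤ then y j + 1 else y j

/-- Subtraction of one with borrow from the right. -/
def subOne (y : Digits ρ) : Digits ρ := fun j => if ∀ l < j, y l = 0 then y j - 1 else y j

theorem addOne_eq_zero_iff (y : Digits ρ) (j : ℕ) :
    (∀ l < j, addOne y l = 0) ↔ ∀ l < j, y l = ⊤ := by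
  refine ⟨fun h l => ?_, fun h l hl => ?_⟩
  · induction l using Nat.strong_induction_on with
    | _ l ih =>
      intro hl
      have := h l hl
      rw [addOne, if_pos fun i hi => ih i hi (hi.trans hl)] at this
      exact fin_add_one_eq_zero_iff.1 this
  · rw [addOne, if_pos fun i hi => h i (hi.trans hl), h l hl, fin_top_add_one]

theorem subOne_eq_top_iff (y : Digits ρ) (j : ℕ) :
    (∀ l < j, subOne y l = ⊤) ↔ ∀ l < j, y l = 0 := by
  refine ⟨fun h l => ?_, fun h l hl => ?_⟩
  · induction l using Nat.strong_induction_on with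
    | _ l ih =>
      intro hl
      have := h l hl
      rw [subOne, if_pos fun i hi => ih i hi (hi.trans hl), ← fin_add_one_eq_zero_iff,
        sub_add_cancel] at this
      exact this
  · rw [subOne, if_pos fun i hi => h i (hi.trans hl), h l hl, ← fin_add_one_eq_zero_iff,
      sub_add_cancel]

theorem measurable_ite_agree (w : Digits ρ) (j : ℕ) (e : Fin (ρ j + 2) → Fin (ρ j + 2)) :
    Measurable fun y : Digits ρ => if ∀ l < j, y l = w l then e (y j) else y j := by
  refine .ite ?_ ((measurable_of_finite e).comp (measurable_pi_apply j)) (measurable_pi_apply j)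
  simp only [Set.ofPred_forall]
  exact .iInter fun l => .iInter fun _ =>
    measurableSet_eq_fun (measurable_pi_apply l) measurable_const

/-- The odometer on digit sequences; the sequence of maximal digits is sent to zero. -/
def odometer (ρ : ℕ → ℕ) : Digits ρ ≃ᵐ Digits ρ where
  toFun := addOne
  invFun := subOne
  left_inv y := by
    funext j
    simp only [subOne, addOne_eq_zero_iff]
    by_cases h : ∀ l < j, y l = ⊤
    · rw [if_pos h, addOne, if_pos h, add_sub_cancel_right]
    · rw [if_neg h, addOne, if_neg h]
  right_inv y := by
    funext j
    simp only [addOne, subOne_eq_top_iff]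
    by_cases h : ∀ l < j, y l = 0
    · rw [if_pos h, subOne, if_pos h, sub_add_cancel]
    · rw [if_neg h, subOne, if_neg h]
  measurable_toFun := measurable_pi_lambda _ fun j => measurable_ite_agree ⊤ j (· + 1)
  measurable_invFun := measurable_pi_lambda _ fun j => measurable_ite_agree 0 j (· - 1)

open PiNat (firstDiff apply_eq_of_lt_firstDiff apply_firstDiff_ne)

theorem odometer_apply_of_lt {y : Digits ρ} {l : ℕ} (hl : l < firstDiff y ⊤) :
    odometer ρ y l = 0 :=
  (addOne_eq_zero_iff y (l + 1)).2
    (fun _ hi => apply_eq_of_lt_firstDiff ((Nat.lt_succ_iff.1 hi).trans_lt hl)) l l.lt_succ_self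

theorem odometer_apply_firstDiff (y : Digits ρ) :
    odometer ρ y (firstDiff y ⊤) = y (firstDiff y ⊤) + 1 :=
  if_pos fun _ hl => apply_eq_of_lt_firstDiff hl

theorem odometer_apply_of_gt {y : Digits ρ} (hy : y ≠ ⊤) {l : ℕ} (hl : firstDiff y ⊤ < l) :
    odometer ρ y l = y l :=
  if_neg fun h => apply_firstDiff_ne hy (h _ hl)

/-- The product of the uniform probability measures on the digits. -/
noncomputable abbrev uniformDigits (ρ : ℕ → ℕ) : Measure (Digits ρ) :=
  Measure.infinitePi fun _ => uniformOn univ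

theorem uniformOn_univ_singleton {α : Type*} [Fintype α] [MeasurableSpace α]
    [MeasurableSingletonClass α] (a : α) :
    uniformOn univ {a} = (Fintype.card α : ℝ≥0∞)⁻¹ := by
  rw [uniformOn_univ, Measure.count_singleton, one_div]

theorem uniformDigits_forall_lt (J : ℕ) (t : ∀ j, Set (Fin (ρ j + 2))) :
    uniformDigits ρ {y | ∀ j < J, y j ∈ t j} = ∏ j ∈ Finset.range J, uniformOn univ (t j) := by
  rw [← Measure.infinitePi_pi _ fun j _ => (toFinite (t j)).measurableSet]
  congr 1
  ext y
  simp

instance : NullSingletonClass (uniformDigits ρ) where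
  measure_singleton y := by
    refine le_antisymm (ge_of_tendsto' (ENNReal.tendsto_pow_atTop_nhds_zero_of_lt_one
      (ENNReal.one_half_lt_one)) fun J => ?_) bot_le
    calc uniformDigits ρ {y} ≤ uniformDigits ρ {z | ∀ j < J, z j ∈ ({y j} : Set _)} :=
          measure_mono (by rintro _ rfl j _; rfl)
      _ = ∏ j ∈ Finset.range J, ((ρ j + 2 : ℕ) : ℝ≥0∞)⁻¹ := by
          simp only [uniformDigits_forall_lt, uniformOn_univ_singleton, Fintype.card_fin]
      _ ≤ ∏ _ ∈ Finset.range J, (2⁻¹ : ℝ≥0∞) := by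
          refine Finset.prod_le_prod' fun _ _ => ENNReal.inv_le_inv.2 ?_
          exact_mod_cast Nat.le_add_left 2 _
      _ = 2⁻¹ ^ J := by rw [Finset.prod_const, Finset.card_range]

theorem measurable_firstDiff (w : Digits ρ) : Measurable fun y => firstDiff y w := by
  refine measurable_of_Ici fun J => ?_
  rcases J.eq_zero_or_pos with rfl | hJ
  · simp
  convert (MeasurableSet.iInter fun l : Finset.range J =>
    measurable_pi_apply l.1 (measurableSet_singleton (w l.1))).diff (measurableSet_singleton w)
  ext y
  by_cases hy : y = w
  · simp [hy, firstDiff, hJ.ne']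
  · simp [hy, ← PiNat.mem_cylinder_iff_le_firstDiff hy, PiNat.mem_cylinder_iff]

/-- The odometer on sequences whose carry stops at stage `J`, extended to a digitwise map. -/
def carry (ρ : ℕ → ℕ) (J : ℕ) : Digits ρ ≃ᵐ Digits ρ :=
  .piCongrRight fun j => if j ≤ J then .addRight 1 else .refl _

theorem carry_apply (J : ℕ) (y : Digits ρ) (j : ℕ) :
    carry ρ J y j = if j ≤ J then y j + 1 else y j :=
  apply_ite (fun e : Fin (ρ j + 2) ≃ᵐ Fin (ρ j + 2) => e (y j)) ..

theorem odometer_eq_carry {y : Digits ρ} (hy : y ≠ ⊤) :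
    odometer ρ y = carry ρ (firstDiff y ⊤) y := by
  funext j
  rcases lt_trichotomy j (firstDiff y ⊤) with h | rfl | h
  · rw [odometer_apply_of_lt h, carry_apply, if_pos h.le, apply_eq_of_lt_firstDiff h,
      Pi.top_apply, fin_top_add_one]
  · rw [odometer_apply_firstDiff, carry_apply, if_pos le_rfl]
  · rw [odometer_apply_of_gt hy h, carry_apply, if_neg h.not_ge]

theorem measurePreserving_carry (J : ℕ) :
    MeasurePreserving (carry ρ J) (uniformDigits ρ) (uniformDigits ρ) := by
  let e : ∀ j, Equiv.Perm (Fin (ρ j + 2)) := fun j => if j ≤ J then .addRight 1 else 1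
  have he : ⇑(carry ρ J) = fun y j => e j (y j) := by
    funext y j
    rw [carry_apply]
    split_ifs with h <;> simp [e, h]
  refine ⟨(carry ρ J).measurable, ?_⟩
  rw [he, Measure.infinitePi_map_pi _ fun j => measurable_of_finite (e j)]
  simp only [fun j => (measurePreserving_perm_uniformOn (e j)).map_eq]

/-- The sequences at which the carry of the odometer stops at stage `J`. -/
def carrySet (ρ : ℕ → ℕ) (J : ℕ) : Set (Digits ρ) := {y | y ≠ ⊤ ∧ firstDiff y ⊤ = J}

theorem measurableSet_carrySet (J : ℕ) : MeasurableSet (carrySet ρ J) :=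
  (measurableSet_singleton ⊤).compl.inter (measurable_firstDiff ⊤ (measurableSet_singleton J))

theorem pairwise_disjoint_carrySet : Pairwise (Disjoint on carrySet ρ) :=
  fun _ _ hJ => disjoint_left.2 fun _ hy hy' => hJ (hy.2.symm.trans hy'.2)

theorem measurePreserving_odometer :
    MeasurePreserving (odometer ρ) (uniformDigits ρ) (uniformDigits ρ) := by
  have hcompl : (⋃ J, carrySet ρ J)ᶜ = {⊤} := by
    ext y
    simp [carrySet]
  refine measurePreserving_of_eqOn measurableSet_carrySet pairwise_disjoint_carrySet ?_ ?_
    measurePreserving_carry ?_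
  · rw [hcompl, measure_singleton]
  · rw [hcompl, image_singleton, measure_singleton]
  · rintro J y ⟨hy, rfl⟩
    exact odometer_eq_carry hy

theorem le_uniformDigits_carrySet (J : ℕ) :
    ((∏ j ∈ Finset.range J, (ρ j + 2) : ℕ) : ℝ≥0∞)⁻¹ * 2⁻¹ ≤
      uniformDigits ρ (carrySet ρ J) := by
  let t : ∀ j, Set (Fin (ρ j + 2)) := fun j => if j < J then {⊤} else {⊤}ᶜ
  have hsub : {y | ∀ j < J + 1, y j ∈ t j} ⊆ carrySet ρ J := by
    intro y hy
    have hbelow : ∀ l < J, y l = ⊤ := fun l hl => by simpa [t, hl] using hy l (by lia)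
    have hJ : y J ≠ ⊤ := by simpa [t] using hy J J.lt_succ_self
    have hne : y ≠ ⊤ := fun h => hJ (congrFun h J)
    refine ⟨hne, le_antisymm (not_lt.1 fun h => hJ (apply_eq_of_lt_firstDiff h)) ?_⟩
    exact (PiNat.mem_cylinder_iff_le_firstDiff hne J).1 hbelow
  refine le_trans ?_ (measure_mono hsub)
  rw [uniformDigits_forall_lt, Finset.prod_range_succ]
  have hprod : ∏ j ∈ Finset.range J, uniformOn univ (t j) =
      ((∏ j ∈ Finset.range J, (ρ j + 2) : ℕ) : ℝ≥0∞)⁻¹ := by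
    rw [Nat.cast_prod, ENNReal.prod_inv_distrib fun _ _ _ _ _ => .inl (by simp)]
    refine Finset.prod_congr rfl fun j hj => ?_
    rw [show t j = {⊤} from if_pos (Finset.mem_range.1 hj), uniformOn_univ_singleton,
      Fintype.card_fin]
  have hlast : 2⁻¹ ≤ uniformOn univ (t J) := by
    rw [show t J = {⊤}ᶜ from if_neg J.lt_irrefl, prob_compl_eq_one_sub (measurableSet_singleton _),
      uniformOn_univ_singleton, Fintype.card_fin, ← ENNReal.one_sub_inv_two]
    exact tsub_le_tsub_left (ENNReal.inv_le_inv.2 (by exact_mod_cast Nat.le_add_left 2 (ρ J))) _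
  rw [hprod]
  gcongr

end Odometer

section Displacement

open PiNat (firstDiff apply_eq_of_lt_firstDiff apply_firstDiff_ne)

variable {ρ : ℕ → ℕ} {p : ℕ → ℕ → ℕ}

/-- The displacement of `y` by the stages below `N`, where the digit `a` at stage `j` is placed at
position `p j a`. -/
def displacement (p : ℕ → ℕ → ℕ) (N : ℕ) (y : Digits ρ) : ℤ :=
  ∑ j ∈ Finset.range N, (p j (y j) : ℤ)

/-- The positions `p` are so widely spread that each gap at stage `j` exceeds the displacement of
the lower stages by at least the number of digit sequences of length `j`. -/
def IsSpread (ρ : ℕ → ℕ) (p : ℕ → ℕ → ℕ) : Prop :=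
  ∀ j a, ∑ l ∈ Finset.range j, p l (ρ l + 1) + ∏ l ∈ Finset.range j, (ρ l + 2) + p j a ≤
    p j (a + 1)

theorem IsSpread.strictMono (hp : IsSpread ρ p) (j : ℕ) : StrictMono (p j) :=
  strictMono_nat_of_lt_succ fun a => by
    have hprod : 0 < ∏ l ∈ Finset.range j, (ρ l + 2) := Finset.prod_pos fun _ _ => by lia
    have := hp j a
    lia

theorem measurable_displacement (N : ℕ) : Measurable (displacement p N : Digits ρ → ℤ) :=
  Finset.measurable_sum _ fun j _ =>
    (measurable_of_finite fun a : Fin (ρ j + 2) => (p j a : ℤ)).comp (measurable_pi_apply j)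

theorem displacement_sub_eq_of_agree {M N : ℕ} {y z : Digits ρ} (hMN : M ≤ N)
    (h : ∀ j, M ≤ j → y j = z j) :
    displacement p N z - displacement p N y = displacement p M z - displacement p M y := by
  simp only [displacement, ← Finset.sum_sub_distrib]
  refine (Finset.sum_subset (Finset.range_mono hMN) fun j _ hj => ?_).symm
  rw [h j (by simpa using hj), sub_self]

theorem displacement_top (N : ℕ) :
    displacement p N (⊤ : Digits ρ) = ↑(∑ j ∈ Finset.range N, p j (ρ j + 1)) := by
  rw [Nat.cast_sum]
  rfl

theorem displacement_nonneg (N : ℕ) (y : Digits ρ) : 0 ≤ displacement p N y :=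
  Finset.sum_nonneg fun _ _ => by positivity

theorem displacement_mono (hp : IsSpread ρ p) (N : ℕ) :
    Monotone (displacement p N : Digits ρ → ℤ) :=
  fun _ _ h => Finset.sum_le_sum fun j _ => by exact_mod_cast (hp.strictMono j).monotone (h j)

theorem displacement_le_top (hp : IsSpread ρ p) (N : ℕ) (y : Digits ρ) :
    displacement p N y ≤ displacement p N (⊤ : Digits ρ) := displacement_mono hp N le_top

theorem prod_le_displacement_odometer_sub (hp : IsSpread ρ p) {y : Digits ρ} (hy : y ≠ ⊤) {N : ℕ}
    (hN : firstDiff y ⊤ < N) :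
    ((∏ l ∈ Finset.range (firstDiff y ⊤), (ρ l + 2) : ℕ) : ℤ) ≤
      displacement p N (odometer ρ y) - displacement p N y := by
  set J := firstDiff y ⊤ with hJ
  have hval : (odometer ρ y J : ℕ) = y J + 1 := by
    rw [hJ, odometer_apply_firstDiff]
    exact Fin.val_add_one_of_lt (lt_top_iff_ne_top.2 (apply_firstDiff_ne hy))
  have hnonneg := displacement_nonneg (p := p) J (odometer ρ y)
  have hgap := hp J (y J)
  rw [displacement_sub_eq_of_agree hN fun j hj => (odometer_apply_of_gt hy hj).symm]
  have hsucc : ∀ z : Digits ρ, displacement p (J + 1) z = displacement p J z + p J (z J) :=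
    fun z => Finset.sum_range_succ ..
  have htop := displacement_le_top hp J y
  rw [displacement_top] at htop
  rw [Nat.succ_eq_add_one, hsucc, hsucc, hval]
  zify at hgap htop ⊢
  linarith

theorem measurable_displacement_odometer_sub :
    Measurable fun y : Digits ρ => displacement p (firstDiff y ⊤ + 1) (odometer ρ y) -
      displacement p (firstDiff y ⊤ + 1) y := by
  have hN : ∀ N, Measurable fun y : Digits ρ =>
      displacement p (N + 1) (odometer ρ y) - displacement p (N + 1) y := fun N =>
    ((measurable_displacement (N + 1)).comp (odometer ρ).measurable).sub
      (measurable_displacement (N + 1))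
  have hprod : Measurable fun x : ℕ × Digits ρ =>
      displacement p (x.1 + 1) (odometer ρ x.2) - displacement p (x.1 + 1) x.2 :=
    measurable_from_prod_countable_right hN
  have hdiff : Measurable fun y : Digits ρ => (firstDiff y ⊤, y) :=
    (measurable_firstDiff ⊤).prodMk measurable_id
  simpa only [comp_def] using hprod.comp hdiff

/-- The skyscraper over the odometer in which one odometer step takes the time by which it
increases the displacement. The `max` only matters at `⊤`, where the carry never stops. -/
noncomputable def odometerTower (ρ : ℕ → ℕ) (p : ℕ → ℕ → ℕ) : Skyscraper (Digits ρ) where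
  base := odometer ρ
  height y := max 1 (displacement p (firstDiff y ⊤ + 1) (odometer ρ y) -
    displacement p (firstDiff y ⊤ + 1) y).toNat
  measurable_height := (measurable_of_countable fun n : ℤ => max 1 n.toNat).comp
    measurable_displacement_odometer_sub
  height_pos _ := Nat.lt_of_succ_le (le_max_left _ _)

theorem base_odometerTower : (odometerTower ρ p).base = odometer ρ := rfl

theorem height_odometerTower (hp : IsSpread ρ p) {y : Digits ρ} (hy : y ≠ ⊤) {N : ℕ}
    (hN : firstDiff y ⊤ < N) :
    ((odometerTower ρ p).height y : ℤ) =
      displacement p N (odometer ρ y) - displacement p N y := by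
  have hpos : 0 < ∏ l ∈ Finset.range (firstDiff y ⊤), (ρ l + 2) := Finset.prod_pos fun _ _ => by lia
  have hgain := prod_le_displacement_odometer_sub hp hy (Nat.lt_succ_self _)
  rw [displacement_sub_eq_of_agree hN fun j hj => (odometer_apply_of_gt hy hj).symm]
  simp only [odometerTower]
  lia

theorem lintegral_height_odometerTower (hp : IsSpread ρ p) :
    ∫⁻ y, (odometerTower ρ p).height y ∂uniformDigits ρ = ∞ := by
  have hpiece : ∀ J, 2⁻¹ ≤
      ∫⁻ y in carrySet ρ J, (odometerTower ρ p).height y ∂uniformDigits ρ := by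
    intro J
    set Q : ℕ := ∏ l ∈ Finset.range J, (ρ l + 2) with hQ
    have hQ0 : (Q : ℝ≥0∞) ≠ 0 := by simp [hQ, Finset.prod_eq_zero_iff]
    calc (2⁻¹ : ℝ≥0∞) = Q * ((Q : ℝ≥0∞)⁻¹ * 2⁻¹) := by
          rw [← mul_assoc, ENNReal.mul_inv_cancel hQ0 (ENNReal.natCast_ne_top Q), one_mul]
      _ ≤ Q * uniformDigits ρ (carrySet ρ J) := by grw [← le_uniformDigits_carrySet]
      _ = ∫⁻ _ in carrySet ρ J, (Q : ℝ≥0∞) ∂uniformDigits ρ := by simp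
      _ ≤ _ := by
          refine setLIntegral_mono' (measurableSet_carrySet J) fun _ hy => ?_
          obtain ⟨hy, rfl⟩ := hy
          have := prod_le_displacement_odometer_sub hp hy (Nat.lt_succ_self _)
          rw [← height_odometerTower hp hy (Nat.lt_succ_self _)] at this
          exact_mod_cast this
  rw [eq_top_iff]
  calc (∞ : ℝ≥0∞) = ∑' _ : ℕ, (2⁻¹ : ℝ≥0∞) := by
        rw [ENNReal.tsum_const_eq_top_of_ne_zero (by simp)]
    _ ≤ ∑' J, ∫⁻ y in carrySet ρ J, (odometerTower ρ p).height y ∂uniformDigits ρ :=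
        ENNReal.tsum_le_tsum hpiece
    _ = ∫⁻ y in ⋃ J, carrySet ρ J, (odometerTower ρ p).height y ∂uniformDigits ρ :=
        (lintegral_iUnion measurableSet_carrySet pairwise_disjoint_carrySet _).symm
    _ ≤ _ := setLIntegral_le_lintegral _ _

theorem measure_odometerTower_univ (hp : IsSpread ρ p) :
    (odometerTower ρ p).measure (uniformDigits ρ) univ = ∞ := by
  rw [Skyscraper.measure_univ, lintegral_height_odometerTower hp]

/-- The last point of the odometer block of length `N` that contains `y`. -/
def blockEnd (N : ℕ) (y : Digits ρ) : Digits ρ := fun j => if j < N then ⊤ else y j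

theorem le_blockEnd (N : ℕ) (y : Digits ρ) : y ≤ blockEnd N y := fun j => by
  unfold blockEnd
  split_ifs
  exacts [le_top, le_rfl]

theorem blockEnd_eq_of_agree {N : ℕ} {y z : Digits ρ} (h : ∀ j, N ≤ j → y j = z j) :
    blockEnd N y = blockEnd N z := by
  funext j
  rcases lt_or_ge j N with hj | hj
  · simp only [blockEnd, if_pos hj]
  · simp only [blockEnd, if_neg hj.not_gt, h j hj]

theorem odometerTower_zpow_blockEnd (hp : IsSpread ρ p) (N : ℕ) (y : Digits ρ) :
    ((odometerTower ρ p).map.toEquiv ^ (displacement p N (blockEnd N y) - displacement p N y))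
      (y, 0) = (blockEnd N y, 0) := by
  induction hn : (displacement p N (blockEnd N y) - displacement p N y).toNat
    using Nat.strong_induction_on generalizing y with
  | _ n ih =>
    by_cases hend : blockEnd N y = y
    · simp [hend]
    obtain ⟨l, hl⟩ : ∃ l, blockEnd N y l ≠ y l := ne_iff.1 hend
    have hlN : l < N := not_le.1 fun h => hl (if_neg h.not_gt)
    have hyl : y l ≠ ⊤ := fun h => hl (by rw [blockEnd, if_pos hlN, h])
    have hy : y ≠ ⊤ := fun h => hyl (congrFun h l)
    have hN : firstDiff y ⊤ < N :=
      (not_lt.1 fun h => hyl (apply_eq_of_lt_firstDiff h)).trans_lt hlN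
    have hblock : blockEnd N (odometer ρ y) = blockEnd N y :=
      blockEnd_eq_of_agree fun j hj => odometer_apply_of_gt hy (hN.trans_le hj)
    have hheight := height_odometerTower hp hy hN
    have hpos := (odometerTower ρ p).height_pos y
    have hend' : displacement p N (odometer ρ y) ≤ displacement p N (blockEnd N y) := by
      rw [← hblock]
      exact displacement_mono hp N (le_blockEnd N _)
    have hstep := ih _ (by rw [← hn, hblock]; lia) (odometer ρ y) rfl
    rw [hblock] at hstep
    rw [show displacement p N (blockEnd N y) - displacement p N y =
      displacement p N (blockEnd N y) - displacement p N (odometer ρ y) +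
        (odometerTower ρ p).height y by lia, zpow_add, Equiv.Perm.mul_apply, zpow_natCast,
      Skyscraper.map_pow_height, base_odometerTower]
    exact hstep

theorem odometerTower_zpow_of_agree (hp : IsSpread ρ p) {N : ℕ} {y z : Digits ρ}
    (h : ∀ j, N ≤ j → y j = z j) :
    ((odometerTower ρ p).map.toEquiv ^ (displacement p N z - displacement p N y)) (y, 0) =
      (z, 0) := by
  have hy := odometerTower_zpow_blockEnd hp N y
  have hz := odometerTower_zpow_blockEnd hp N z
  rw [← blockEnd_eq_of_agree h, ← Equiv.Perm.eq_inv_iff_eq, ← zpow_neg] at hz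
  rw [hz, ← hy, ← Equiv.Perm.mul_apply, ← zpow_add]
  congr 2
  ring

theorem eventually_displacement_sub_eq_of_pow (hp : IsSpread ρ p) {t : ℕ} {y z : Digits ρ}
    (hy : ∀ n : ℕ, (odometer ρ)^[n] y ≠ ⊤)
    (h : ((odometerTower ρ p).map.toEquiv ^ t) (y, 0) = (z, 0)) :
    ∀ᶠ N in atTop, displacement p N z - displacement p N y = t := by
  induction t using Nat.strong_induction_on generalizing y with
  | _ t ih =>
    rcases lt_or_ge t ((odometerTower ρ p).height y) with hlt | hge
    · rw [← zpow_natCast, Skyscraper.map_zpow_of_mem_tower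
        ⟨Int.natCast_nonneg t, Nat.cast_lt.2 hlt⟩, Prod.mk.injEq] at h
      simp [h.1, h.2]
    · obtain ⟨s, rfl⟩ := Nat.exists_eq_add_of_le' hge
      rw [pow_add, Equiv.Perm.mul_apply, Skyscraper.map_pow_height, base_odometerTower] at h
      have hpos := (odometerTower ρ p).height_pos y
      filter_upwards [ih s (by lia) (fun n => hy (n + 1)) h, eventually_gt_atTop (firstDiff y ⊤)]
        with N hrest hN
      have hstep := height_odometerTower hp (hy 0) hN
      rw [iterate_zero_apply] at hstep
      push_cast
      linarith

end Displacement

section TupleMoves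

variable {ρ : ℕ → ℕ} {ι : Type*}

theorem involutive_swap {α : Type*} [DecidableEq α] (a b : α) : Involutive (Equiv.swap a b) :=
  Equiv.Perm.congr_fun (Equiv.swap_swap a b)

theorem swap_moveAt_piMap (j : ℕ) (σ : ι → Fin (ρ j + 2) → Fin (ρ j + 2)) (y : ι → Digits ρ) :
    swap (moveAt j (Pi.map σ) (swap y)) = fun i => moveAt j (σ i) (y i) := by
  funext i l
  rcases eq_or_ne l j with rfl | hl
  · simp only [swap, moveAt_same, Pi.map_apply]
  · simp only [swap, moveAt_of_ne hl]

variable [Fintype ι]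

theorem pi_uniformDigits_eq_zero_of_moveAt {S : Set ℕ} {σ : ∀ j, ι → Equiv.Perm (Fin (ρ j + 2))}
    (hσ : ∀ j i, Involutive (σ j i)) (u : ∀ j, ι → Fin (ρ j + 2))
    (hsum : ∑' j : S, ((ρ j + 2 : ℝ≥0∞) ^ Fintype.card ι)⁻¹ = ∞) {D : Set (ι → Digits ρ)}
    (hD : MeasurableSet D)
    (hnull : ∀ j ∈ S, Measure.pi (fun _ => uniformDigits ρ)
      {y | y ∈ D ∧ (∀ i, y i j = u j i) ∧ (fun i => moveAt j (σ j i) (y i)) ∈ D} = 0) :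
    Measure.pi (fun _ => uniformDigits ρ) D = 0 := by
  classical
  let D' : Set (∀ j, ι → Fin (ρ j + 2)) := swap ⁻¹' D
  let s : ∀ j, Set (ι → Fin (ρ j + 2)) := fun j => if j ∈ S then {u j} else ∅
  have hmp := measurePreserving_swap_pi_infinitePi (ι := ι)
    fun j => (uniformOn univ : Measure (Fin (ρ j + 2)))
  have hs : ∀ j, MeasurableSet (s j) := fun j => (toFinite (s j)).measurableSet
  have hmove : ∀ j, MeasurePreserving (Pi.map fun i => σ j i)
      (Measure.pi fun _ : ι => uniformOn univ) (Measure.pi fun _ : ι => uniformOn univ) :=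
    fun j => measurePreserving_pi _ _ fun i => measurePreserving_perm_uniformOn (σ j i)
  have hD' : MeasurableSet D' := by
    have : Measurable (swap : (∀ j, ι → Fin (ρ j + 2)) → ι → Digits ρ) := by fun_prop
    exact this hD
  have hsum' : ∑' j, Measure.pi (fun _ => uniformOn univ) (s j) = ∞ := by
    rw [tsum_subtype S fun j => ((ρ j + 2 : ℝ≥0∞) ^ Fintype.card ι)⁻¹] at hsum
    rw [← hsum]
    refine tsum_congr fun j => ?_
    by_cases hj : j ∈ S <;>
      simp [s, hj, uniformOn_univ_singleton, ENNReal.inv_pow]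
  have hmeasure := hmp.measure_preimage hD'.nullMeasurableSet
  rw [show swap ⁻¹' D' = D from rfl] at hmeasure
  rw [hmeasure]
  refine measure_eq_zero_of_moveAt_preimage_null (fun j y => funext fun i => hσ j i (y i))
    hmove hs hsum' hD' fun j => ?_
  have hmeas := (hD'.inter (measurable_pi_apply j (hs j))).inter
    ((measurePreserving_moveAt (P := fun j => Measure.pi fun _ => uniformOn univ)
      (hmove j)).measurable hD')
  by_cases hj : j ∈ S
  · refine (hmp.measure_preimage hmeas.nullMeasurableSet).symm.trans
      (measure_mono_null ?_ (hnull j hj))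
    rintro y ⟨⟨hyD, hyj⟩, hmoved⟩
    refine ⟨hyD, congrFun (by simpa [s, hj] using hyj), ?_⟩
    rw [← swap_moveAt_piMap]
    exact hmoved
  · simp [s, hj]

end TupleMoves

section Products

variable {ρ : ℕ → ℕ} {p : ℕ → ℕ → ℕ} {ι : Type*} {A : Set (ι → Digits ρ × ℤ)}

theorem mem_slice_odometerTower_iff_of_agree (hp : IsSpread ρ p) {N : ℕ} {y z : ι → Digits ρ}
    (h : ∀ i, ∀ j, N ≤ j → y i j = z i j) (n : ι → ℤ) :
    z ∈ (odometerTower ρ p).slice A n ↔ y ∈ (odometerTower ρ p).slice A fun i =>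
      n i + (displacement p N (z i) - displacement p N (y i)) := by
  simp only [Skyscraper.slice, mem_ofPred_eq, zpow_add, Equiv.Perm.mul_apply,
    odometerTower_zpow_of_agree hp (h _)]

theorem displacement_moveAt_sub (j : ℕ) (σ : Fin (ρ j + 2) → Fin (ρ j + 2)) (y : Digits ρ) :
    displacement p (j + 1) (moveAt j σ y) - displacement p (j + 1) y =
      p j (σ (y j)) - p j (y j) := by
  have hbelow : displacement p j (moveAt j σ y) = displacement p j y :=
    Finset.sum_congr rfl fun l hl => by rw [moveAt_of_ne (Finset.mem_range.1 hl).ne]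
  have hsucc : ∀ z : Digits ρ, displacement p (j + 1) z = displacement p j z + p j (z j) :=
    fun z => Finset.sum_range_succ ..
  rw [hsucc, hsucc, hbelow, moveAt_same]
  ring

theorem moveAt_mem_slice_odometerTower_iff (hp : IsSpread ρ p) (j : ℕ)
    (σ : ι → Fin (ρ j + 2) → Fin (ρ j + 2)) (y : ι → Digits ρ) (n : ι → ℤ) :
    (fun i => moveAt j (σ i) (y i)) ∈ (odometerTower ρ p).slice A n ↔
      y ∈ (odometerTower ρ p).slice A fun i =>
        n i + ((p j (σ i (y i j)) : ℤ) - p j (y i j)) := by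
  rw [mem_slice_odometerTower_iff_of_agree hp (N := j + 1) (y := y) fun i l hl =>
    (moveAt_of_ne (by lia) _ _).symm]
  simp only [displacement_moveAt_sub]

theorem ae_eq_zero_of_ae_eq_add_single [Finite ι] [DecidableEq ι] {α : Type*} [MeasurableSpace α]
    {μ : Measure α} {F : (ι → ℤ) → Set α} (h : ∀ n i, F (n + Pi.single i 1) =ᵐ[μ] F n)
    (n : ι → ℤ) : F n =ᵐ[μ] F 0 := by
  cases nonempty_fintype ι
  let periods : AddSubgroup (ι → ℤ) :=
    { carrier := {v | ∀ n, F (n + v) =ᵐ[μ] F n}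
      zero_mem' := fun n => by rw [add_zero]; rfl
      add_mem' := fun ha hb n => by
        rw [← add_assoc]
        exact (hb _).trans (ha n)
      neg_mem' := fun {a} ha n => by
        have := ha (n + -a)
        rw [neg_add_cancel_right] at this
        exact this.symm }
  have hn : n ∈ periods := by
    rw [← Finset.univ_sum_single n]
    refine sum_mem fun i _ => ?_
    rw [show (Pi.single i (n i) : ι → ℤ) = n i • Pi.single i 1 by simp [← Pi.single_smul]]
    exact zsmul_mem (show Pi.single i 1 ∈ periods from fun n => h n i) _
  simpa using hn 0

variable [Fintype ι]

theorem pi_slice_diff_slice_add_single [DecidableEq ι] (hp : IsSpread ρ p)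
    (hskew : ∀ j, ρ j ≠ 0 → p j 2 + p j 0 = 2 * p j 1 + 1)
    (hsum : ∑' j : {j | ρ j ≠ 0}, ((ρ j + 2 : ℝ≥0∞) ^ Fintype.card ι)⁻¹ = ∞)
    (hA : MeasurableSet A) (hinv : ∀ x, (odometerTower ρ p).map ∘ x ∈ A ↔ x ∈ A) (n : ι → ℤ)
    (i₀ : ι) :
    Measure.pi (fun _ => uniformDigits ρ) ((odometerTower ρ p).slice A n \
      (odometerTower ρ p).slice A (n + Pi.single i₀ 1)) = 0 := by
  let u : ∀ j, ι → Fin (ρ j + 2) := fun j i => if i = i₀ then 1 else 0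
  let σ : ∀ j, ι → Equiv.Perm (Fin (ρ j + 2)) := fun j i =>
    if i = i₀ then Equiv.swap 1 2 else Equiv.swap 0 1
  have hσ : ∀ j i, Involutive (σ j i) := fun j i => by
    simp only [σ]
    split_ifs <;> exact involutive_swap _ _
  have hshift : ∀ j, ρ j ≠ 0 → ∀ i, (p j (σ j i (u j i)) : ℤ) - p j (u j i) =
      (Pi.single i₀ 1 : ι → ℤ) i + (p j 1 - p j 0) := by
    intro j hj i
    have h2 : ((2 : Fin (ρ j + 2)) : ℕ) = 2 := Nat.mod_eq_of_lt (by lia)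
    have := hskew j hj
    rcases eq_or_ne i i₀ with rfl | hi
    · simp only [σ, u, if_true, Equiv.swap_apply_left, h2, Fin.val_one, Pi.single_eq_same]
      lia
    · simp [σ, u, hi]
  refine pi_uniformDigits_eq_zero_of_moveAt hσ u hsum ((Skyscraper.measurableSet_slice hA _).diff
    (Skyscraper.measurableSet_slice hA _)) fun j hj => ?_
  refine (congrArg _ (eq_empty_of_forall_notMem ?_)).trans measure_empty
  rintro y ⟨⟨-, hnot⟩, hdigit, hmoved, -⟩
  refine hnot ?_
  rw [moveAt_mem_slice_odometerTower_iff hp] at hmoved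
  simp only [hdigit, hshift j hj, ← add_assoc] at hmoved
  rwa [Skyscraper.slice_add_const hinv] at hmoved

theorem slice_ae_eq_slice_zero (hp : IsSpread ρ p)
    (hskew : ∀ j, ρ j ≠ 0 → p j 2 + p j 0 = 2 * p j 1 + 1)
    (hsum : ∑' j : {j | ρ j ≠ 0}, ((ρ j + 2 : ℝ≥0∞) ^ Fintype.card ι)⁻¹ = ∞)
    (hA : MeasurableSet A) (hinv : ∀ x, (odometerTower ρ p).map ∘ x ∈ A ↔ x ∈ A) (n : ι → ℤ) :
    (odometerTower ρ p).slice A n =ᵐ[Measure.pi fun _ => uniformDigits ρ]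
      (odometerTower ρ p).slice A 0 := by
  classical
  refine ae_eq_zero_of_ae_eq_add_single (fun n i => ?_) n
  refine ae_eq_set.2 ⟨?_, pi_slice_diff_slice_add_single hp hskew hsum hA hinv n i⟩
  convert pi_slice_diff_slice_add_single hp hskew hsum hA.compl (fun x => (hinv x).not) n i using 2
  exact compl_sdiff_compl.symm

theorem isErgodicMap_odometerTower (hp : IsSpread ρ p)
    (hskew : ∀ j, ρ j ≠ 0 → p j 2 + p j 0 = 2 * p j 1 + 1)
    (hsum : ∑' j : {j | ρ j ≠ 0}, ((ρ j + 2 : ℝ≥0∞) ^ Fintype.card ι)⁻¹ = ∞) :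
    IsErgodicMap (Measure.pi fun _ : ι => (odometerTower ρ p).measure (uniformDigits ρ))
      fun x i => (odometerTower ρ p).map (x i) := by
  refine Skyscraper.isErgodicMap_of_slice measurePreserving_odometer fun A hA hinv => ?_
  set K := odometerTower ρ p
  have hslice := slice_ae_eq_slice_zero hp hskew hsum hA hinv
  have hcore : ⋂ n, K.slice A n =ᵐ[Measure.pi fun _ => uniformDigits ρ] K.slice A 0 := by
    simpa only [iInter_const] using Filter.EventuallyEq.countable_iInter hslice
  have htail : ∀ y z : ι → Digits ρ, (∃ N, ∀ i, ∀ j ≥ N, y i j = z i j) →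
      y ∈ ⋂ n, K.slice A n → z ∈ ⋂ n, K.slice A n := by
    rintro y z ⟨N, hyz⟩ hy
    exact mem_iInter.2 fun n =>
      (mem_slice_odometerTower_iff_of_agree hp hyz n).2 (mem_iInter.1 hy _)
  have hcore_meas := MeasurableSet.iInter fun n => Skyscraper.measurableSet_slice (K := K) hA n
  rcases measure_eq_zero_or_one_of_tail_invariant_tuple
    (P := fun j => (uniformOn univ : Measure (Fin (ρ j + 2)))) hcore_meas htail with h | h
  · exact .inl fun n => by rw [measure_congr ((hslice n).trans hcore.symm), h]
  · refine .inr fun n => ?_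
    rw [← prob_compl_eq_zero_iff hcore_meas] at h
    rw [← h]
    exact measure_congr ((hslice n).trans hcore.symm).compl

theorem isConservativeMap_odometerTower (hp : IsSpread ρ p) (hρ : {j | ρ j = 0}.Infinite) :
    IsConservativeMap (Measure.pi fun _ : ι => (odometerTower ρ p).measure (uniformDigits ρ))
      fun x i => (odometerTower ρ p).map (x i) := by
  refine Skyscraper.isConservativeMap_of_base_recurrence fun D hD hpos => ?_
  have hsum : ∑' j : {j | ρ j = 0}, ((ρ j + 2 : ℝ≥0∞) ^ Fintype.card ι)⁻¹ = ∞ := by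
    have := hρ.to_subtype
    rw [← ENNReal.tsum_const_eq_top_of_ne_zero (α := {j | ρ j = 0})
      (c := ((0 + 2 : ℝ≥0∞) ^ Fintype.card ι)⁻¹) (by simp)]
    exact tsum_congr fun j => by rw [show ρ j = 0 from j.2, Nat.cast_zero]
  obtain ⟨j, hret⟩ : ∃ j, Measure.pi (fun _ => uniformDigits ρ) {y | y ∈ D ∧ (∀ i, y i j = 0) ∧
      (fun i => moveAt j (Equiv.swap 0 1) (y i)) ∈ D} ≠ 0 := by
    by_contra! hnull
    exact hpos.ne' (pi_uniformDigits_eq_zero_of_moveAt (σ := fun _ _ => Equiv.swap 0 1)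
      (fun _ _ => involutive_swap _ _) (fun _ _ => 0) hsum hD
      fun j _ => hnull j)
  have hlt : p j 0 < p j 1 := hp.strictMono j zero_lt_one
  refine ⟨p j 1 - p j 0, by lia, (pos_iff_ne_zero.2 hret).trans_le (measure_mono ?_)⟩
  rintro y ⟨hy, hdigit, hmoved⟩
  refine ⟨hy, _, hmoved, fun i => ?_⟩
  rw [← odometerTower_zpow_of_agree hp (N := j + 1) fun l hl =>
    (moveAt_of_ne (by lia) (Equiv.swap 0 1) (y i)).symm, displacement_moveAt_sub, hdigit,
    Equiv.swap_apply_left, ← zpow_natCast]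
  simp [Nat.cast_sub hlt.le]

end Products

section NonErgodicity

variable {ρ : ℕ → ℕ} {p : ℕ → ℕ → ℕ}

/-- At each stage with more than two digits, two differences of positions that agree up to twice
the largest displacement of the lower stages agree exactly, provided that the last of the four
digits is at least `3`. At a stage with two digits this proviso is dropped. -/
def IsRigid (ρ : ℕ → ℕ) (p : ℕ → ℕ → ℕ) : Prop :=
  ∀ j, ∀ a b c d : Fin (ρ j + 2), ρ j = 0 ∨ 3 ≤ (d : ℕ) →
    |(p j a - p j b : ℤ) - (p j c - p j d)| ≤ 2 * displacement p j (⊤ : Digits ρ) →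
      (p j a - p j b : ℤ) = p j c - p j d

variable {ι : Type*}

theorem IsRigid.position_sub_eq (hr : IsRigid ρ p) (hp : IsSpread ρ p) {y z : ι → Digits ρ}
    (hy : ∀ j, ρ j ≠ 0 → ∃ i, 3 ≤ (y i j : ℕ)) {N : ℕ}
    (h : ∀ i i', displacement p N (z i) - displacement p N (y i) =
      displacement p N (z i') - displacement p N (y i')) {j : ℕ} (hj : j < N) (i i' : ι) :
    (p j (z i j) - p j (y i j) : ℤ) = p j (z i' j) - p j (y i' j) := by
  induction N with
  | zero => exact absurd hj (Nat.not_lt_zero j)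
  | succ N ih =>
    have hsucc : ∀ w : Digits ρ, displacement p (N + 1) w = displacement p N w + p N (w N) :=
      fun w => Finset.sum_range_succ ..
    have hclose : ∀ i i', |(p N (z i N) - p N (y i N) : ℤ) - (p N (z i' N) - p N (y i' N))| ≤
        2 * displacement p N (⊤ : Digits ρ) := fun i i' => by
      have hshift := h i i'
      simp only [hsucc] at hshift
      have hle := displacement_le_top hp N
      have hnonneg := displacement_nonneg (ρ := ρ) (p := p) N
      rw [abs_le]
      constructor <;>
        linarith [hle (y i), hle (z i), hle (y i'), hle (z i'), hnonneg (y i), hnonneg (z i),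
          hnonneg (y i'), hnonneg (z i')]
    have htop : ∀ i i', (p N (z i N) - p N (y i N) : ℤ) = p N (z i' N) - p N (y i' N) :=
      fun i i' => by
        by_cases hN : ρ N = 0
        · exact hr N _ _ _ _ (.inl hN) (hclose i i')
        · obtain ⟨q, hq⟩ := hy N hN
          exact (hr N _ _ _ _ (.inr hq) (hclose i q)).trans
            (hr N _ _ _ _ (.inr hq) (hclose i' q)).symm
    rcases (Nat.lt_succ_iff_lt_or_eq.1 hj) with hj | rfl
    · refine ih (fun i i' => ?_) hj
      have hshift := h i i'
      simp only [hsucc] at hshift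
      linarith [htop i i']
    · exact htop i i'

/-- The points whose forward odometer orbit avoids `⊤`. -/
def regularPoints (ρ : ℕ → ℕ) : Set (Digits ρ) := {y | ∀ n : ℕ, (odometer ρ)^[n] y ≠ ⊤}

theorem measurableSet_regularPoints : MeasurableSet (regularPoints ρ) := by
  rw [regularPoints, ofPred_forall]
  exact .iInter fun n => (odometer ρ).measurable.iterate n (measurableSet_singleton ⊤).compl

theorem ae_mem_regularPoints : ∀ᵐ y ∂uniformDigits ρ, y ∈ regularPoints ρ :=
  ae_all_iff.2 fun n => by
    have hpreimage := (measurePreserving_odometer.iterate n).measure_preimage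
      (measurableSet_singleton (⊤ : Digits ρ)).nullMeasurableSet
    rw [measure_singleton] at hpreimage
    simp only [ae_iff, ne_eq, not_not]
    exact hpreimage

theorem eventually_displacement_sub_eq_of_zpow (hp : IsSpread ρ p) {t : ℤ} {y z : Digits ρ}
    (hy : y ∈ regularPoints ρ) (hz : z ∈ regularPoints ρ)
    (h : ((odometerTower ρ p).map.toEquiv ^ t) (y, 0) = (z, 0)) :
    ∀ᶠ N in atTop, displacement p N z - displacement p N y = t := by
  obtain ⟨s, rfl | rfl⟩ := t.eq_nat_or_neg
  · exact eventually_displacement_sub_eq_of_pow hp hy (by simpa using h)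
  · rw [zpow_neg, Equiv.Perm.inv_eq_iff_eq, zpow_natCast] at h
    filter_upwards [eventually_displacement_sub_eq_of_pow hp hz h.symm] with N hN
    linarith

theorem digit_eq_of_zpow [Finite ι] (hp : IsSpread ρ p) (hr : IsRigid ρ p) {t : ℤ}
    {y z : ι → Digits ρ} (hy : ∀ i, y i ∈ regularPoints ρ) (hz : ∀ i, z i ∈ regularPoints ρ)
    (hlarge : ∀ j, ρ j ≠ 0 → ∃ i, 3 ≤ (y i j : ℕ))
    (h : ∀ i, ((odometerTower ρ p).map.toEquiv ^ t) (z i, 0) = (y i, 0)) {j : ℕ} {i i' : ι}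
    (hdigit : y i j = y i' j) : z i j = z i' j := by
  obtain ⟨N, hshift, hN⟩ := ((eventually_all.2 fun i =>
    eventually_displacement_sub_eq_of_zpow hp (hz i) (hy i) (h i)).and
      (eventually_gt_atTop j)).exists
  have hsub : (p j (z i j) - p j (y i j) : ℤ) = p j (z i' j) - p j (y i' j) :=
    hr.position_sub_eq hp hlarge (fun i i' => by linarith [hshift i, hshift i']) hN i i'
  rw [hdigit, sub_left_inj, Nat.cast_inj] at hsub
  exact Fin.ext ((hp.strictMono j).injective hsub)

theorem measurableSet_digits_mem [Finite ι] (j : ℕ) (t : Set (ι → Fin (ρ j + 2))) :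
    MeasurableSet {y : ι → Digits ρ | (fun i => y i j) ∈ t} :=
  (show Measurable fun (y : ι → Digits ρ) i => y i j by fun_prop) (toFinite t).measurableSet

variable [Fintype ι]

theorem pi_uniformDigits_eval_mem (j : ℕ) (s : ι → Set (Fin (ρ j + 2))) :
    Measure.pi (fun _ => uniformDigits ρ) {y | ∀ i, y i j ∈ s i} = ∏ i, uniformOn univ (s i) := by
  rw [show {y : ι → Digits ρ | ∀ i, y i j ∈ s i} = univ.pi fun i => {w | w j ∈ s i} by
    ext; simp, Measure.pi_pi]
  exact Finset.prod_congr rfl fun i _ => infinitePi_eval_mem (toFinite (s i)).measurableSet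

theorem pi_uniformDigits_eval_eq (j : ℕ) (u : ι → Fin (ρ j + 2)) :
    Measure.pi (fun _ => uniformDigits ρ) {y | ∀ i, y i j = u i} =
      ((ρ j + 2 : ℝ≥0∞) ^ Fintype.card ι)⁻¹ := by
  refine (pi_uniformDigits_eval_mem j fun i => {u i}).trans ?_
  simp [uniformOn_univ_singleton, ENNReal.inv_pow]

theorem pi_uniformDigits_eval_lt_le (j c : ℕ) :
    Measure.pi (fun _ : ι => uniformDigits ρ) {y | ∀ i, (y i j : ℕ) < c} ≤
      (c * (ρ j + 2 : ℝ≥0∞)⁻¹) ^ Fintype.card ι := by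
  have hcard : Measure.count {a : Fin (ρ j + 2) | (a : ℕ) < c} ≤ c := by
    rw [show {a : Fin (ρ j + 2) | (a : ℕ) < c} =
      ↑(Finset.univ.filter fun a : Fin (ρ j + 2) => a < c) by simp,
      Measure.count_apply_finset, Fin.card_filter_val_lt]
    exact_mod_cast min_le_right _ _
  refine (pi_uniformDigits_eval_mem j fun _ => {a | (a : ℕ) < c}).trans_le ?_
  rw [Finset.prod_const, Finset.card_univ, uniformOn_univ, div_eq_mul_inv, Fintype.card_fin]
  push_cast
  gcongr

theorem pi_uniformDigits_iUnion_eval_lt_three_le (S : Set ℕ) :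
    Measure.pi (fun _ : ι => uniformDigits ρ) (⋃ j : S, {y | ∀ i, (y i j : ℕ) < 3}) ≤
      ∑' j : S, (3 * (ρ j + 2 : ℝ≥0∞)⁻¹) ^ Fintype.card ι :=
  (measure_iUnion_le _).trans
    (ENNReal.tsum_le_tsum fun j => by exact_mod_cast pi_uniformDigits_eval_lt_le j.1 3)

theorem not_isErgodicMap_odometerTower [Nontrivial ι] (hp : IsSpread ρ p) (hr : IsRigid ρ p)
    (hsum : ∑' j : {j | ρ j ≠ 0}, (3 * (ρ j + 2 : ℝ≥0∞)⁻¹) ^ Fintype.card ι <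
      ((ρ 0 + 2 : ℝ≥0∞) ^ Fintype.card ι)⁻¹) :
    ¬ IsErgodicMap (Measure.pi fun _ : ι => (odometerTower ρ p).measure (uniformDigits ρ))
      fun x i => (odometerTower ρ p).map (x i) := by
  classical
  obtain ⟨i₀, i₁, hne⟩ := exists_pair_ne ι
  let regular : Set (ι → Digits ρ) := {y | ∀ i, y i ∈ regularPoints ρ}
  let small : Set (ι → Digits ρ) := ⋃ j : {j | ρ j ≠ 0}, {y | ∀ i, (y i j : ℕ) < 3}
  let start (u : ι → Fin (ρ 0 + 2)) : Set (ι → Digits ρ) := {y | ∀ i, y i 0 = u i}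
  have hregular : MeasurableSet regular := by
    rw [show regular = univ.pi fun _ => regularPoints ρ by ext; simp [regular]]
    exact .univ_pi fun _ => measurableSet_regularPoints
  have hae : ∀ᵐ y ∂Measure.pi fun _ : ι => uniformDigits ρ, y ∈ regular :=
    ae_all_iff.2 fun i => (Measure.quasiMeasurePreserving_eval _ i).ae ae_mem_regularPoints
  have hstart : MeasurableSet (start 0) := by
    simpa only [start, ← funext_iff, mem_singleton_iff] using measurableSet_digits_mem 0 {0}
  have hsmall : MeasurableSet small :=
    .iUnion fun j => measurableSet_digits_mem j.1 {a | ∀ i, (a i : ℕ) < 3}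
  refine Skyscraper.not_isErgodicMap_of_disjoint_orbits (D₀ := regular ∩ (start 0 \ small))
    (D₁ := regular ∩ start fun i => if i = i₀ then 1 else 0)
    (hregular.inter (hstart.diff hsmall)) ?_ ?_ ?_
  · rw [Measure.measure_inter_eq_of_ae hae, ← pos_iff_ne_zero]
    exact (tsub_pos_of_lt ((pi_uniformDigits_iUnion_eval_lt_three_le _).trans_lt
      (hsum.trans_eq (pi_uniformDigits_eval_eq 0 0).symm))).trans_le le_measure_sdiff
  · rw [Measure.measure_inter_eq_of_ae hae, pi_uniformDigits_eval_eq]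
    simp
  · rintro y ⟨hy, hy0, hysmall⟩ z ⟨hz, hz0⟩ t h
    have hlarge : ∀ j, ρ j ≠ 0 → ∃ i, 3 ≤ (y i j : ℕ) := fun j hj => by
      by_contra! hlow
      exact hysmall (mem_iUnion.2 ⟨⟨j, hj⟩, hlow⟩)
    have hdigit := digit_eq_of_zpow hp hr hy hz hlarge h ((hy0 i₀).trans (hy0 i₁).symm)
    rw [hz0, hz0] at hdigit
    simp [hne.symm] at hdigit

end NonErgodicity

section Positions

/-- The sequence `0, 1, 2, 27, 81, …`: a nonzero difference of two of its values determines both of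
them as soon as the larger index is at least `3`. -/
def pattern (a : ℕ) : ℕ := if a < 3 then a else 3 ^ a

theorem two_mul_pattern_lt {l a : ℕ} (ha : 3 ≤ a) (hl : l < a) : 2 * pattern l < pattern a := by
  obtain ⟨a, rfl⟩ : ∃ b, a = b + 1 := ⟨a - 1, by lia⟩
  have hpow : 3 ^ 2 ≤ 3 ^ a := Nat.pow_le_pow_right (by lia) (by lia)
  have hmono : 3 ^ l ≤ 3 ^ a := Nat.pow_le_pow_right (by lia) (by lia)
  simp only [pattern, pow_succ]
  split_ifs <;> lia

theorem strictMono_pattern : StrictMono pattern :=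
  strictMono_nat_of_lt_succ fun a => by
    rcases lt_or_ge a 2 with ha | ha
    · simp only [pattern]
      split_ifs <;> lia
    · have := two_mul_pattern_lt (l := a) (a := a + 1) (by lia) (by lia)
      lia

theorem eq_and_eq_of_pattern_add_eq_of_le {a b c d : ℕ} (hd : 3 ≤ d) (hcd : c ≤ d) (hab : a ≤ b)
    (h : pattern a + pattern b = pattern c + pattern d) : a = c ∧ b = d := by
  have hmono := strictMono_pattern.monotone
  rcases lt_trichotomy b d with hbd | rfl | hbd
  · have := two_mul_pattern_lt hd hbd
    have := hmono hab
    lia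
  · exact ⟨strictMono_pattern.injective (by lia), rfl⟩
  · have := two_mul_pattern_lt (hd.trans hbd.le) hbd
    have := hmono hcd
    lia

theorem eq_or_eq_of_pattern_add_eq {a b c d : ℕ} (hb : 3 ≤ b)
    (h : pattern a + pattern b = pattern c + pattern d) : (a = c ∧ b = d) ∨ (a = d ∧ b = c) := by
  have key := @eq_and_eq_of_pattern_add_eq_of_le
  rcases le_total a b with hab | hab <;> rcases le_total c d with hcd | hcd
  · exact .inl ((key hb hab hcd h.symm).imp Eq.symm Eq.symm)
  · exact .inr ((key hb hab hcd (by lia)).imp Eq.symm Eq.symm)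
  · exact .inr ((key (hb.trans hab) hab hcd (by lia)).symm.imp Eq.symm Eq.symm)
  · exact .inl ((key (hb.trans hab) hab hcd (by lia)).symm.imp Eq.symm Eq.symm)

/-- The position of the digit `a` at a stage with spacing `W`. The extra `1` makes the gaps between
the first three positions differ by one, which drives the ergodicity argument. -/
def position (W a : ℕ) : ℕ := W * pattern a + if a = 2 then 1 else 0

/-- The spacings of the stages, chosen recursively so that each stage dominates all lower ones. -/
def spacing (ρ : ℕ → ℕ) : ℕ → ℕ
  | 0 => 4
  | j + 1 => (ρ j + 2) * spacing ρ j + 2 * position (spacing ρ j) (ρ j + 1)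

/-- The positions of the digits at all stages, for the alphabet sizes `ρ j + 2`. -/
def positions (ρ : ℕ → ℕ) (j : ℕ) : ℕ → ℕ := position (spacing ρ j)

theorem two_mul_sum_positions_add_prod_add_le_spacing (ρ : ℕ → ℕ) (j : ℕ) :
    2 * ∑ l ∈ Finset.range j, positions ρ l (ρ l + 1) + ∏ l ∈ Finset.range j, (ρ l + 2) + 3 ≤
      spacing ρ j := by
  induction j with
  | zero => simp [spacing]
  | succ j ih =>
    rw [Finset.sum_range_succ, Finset.prod_range_succ, spacing]
    have hsum := Nat.le_mul_of_pos_left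
      (2 * ∑ l ∈ Finset.range j, positions ρ l (ρ l + 1) + 3) (ρ j + 1).succ_pos
    have hpos : positions ρ j (ρ j + 1) = position (spacing ρ j) (ρ j + 1) := rfl
    linarith [Nat.mul_le_mul_left (ρ j + 2) ih]

theorem position_add_le_position_succ {W a : ℕ} : position W a + W ≤ position W (a + 1) + 1 := by
  have hpattern : W * (pattern a + 1) ≤ W * pattern (a + 1) :=
    Nat.mul_le_mul_left W (strictMono_pattern a.lt_succ_self)
  simp only [position]
  split_ifs <;> lia

theorem position_two_add_position_zero (W : ℕ) :
    position W 2 + position W 0 = 2 * position W 1 + 1 := by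
  simp [position, pattern]
  lia

theorem pattern_sub_eq_of_abs_position_sub_le {W S a b c d : ℕ} (hW : 2 * S + 3 ≤ W)
    (h : |(position W a - position W b : ℤ) - (position W c - position W d)| ≤ 2 * S) :
    (pattern a - pattern b : ℤ) = pattern c - pattern d := by
  have hlt : |(W : ℤ) * (pattern a - pattern b - (pattern c - pattern d))| < W := by
    have hcast : ∀ e : ℕ, (position W e : ℤ) = W * pattern e + if e = 2 then 1 else 0 := fun e => by
      simp [position]
    have hextra : ∀ e : ℕ,
        (0 : ℤ) ≤ (if e = 2 then 1 else 0) ∧ (if e = 2 then 1 else 0) ≤ (1 : ℤ) :=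
      fun e => by split_ifs <;> simp
    simp only [hcast] at h
    rw [abs_le] at h
    rw [abs_lt]
    constructor <;> linarith [hextra a, hextra b, hextra c, hextra d]
  have hW0 : (W : ℤ) ≠ 0 := by lia
  have hzero := Int.eq_zero_of_abs_lt_dvd (dvd_mul_right ..) hlt
  exact sub_eq_zero.1 ((mul_eq_zero_iff_left hW0).1 hzero)

theorem isSpread_positions (ρ : ℕ → ℕ) : IsSpread ρ (positions ρ) := fun j a => by
  have hspacing := two_mul_sum_positions_add_prod_add_le_spacing ρ j
  have hgap := position_add_le_position_succ (W := spacing ρ j) (a := a)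
  simp only [positions] at hspacing ⊢
  lia

theorem isRigid_positions (ρ : ℕ → ℕ) : IsRigid ρ (positions ρ) := fun j a b c d hd h => by
  rw [displacement_top] at h
  have hspacing := two_mul_sum_positions_add_prod_add_le_spacing ρ j
  have hpattern := pattern_sub_eq_of_abs_position_sub_le (by lia) h
  rcases hd with hj | hd
  · have hne : ∀ e : Fin (ρ j + 2), (e : ℕ) ≠ 2 := fun e => by lia
    simp only [positions, position, if_neg (hne _)]
    push_cast
    linear_combination (spacing ρ j : ℤ) * hpattern
  · rcases eq_or_eq_of_pattern_add_eq hd (a := a) (c := c) (d := b) (by lia) with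
      ⟨hac, hdb⟩ | ⟨hab, hdc⟩
    · rw [hac, hdb]
    · rw [hab, hdc, sub_self, sub_self]

end Positions

section Parameters

/-- A natural number approximating the `k`-th root of `n` from above. -/
noncomputable def ceilRoot (k n : ℕ) : ℕ := ⌈(n : ℝ) ^ (1 / k : ℝ)⌉₊

theorem ceilRoot_ne_zero (k : ℕ) {n : ℕ} (hn : n ≠ 0) : ceilRoot k n ≠ 0 :=
  (Nat.ceil_pos.2 (by positivity)).ne'

theorem ceilRoot_add_two_pow_le {k n : ℕ} (hk : k ≠ 0) (hn : n ≠ 0) :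
    (ceilRoot k n + 2) ^ k ≤ 4 ^ k * n := by
  have hone : (1 : ℝ) ≤ (n : ℝ) ^ (1 / k : ℝ) :=
    Real.one_le_rpow (by exact_mod_cast Nat.one_le_iff_ne_zero.2 hn) (by positivity)
  have hceil : (ceilRoot k n : ℝ) < (n : ℝ) ^ (1 / k : ℝ) + 1 :=
    Nat.ceil_lt_add_one (by positivity)
  have hpow : ((ceilRoot k n : ℝ) + 2) ^ k ≤ (4 * (n : ℝ) ^ (1 / k : ℝ)) ^ k := by
    gcongr
    linarith
  rw [mul_pow, one_div, Real.rpow_inv_natCast_pow n.cast_nonneg hk] at hpow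
  exact_mod_cast hpow

theorem rpow_le_ceilRoot_add_two_pow {k : ℕ} (hk : k ≠ 0) (n : ℕ) :
    (n : ℝ) ^ (1 + 1 / k : ℝ) ≤ (ceilRoot k n + 2 : ℝ) ^ (k + 1) := by
  have hroot : (n : ℝ) ^ (1 / k : ℝ) ≤ ceilRoot k n + 2 :=
    (Nat.le_ceil _).trans (by simp [ceilRoot])
  calc (n : ℝ) ^ (1 + 1 / k : ℝ) = ((n : ℝ) ^ (1 / k : ℝ)) ^ (k + 1) := by
        rw [← Real.rpow_mul_natCast n.cast_nonneg]
        congr 1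
        push_cast
        field_simp
    _ ≤ (ceilRoot k n + 2 : ℝ) ^ (k + 1) := by gcongr

theorem tsum_inv_natCast_add_eq_top {m : ℕ} : ∑' q : ℕ, ((q + m : ℕ) : ℝ≥0∞)⁻¹ = ∞ := by
  by_contra h
  have hsummable := ENNReal.summable_toReal h
  simp only [ENNReal.toReal_inv, ENNReal.toReal_natCast] at hsummable
  exact Real.not_summable_natCast_inv
    ((summable_nat_add_iff (f := fun n : ℕ => (n : ℝ)⁻¹) m).1 hsummable)

theorem tsum_inv_ceilRoot_add_two_pow_eq_top {k m : ℕ} (hk : k ≠ 0) (hm : m ≠ 0) :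
    ∑' q, ((ceilRoot k (q + m) + 2 : ℝ≥0∞) ^ k)⁻¹ = ∞ := by
  refine top_le_iff.1 (le_trans (top_le_iff.2 ?_) (ENNReal.tsum_le_tsum fun q =>
    ENNReal.inv_le_inv.2 (?_ : _ ≤ (4 : ℝ≥0∞) ^ k * (q + m : ℕ))))
  · simp_rw [ENNReal.mul_inv (.inr (ENNReal.natCast_ne_top _)) (.inl (ENNReal.pow_ne_top
      ENNReal.ofNat_ne_top)), ENNReal.tsum_mul_left, tsum_inv_natCast_add_eq_top]
    exact ENNReal.mul_top (ENNReal.inv_ne_zero.2 (by finiteness))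
  · exact_mod_cast ceilRoot_add_two_pow_le hk (n := q + m) (by lia)

theorem tsum_inv_ceilRoot_add_two_pow_succ_ne_top {k : ℕ} (hk : k ≠ 0) :
    ∑' n, ((ceilRoot k n + 2 : ℝ≥0∞) ^ (k + 1))⁻¹ ≠ ∞ := by
  have hexponent : (1 : ℝ) < 1 + 1 / k := by simpa using Nat.pos_of_ne_zero hk
  have hsummable : Summable fun n : ℕ => (((ceilRoot k n + 2) ^ (k + 1) : ℕ) : ℝ)⁻¹ := by
    refine (summable_nat_add_iff 1).1 (.of_nonneg_of_le (fun n => by positivity) (fun n => ?_)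
      ((summable_nat_add_iff 1).2 (Real.summable_nat_rpow_inv.2 hexponent)))
    have := rpow_le_ceilRoot_add_two_pow hk (n + 1)
    push_cast at this ⊢
    gcongr
  convert hsummable.tsum_ofReal_ne_top using 4 with n
  rw [ENNReal.ofReal_inv_of_pos (by positivity), ENNReal.ofReal_natCast]
  push_cast
  rfl

theorem exists_tsum_inv_pow_eq_top_and_tsum_mul_inv_pow_lt {k : ℕ} (hk : k ≠ 0) {ε : ℝ≥0∞}
    (hε : ε ≠ 0) :
    ∃ a : ℕ → ℕ, (∀ q, a q ≠ 0) ∧ ∑' q, ((a q + 2 : ℝ≥0∞) ^ k)⁻¹ = ∞ ∧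
      ∑' q, (3 * (a q + 2 : ℝ≥0∞)⁻¹) ^ (k + 1) < ε := by
  have htail := ENNReal.tendsto_sum_nat_add
    (fun n => (3 * (ceilRoot k n + 2 : ℝ≥0∞)⁻¹) ^ (k + 1)) (by
      simp_rw [mul_pow, ← ENNReal.inv_pow, ENNReal.tsum_mul_left]
      exact ENNReal.mul_ne_top (by finiteness) (tsum_inv_ceilRoot_add_two_pow_succ_ne_top hk))
  obtain ⟨m, hm, hlt⟩ :=
    ((eventually_ne_atTop 0).and (htail.eventually_lt_const (pos_iff_ne_zero.2 hε))).exists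
  exact ⟨fun q => ceilRoot k (q + m), fun q => ceilRoot_ne_zero k (by lia),
    tsum_inv_ceilRoot_add_two_pow_eq_top hk hm, hlt⟩

/-- The alphabet sizes, diminished by two, for which the even stages have two digits and the odd
stages have `a 0 + 2`, `a 1 + 2`, … digits. -/
def interleaveZero (a : ℕ → ℕ) (j : ℕ) : ℕ := if Even j then 0 else a (j / 2)

theorem infinite_interleaveZero_eq_zero (a : ℕ → ℕ) : {j | interleaveZero a j = 0}.Infinite :=
  Nat.frequently_atTop_iff_infinite.1
    (Nat.frequently_even.mono fun _ hj => if_pos hj)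

theorem tsum_interleaveZero_ne_zero {a : ℕ → ℕ} (ha : ∀ q, a q ≠ 0) (f : ℕ → ℝ≥0∞) :
    ∑' j : {j | interleaveZero a j ≠ 0}, f (interleaveZero a j) = ∑' q, f (a q) := by
  have hodd : ∀ q, interleaveZero a (2 * q + 1) = a q := fun q => by
    simp [interleaveZero, show (2 * q + 1) / 2 = q by lia]
  have hrange : {j | interleaveZero a j ≠ 0} = range fun q => 2 * q + 1 := by
    ext j
    obtain ⟨q, rfl | rfl⟩ := j.even_or_odd'
    · simp [interleaveZero]
    · simp [hodd, ha]
  rw [hrange, tsum_range (fun j => f (interleaveZero a j)) fun q r h => by lia]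
  simp only [hodd]

end Parameters

end OdometerTower

theorem stmt8 (k : ℕ) (hk : 0 < k) :
    ∃ (X : Type) (_ : MeasurableSpace X) (_ : StandardBorelSpace X)
      (μ : Measure X) (_ : NoAtoms μ) (_ : SigmaFinite μ) (T : X ≃ᵐ X),
      μ Set.univ = ⊤ ∧ MeasurePreserving T μ μ ∧
      IsErgodicMap (Measure.pi fun _ : Fin k => μ)
        (fun x : Fin k → X => fun i => T (x i)) ∧
      ¬ IsErgodicMap (Measure.pi fun _ : Fin (k + 1) => μ)
        (fun x : Fin (k + 1) → X => fun i => T (x i)) ∧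
      ∀ n : ℕ, 0 < n →
        IsConservativeMap (Measure.pi fun _ : Fin n => μ)
          (fun x : Fin n → X => fun i => T (x i)) := by
  open OdometerTower in
  have : Nontrivial (Fin (k + 1)) := Fin.nontrivial_iff_two_le.2 (by lia)
  obtain ⟨a, ha, htop, hlt⟩ := exists_tsum_inv_pow_eq_top_and_tsum_mul_inv_pow_lt hk.ne'
    (ENNReal.inv_ne_zero.2 (by finiteness : (2 : ENNReal) ^ (k + 1) ≠ ⊤))
  let ρ := interleaveZero a
  let tower := odometerTower ρ (positions ρ)
  have hspread := isSpread_positions ρ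
  refine ⟨Digits ρ × ℤ, inferInstance, inferInstance, tower.measure (uniformDigits ρ),
    (inferInstance : NullSingletonClass (tower.measure (uniformDigits ρ))), inferInstance,
    tower.map, measure_odometerTower_univ hspread,
    Skyscraper.measurePreserving_map measurePreserving_odometer, ?_, ?_, fun n _ => ?_⟩
  · refine isErgodicMap_odometerTower hspread
      (fun j _ => position_two_add_position_zero (spacing ρ j)) ?_
    rwa [Fintype.card_fin, tsum_interleaveZero_ne_zero ha fun r => ((r + 2 : ENNReal) ^ k)⁻¹]
  · refine not_isErgodicMap_odometerTower hspread (isRigid_positions ρ) ?_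
    rw [Fintype.card_fin,
      tsum_interleaveZero_ne_zero ha fun r => (3 * (r + 2 : ENNReal)⁻¹) ^ (k + 1)]
    simpa [ρ, interleaveZero] using hlt
  · exact isConservativeMap_odometerTower hspread (infinite_interleaveZero_eq_zero a)
end

section
/- There exists a standard Borel space X with a nonatomic σ-finite Borel measure μ satisfying μ(X) = ∞, and an invertible measure-preserving transformation T : X → X, such that T has infinite ergodic index (for every positive integer n, the n-fold Cartesian product of T is ergodic), but the transformation T × T² : (x, y) ↦ (T x, T² y) of (X × X, μ × μ) is not conservative; in particular T is not power weakly mixing. -/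
/-!
The example is a rank-one tower. Its base is the compact group `ℕ → ZMod 4` of digit sequences with
Haar measure, and the `k`-th stacking step places four copies of the `k`-th column at the heights
`0, a, 10 a, 11 a - 1` with `a = 100 ^ (k + 1)`. Two digit sequences that differ at finitely many
places lie on the same orbit, and the time between them is a sum of differences of heights. If every
point is recorded as its set of visiting times to the base, the transformation becomes the shift on
`ℤ → Prop`. Translations by finitely supported sequences preserve Haar measure and are determined by
their travel times; hence the copies of Haar measure on the translates of the base agree on
overlaps, and they glue to an invariant measure.

*The product with the square is not conservative.* A nonzero return time to the base is, up to lower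
order terms, `± q a` with `q ∈ {1, 9, 10, 11}`, and none of these numbers is twice another. Hence
`p` and `2 p` are never both nonzero return times, which makes the square over the base a wandering
set for `T × T²`. As `p` and `2 p - 1` are never both return times, the orbit of that square is an
invariant set that misses another translate of it, so `T × T²` is not ergodic either. On a finite
measure space it would be conservative by Poincaré recurrence; so the measure is infinite.

*The Cartesian powers are ergodic.* Let `A` be invariant under the diagonal map. If the `k`-th digit
of the `i`-th coordinate is `2` and that of all others is `0`, the `a`-th power of the diagonal map
raises all these digits by one and moves the `i`-th coordinate one step further. Every point can be
brought into this position by changing only its `k`-th digits, which is a small translation when `k`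
is large; so `A` is invariant under moving the `i`-th coordinate alone. Therefore the trace of `A`
on the power of the base is invariant under all finitely supported translations, a dense subgroup of
a compact group, and it is null or conull.
-/

open MeasureTheory

namespace InfiniteErgodicIndex

open Filter Function Topology
open scoped symmDiff

/-! ### Conservative and ergodic maps -/

theorem preimage_iterate_eq_add {Y : Type*} {S : Y → Y} {U : ℤ → Set Y}
    (hS : ∀ p, S ⁻¹' U p = U (p + 1)) (n : ℕ) (p : ℤ) : S^[n] ⁻¹' U p = U (p + n) := by
  induction n generalizing p with
  | zero => simp
  | succ n ih => rw [iterate_succ', Set.preimage_comp, hS, ih]; congr 1; push_cast; ring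

section Maps

variable {X Y : Type*} [MeasurableSpace X] [MeasurableSpace Y] {μ : Measure X} {ν : Measure Y}

theorem isConservativeMap_of_isFiniteMeasure [IsFiniteMeasure μ] {T : X → X}
    (hT : MeasurePreserving T μ μ) : IsConservativeMap μ T := by
  intro A hA hpos
  obtain ⟨n, hn, hne⟩ :=
    hT.conservative.exists_gt_measure_inter_ne_zero hA.nullMeasurableSet hpos.ne' 0
  exact ⟨n, hn, by rwa [Set.inter_comm, pos_iff_ne_zero]⟩

theorem isErgodicMap_of_semiconj {f : X → Y} {S : X → X} {T : Y → Y}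
    (hf : MeasurePreserving f μ ν) (hfST : Semiconj f S T) (hS : IsErgodicMap μ S) :
    IsErgodicMap ν T := by
  intro A hA hinv
  have hinv' : μ ((S ⁻¹' (f ⁻¹' A)) ∆ (f ⁻¹' A)) = 0 := by
    rw [← Set.preimage_comp, hfST.comp_eq, Set.preimage_comp, ← Set.preimage_symmDiff]
    exact hf.quasiMeasurePreserving.preimage_null hinv
  rw [← hf.measure_preimage hA.nullMeasurableSet, ← hf.measure_preimage hA.compl.nullMeasurableSet]
  exact hS _ (hf.measurable hA) hinv'

theorem not_isConservativeMap_of_preimage_eq_add_one {S : Y → Y} {U : ℤ → Set Y}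
    (hS : ∀ p, S ⁻¹' U p = U (p + 1)) (hU : MeasurableSet (U 0)) (hU₀ : ν (U 0) ≠ 0)
    (hUU : ∀ p, 0 < p → ν (U 0 ∩ U p) = 0) : ¬ IsConservativeMap ν S := by
  intro hcons
  obtain ⟨n, hn, hpos⟩ := hcons (U 0) hU (pos_iff_ne_zero.2 hU₀)
  rw [preimage_iterate_eq_add hS, zero_add, Set.inter_comm] at hpos
  exact hpos.ne' (hUU n (by exact_mod_cast hn))

theorem not_isErgodicMap_of_preimage_eq_add_one {S : Y → Y} {U : ℤ → Set Y}
    (hS : ∀ p, S ⁻¹' U p = U (p + 1)) (hU : ∀ p, MeasurableSet (U p)) (hU₀ : ν (U 0) ≠ 0)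
    {B : Set Y} (hB : ν B ≠ 0) (hBU : ∀ p, ν (B ∩ U p) = 0) : ¬ IsErgodicMap ν S := by
  intro herg
  have hinv : S ⁻¹' ⋃ p, U p = ⋃ p, U p := by
    rw [Set.preimage_iUnion]
    simp only [hS]
    exact (Equiv.addRight (1 : ℤ)).surjective.iUnion_comp U
  rcases herg _ (MeasurableSet.iUnion hU) (by rw [hinv, symmDiff_self]; exact measure_empty)
    with h | h
  · exact hU₀ (measure_mono_null (Set.subset_iUnion U 0) h)
  · refine hB (measure_mono_null (t := (⋃ p, B ∩ U p) ∪ (⋃ p, U p)ᶜ) (fun x hx => ?_)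
      (measure_union_null (measure_iUnion_null hBU) h))
    rw [← Set.inter_iUnion]
    exact (em (x ∈ ⋃ p, U p)).imp (fun hxU => ⟨hx, hxU⟩) id

/-- The product `T × T²`. -/
def prodSq (T : X → X) : X × X → X × X := fun z => (T z.1, T (T z.2))

theorem measure_univ_eq_top_of_not_isConservativeMap_prodSq {T : X → X}
    (hT : MeasurePreserving T μ μ) (hcons : ¬ IsConservativeMap (μ.prod μ) (prodSq T)) :
    μ Set.univ = ⊤ := by
  by_contra hfin
  have : IsFiniteMeasure μ := ⟨lt_top_iff_ne_top.2 hfin⟩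
  exact hcons (isConservativeMap_of_isFiniteMeasure (hT.prod (hT.comp hT)))

theorem isErgodicMap_prodSq_of_isErgodicMap_pi_zpow [SigmaFinite μ] {T : Equiv.Perm X}
    (hT : IsErgodicMap (Measure.pi fun _ : Fin 2 => μ)
      fun x : Fin 2 → X => fun i => (T ^ (![1, 2] i : ℤ)) (x i)) :
    IsErgodicMap (μ.prod μ) (prodSq T) :=
  isErgodicMap_of_semiconj (measurePreserving_finTwoArrow μ) (fun _ => rfl) hT

end Maps

/-! ### Gluing measures -/

theorem exists_measure_forall_restrict_eq {X ι : Type*} [MeasurableSpace X] [Countable ι]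
    {s : ι → Set X} (hs : ∀ i, MeasurableSet (s i)) {m : ι → Measure X}
    (hm : ∀ i, ∀ᵐ x ∂m i, x ∈ s i) (hcompat : ∀ i j, (m i).restrict (s j) = (m j).restrict (s i)) :
    ∃ μ : Measure X, (∀ i, μ.restrict (s i) = m i) ∧ ∀ᵐ x ∂μ, ∃ i, x ∈ s i := by
  cases isEmpty_or_nonempty ι
  · exact ⟨0, fun i => isEmptyElim i, by simp⟩
  obtain ⟨f, hf⟩ := exists_surjective_nat ι
  let t : ℕ → Set X := disjointed (s ∘ f)
  have ht : ∀ n, MeasurableSet (t n) := MeasurableSet.disjointed fun n => hs (f n)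
  have ht_subset : ∀ n, t n ⊆ s (f n) := disjointed_subset (s ∘ f)
  have ht_iUnion : ⋃ n, t n = ⋃ i, s i := iUnion_disjointed.trans (hf.iUnion_comp s)
  refine ⟨.sum fun n => (m (f n)).restrict (t n), fun j => ?_, Measure.ae_sum_iff.2 fun n => ?_⟩
  · have hpiece : ∀ n, ((m (f n)).restrict (t n)).restrict (s j) = (m j).restrict (t n) := by
      intro n
      rw [Measure.restrict_comm (hs j), hcompat, Measure.restrict_restrict (ht n),
        Set.inter_eq_left.2 (ht_subset n)]
    rw [Measure.restrict_sum _ (hs j)]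
    simp only [hpiece]
    rw [← Measure.restrict_iUnion (disjoint_disjointed _) ht, ht_iUnion]
    refine Measure.restrict_eq_self_of_ae_mem ?_
    filter_upwards [hm j] with x hx using Set.mem_iUnion_of_mem j hx
  · filter_upwards [ae_restrict_mem (ht n)] with x hx using ⟨f n, ht_subset n hx⟩

theorem eq_of_forall_restrict_eq {X ι : Type*} [MeasurableSpace X] [Countable ι] {s : ι → Set X}
    {μ ν : Measure X} (hμ : ∀ᵐ x ∂μ, ∃ i, x ∈ s i) (hν : ∀ᵐ x ∂ν, ∃ i, x ∈ s i)
    (h : ∀ i, μ.restrict (s i) = ν.restrict (s i)) : μ = ν := by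
  simp only [← Set.mem_iUnion] at hμ hν
  rw [← Measure.restrict_eq_self_of_ae_mem hμ, ← Measure.restrict_eq_self_of_ae_mem hν]
  exact Measure.restrict_iUnion_congr.2 h

/-! ### Invariant measures on the space of itineraries -/

/-- The phase space `2^ℤ`: a point is recorded as the set of the times at which its orbit visits a
distinguished set, the base of the tower. -/
abbrev Itinerary : Type := ℤ → Prop

/-- The `m`-th power of the shift, which moves a visit at time `j + m` to time `j`. -/
def shift (m : ℤ) : Itinerary ≃ᵐ Itinerary where
  toFun x j := x (j + m)
  invFun x j := x (j - m)
  left_inv x := by ext j; simp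
  right_inv x := by ext j; simp
  measurable_toFun := measurable_pi_iff.2 fun j => measurable_pi_apply (j + m)
  measurable_invFun := measurable_pi_iff.2 fun j => measurable_pi_apply (j - m)

theorem shift_apply (m : ℤ) (x : Itinerary) (j : ℤ) : shift m x j = x (j + m) := rfl

theorem shift_shift (m n : ℤ) (x : Itinerary) : shift m (shift n x) = shift (m + n) x := by
  ext j
  simp only [shift_apply, add_assoc]

theorem shift_zero (x : Itinerary) : shift 0 x = x := by
  ext j
  rw [shift_apply, add_zero]

theorem shift_one_iterate (n : ℕ) : (shift 1)^[n] = shift n := by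
  induction n with
  | zero => ext x : 1; exact (shift_zero x).symm
  | succ n ih =>
    ext x : 1
    rw [iterate_succ_apply', ih, shift_shift, add_comm, Nat.cast_succ]

/-- The set of the points that visit the base at time `j`; the base itself is `visit 0`. -/
def visit (j : ℤ) : Set Itinerary := {x | x j}

theorem measurableSet_visit (j : ℤ) : MeasurableSet (visit j) :=
  measurableSet_setOfPred.2 (measurable_pi_apply j)

theorem preimage_shift_visit (m j : ℤ) : shift m ⁻¹' visit j = visit (j + m) := rfl

theorem preimage_prodSq_visit (p : ℤ) :
    prodSq (shift 1) ⁻¹' (visit p ×ˢ visit (2 * p)) = visit (p + 1) ×ˢ visit (2 * (p + 1)) := by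
  rw [show 2 * (p + 1) = 2 * p + 1 + 1 by ring]
  rfl

theorem map_shift_map_shift (ν : Measure Itinerary) (m n : ℤ) :
    (ν.map (shift n)).map (shift m) = ν.map (shift (m + n)) := by
  rw [Measure.map_map (shift m).measurable (shift n).measurable]
  congr 1
  ext x : 1
  exact shift_shift m n x

/-- Palm measures, the measures on the base that are invariant under all partially defined return
maps `shift m : visit 0 ∩ visit m → visit 0 ∩ visit (-m)`. They are the traces on the base of the
shift-invariant measures. -/
structure IsPalm (ν : Measure Itinerary) : Prop where
  ae_visit_zero : ∀ᵐ x ∂ν, x ∈ visit 0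
  map_shift_restrict_visit : ∀ m, (ν.restrict (visit m)).map (shift m) = ν.restrict (visit (-m))

/-- `IsSuspension ν μ` says that `μ` is the shift-invariant measure with trace `ν` on the base that
is carried by the orbits of the base. -/
structure IsSuspension (ν μ : Measure Itinerary) : Prop where
  restrict_visit_zero : μ.restrict (visit 0) = ν
  ae_exists_visit : ∀ᵐ x ∂μ, ∃ j, x ∈ visit j
  measurePreserving_shift : ∀ m, MeasurePreserving (shift m) μ μ

section Suspension

variable {ν μ : Measure Itinerary}

theorem ae_map_shift_visit (h₀ : ∀ᵐ x ∂ν, x ∈ visit 0) (j : ℤ) :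
    ∀ᵐ x ∂ν.map (shift (-j)), x ∈ visit j := by
  refine (ae_map_iff (p := (· ∈ visit j)) (shift (-j)).measurable.aemeasurable
    (measurableSet_visit j)).2 ?_
  filter_upwards [h₀] with x hx
  rwa [← Set.mem_preimage, preimage_shift_visit, add_neg_cancel]

theorem IsPalm.restrict_map_shift (hν : IsPalm ν) (i j : ℤ) :
    (ν.map (shift (-i))).restrict (visit j) = (ν.map (shift (-j))).restrict (visit i) := by
  rw [MeasurableEquiv.restrict_map, MeasurableEquiv.restrict_map, preimage_shift_visit,
    preimage_shift_visit, show i + -j = -(j + -i) by ring, ← hν.map_shift_restrict_visit,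
    map_shift_map_shift, neg_add_cancel_left]

theorem measurePreserving_shift_of_restrict_visit
    (hμ : ∀ j, μ.restrict (visit j) = ν.map (shift (-j))) (hvisit : ∀ᵐ x ∂μ, ∃ j, x ∈ visit j)
    (m : ℤ) : MeasurePreserving (shift m) μ μ := by
  refine ⟨(shift m).measurable, eq_of_forall_restrict_eq ?_ hvisit fun j => ?_⟩
  · rw [(shift m).measurableEmbedding.ae_map_iff]
    filter_upwards [hvisit] with x ⟨j, hj⟩
    exact ⟨j - m, by rwa [← Set.mem_preimage, preimage_shift_visit, sub_add_cancel]⟩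
  · rw [MeasurableEquiv.restrict_map, preimage_shift_visit, hμ, hμ, map_shift_map_shift]
    congr 3
    ring

theorem IsPalm.exists_isSuspension (hν : IsPalm ν) : ∃ μ, IsSuspension ν μ := by
  obtain ⟨μ, hμ, hvisit⟩ := exists_measure_forall_restrict_eq measurableSet_visit
    (ae_map_shift_visit hν.ae_visit_zero) hν.restrict_map_shift
  refine ⟨μ, ?_, hvisit, measurePreserving_shift_of_restrict_visit hμ hvisit⟩
  rw [hμ, neg_zero]
  convert! Measure.map_id
  ext x : 1
  exact shift_zero x

namespace IsSuspension

theorem restrict_visit (h : IsSuspension ν μ) (j : ℤ) :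
    μ.restrict (visit j) = ν.map (shift (-j)) := by
  rw [← h.restrict_visit_zero, ← (h.measurePreserving_shift (-j)).map_eq,
    MeasurableEquiv.restrict_map, (h.measurePreserving_shift (-j)).map_eq, preimage_shift_visit,
    add_neg_cancel]

theorem measure_visit_inter (h : IsSuspension ν μ) (i j : ℤ) :
    μ (visit i ∩ visit j) = ν (visit (j - i)) := by
  rw [Set.inter_comm, ← Measure.restrict_apply (measurableSet_visit j), h.restrict_visit,
    MeasurableEquiv.map_apply, preimage_shift_visit, sub_eq_add_neg]

theorem measure_visit (h : IsSuspension ν μ) (j : ℤ) : μ (visit j) = ν Set.univ := by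
  rw [← Measure.restrict_apply_univ, h.restrict_visit, MeasurableEquiv.map_apply, Set.preimage_univ]

theorem sigmaFinite [IsFiniteMeasure ν] (h : IsSuspension ν μ) : SigmaFinite μ := by
  refine Measure.sigmaFinite_of_countable (S := insert {x | ∃ j, x ∈ visit j}ᶜ (Set.range visit))
    ((Set.countable_range _).insert _) ?_ ?_
  · rintro s (rfl | ⟨j, rfl⟩)
    · rw [mem_ae_iff.1 h.ae_exists_visit]
      exact ENNReal.zero_lt_top
    · rw [h.measure_visit]
      exact measure_lt_top ν _
  · rw [Set.sUnion_insert, Set.sUnion_range]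
    refine Set.eq_univ_of_forall fun x => ?_
    simpa [or_comm] using em (∃ j, x ∈ visit j)

theorem nullSingletonClass [NullSingletonClass ν] (h : IsSuspension ν μ) :
    NullSingletonClass μ := by
  refine ⟨fun x => ?_⟩
  by_cases hx : ∃ j, x ∈ visit j
  · obtain ⟨j, hj⟩ := hx
    rw [← Measure.restrict_eq_self μ (Set.singleton_subset_iff.2 hj), h.restrict_visit,
      MeasurableEquiv.map_apply]
    exact (Set.subsingleton_singleton.preimage (shift (-j)).injective).measure_zero ν
  · exact measure_mono_null (Set.singleton_subset_iff.2 hx) h.ae_exists_visit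

theorem prod_visit_inter [IsFiniteMeasure ν] (h : IsSuspension ν μ) (i j k l : ℤ) :
    (μ.prod μ) ((visit i ×ˢ visit j) ∩ (visit k ×ˢ visit l)) =
      ν (visit (k - i)) * ν (visit (l - j)) := by
  have := h.sigmaFinite
  rw [Set.prod_inter_prod, Measure.prod_prod, h.measure_visit_inter, h.measure_visit_inter]

theorem prod_visit_ne_zero [IsFiniteMeasure ν] [NeZero ν] (h : IsSuspension ν μ) (i j : ℤ) :
    (μ.prod μ) (visit i ×ˢ visit j) ≠ 0 := by
  have := h.sigmaFinite
  rw [Measure.prod_prod, h.measure_visit, h.measure_visit]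
  exact mul_ne_zero (NeZero.ne _) (NeZero.ne _)

theorem not_isConservativeMap_prodSq [IsFiniteMeasure ν] [NeZero ν] (h : IsSuspension ν μ)
    (hν : ∀ p, 0 < p → ν (visit p) = 0 ∨ ν (visit (2 * p)) = 0) :
    ¬ IsConservativeMap (μ.prod μ) (prodSq (shift 1)) :=
  not_isConservativeMap_of_preimage_eq_add_one preimage_prodSq_visit
    ((measurableSet_visit _).prod (measurableSet_visit _)) (h.prod_visit_ne_zero _ _)
    fun p hp => by
      rw [h.prod_visit_inter, mul_zero, sub_zero, sub_zero, mul_eq_zero]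
      exact hν p hp

/-- The orbit of the square over the base misses the square `visit 0 ×ˢ visit 1`. -/
theorem not_isErgodicMap_prodSq [IsFiniteMeasure ν] [NeZero ν] (h : IsSuspension ν μ)
    (hν : ∀ p, ν (visit p) = 0 ∨ ν (visit (2 * p - 1)) = 0) :
    ¬ IsErgodicMap (μ.prod μ) (prodSq (shift 1)) :=
  not_isErgodicMap_of_preimage_eq_add_one preimage_prodSq_visit
    (fun _ => (measurableSet_visit _).prod (measurableSet_visit _)) (h.prod_visit_ne_zero _ _)
    (h.prod_visit_ne_zero 0 1) fun p => by
      rw [h.prod_visit_inter, sub_zero, mul_eq_zero]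
      exact hν p

end IsSuspension

end Suspension

/-! ### Free cocycles -/

/-- A measurable integer cocycle `α` of an action, which is free in the sense that `α γ ω` vanishes
only for `γ = 0`. It gives the time that the flow built over `Ω` takes from `ω` to `γ +ᵥ ω`. -/
structure IsFreeCocycle {Γ Ω : Type*} [AddGroup Γ] [AddAction Γ Ω] [MeasurableSpace Ω]
    (α : Γ → Ω → ℤ) : Prop where
  measurable : ∀ γ, Measurable (α γ)
  map_add : ∀ γ γ' ω, α (γ + γ') ω = α γ (γ' +ᵥ ω) + α γ' ω
  eq_zero_of_apply_eq_zero : ∀ γ ω, α γ ω = 0 → γ = 0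

/-- The set of the times `α γ ω` at which the orbit of `ω` returns to `Ω`. -/
def itinerary {Γ Ω : Type*} (α : Γ → Ω → ℤ) (ω : Ω) : Itinerary := fun j => ∃ γ, α γ ω = j

theorem preimage_itinerary_visit {Γ Ω : Type*} (α : Γ → Ω → ℤ) (m : ℤ) :
    itinerary α ⁻¹' visit m = ⋃ γ, α γ ⁻¹' {m} := by
  ext ω
  exact (Set.mem_iUnion (s := fun γ => α γ ⁻¹' {m})).symm

section Cocycle

variable {Γ Ω : Type*} [AddGroup Γ] [AddAction Γ Ω] [MeasurableSpace Ω] {α : Γ → Ω → ℤ}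

namespace IsFreeCocycle

theorem map_zero (hα : IsFreeCocycle α) (ω : Ω) : α 0 ω = 0 := by
  have := hα.map_add 0 0 ω
  rwa [add_zero, zero_vadd, left_eq_add] at this

theorem map_neg (hα : IsFreeCocycle α) (γ : Γ) (ω : Ω) : α (-γ) (γ +ᵥ ω) = -α γ ω := by
  rw [← add_eq_zero_iff_eq_neg, ← hα.map_add, neg_add_cancel, hα.map_zero]

theorem injective (hα : IsFreeCocycle α) (ω : Ω) : Injective fun γ => α γ ω := by
  intro γ γ' h
  have := hα.map_add (γ + -γ') γ' ω
  rw [neg_add_cancel_right, show α γ ω = α γ' ω from h, right_eq_add] at this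
  exact add_neg_eq_zero.1 (hα.eq_zero_of_apply_eq_zero _ _ this)

theorem itinerary_vadd (hα : IsFreeCocycle α) (γ : Γ) (ω : Ω) :
    itinerary α (γ +ᵥ ω) = shift (α γ ω) (itinerary α ω) := by
  ext j
  refine (Equiv.addRight γ).exists_congr fun γ' => ?_
  rw [Equiv.coe_addRight, hα.map_add, add_left_inj]

theorem itinerary_mem_visit_zero (hα : IsFreeCocycle α) (ω : Ω) : itinerary α ω ∈ visit 0 :=
  ⟨0, hα.map_zero ω⟩

variable {P : Measure Ω}

theorem measure_preimage_neg_inter [VAddInvariantMeasure Γ Ω P] (hα : IsFreeCocycle α) (γ : Γ)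
    (m : ℤ) (E : Set Itinerary) :
    P (α (-γ) ⁻¹' {m} ∩ itinerary α ⁻¹' (shift m ⁻¹' E)) =
      P (α γ ⁻¹' {-m} ∩ itinerary α ⁻¹' E) := by
  rw [← measure_preimage_vadd P γ (α (-γ) ⁻¹' {m} ∩ _)]
  congr 1
  ext ω
  simp only [Set.mem_preimage, Set.mem_inter_iff, Set.mem_singleton_iff, hα.map_neg,
    neg_eq_iff_eq_neg, hα.itinerary_vadd, shift_shift]
  refine and_congr_right fun h => ?_
  rw [h, add_neg_cancel, shift_zero]

variable [Countable Γ]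

theorem measurable_itinerary (hα : IsFreeCocycle α) : Measurable (itinerary α) := by
  refine measurable_pi_iff.2 fun j => measurableSet_setOfPred.1 ?_
  change MeasurableSet (itinerary α ⁻¹' visit j)
  rw [preimage_itinerary_visit]
  exact MeasurableSet.iUnion fun γ => hα.measurable γ (measurableSet_singleton j)

theorem ae_map_itinerary_visit_zero (hα : IsFreeCocycle α) :
    ∀ᵐ x ∂P.map (itinerary α), x ∈ visit 0 :=
  (ae_map_iff (p := (· ∈ visit 0)) hα.measurable_itinerary.aemeasurable
    (measurableSet_visit 0)).2 (ae_of_all _ hα.itinerary_mem_visit_zero)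

theorem measure_preimage_visit_inter (hα : IsFreeCocycle α) (m : ℤ) {E : Set Ω}
    (hE : MeasurableSet E) : P (itinerary α ⁻¹' visit m ∩ E) = ∑' γ, P (α γ ⁻¹' {m} ∩ E) := by
  rw [preimage_itinerary_visit, Set.iUnion_inter, measure_iUnion]
  · exact fun γ γ' hne => Set.disjoint_left.2 fun ω h h' =>
      hne (hα.injective ω (h.1.trans h'.1.symm))
  · exact fun γ => (hα.measurable γ (measurableSet_singleton m)).inter hE

theorem map_itinerary_visit_eq_zero (hα : IsFreeCocycle α) {m : ℤ} (hm : ∀ γ ω, α γ ω ≠ m) :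
    P.map (itinerary α) (visit m) = 0 := by
  rw [Measure.map_apply hα.measurable_itinerary (measurableSet_visit m)]
  convert! measure_empty (μ := P)
  exact Set.eq_empty_of_forall_notMem fun ω ⟨γ, h⟩ => hm γ ω h

variable [VAddInvariantMeasure Γ Ω P]

theorem isPalm_map_itinerary (hα : IsFreeCocycle α) : IsPalm (P.map (itinerary α)) := by
  refine ⟨hα.ae_map_itinerary_visit_zero, fun m => ?_⟩
  ext E hE
  have hE' : MeasurableSet (shift m ⁻¹' E) := (shift m).measurable hE
  rw [MeasurableEquiv.map_apply, Measure.restrict_apply' (measurableSet_visit m),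
    Measure.restrict_apply' (measurableSet_visit (-m)), Set.inter_comm, Set.inter_comm E,
    Measure.map_apply hα.measurable_itinerary ((measurableSet_visit m).inter hE'),
    Measure.map_apply hα.measurable_itinerary ((measurableSet_visit (-m)).inter hE),
    Set.preimage_inter, Set.preimage_inter,
    hα.measure_preimage_visit_inter m (hα.measurable_itinerary hE'),
    hα.measure_preimage_visit_inter (-m) (hα.measurable_itinerary hE), ← (Equiv.neg Γ).tsum_eq]
  exact tsum_congr fun γ => hα.measure_preimage_neg_inter γ m E

/-- Infinitely many translates of the fibre over an itinerary have the same measure, and by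
aperiodicity they are disjoint. -/
theorem nullSingletonClass_map_itinerary [Infinite Γ] [MeasurableConstVAdd Γ Ω] [IsFiniteMeasure P]
    (hα : IsFreeCocycle α)
    (haper : ∀ ω m, shift m (itinerary α ω) = itinerary α ω → m = 0) :
    NullSingletonClass (P.map (itinerary α)) := by
  refine ⟨fun x => ?_⟩
  have hfib : MeasurableSet (itinerary α ⁻¹' {x}) :=
    hα.measurable_itinerary (measurableSet_singleton x)
  rw [Measure.map_apply hα.measurable_itinerary (measurableSet_singleton x)]
  by_contra hne
  obtain ⟨γ, γ', hγ, ω, h, h'⟩ := exists_nonempty_inter_of_measure_univ_lt_tsum_measure P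
    (s := fun γ : Γ => (γ +ᵥ ·) ⁻¹' (itinerary α ⁻¹' {x}))
    (fun γ => (measurable_const_vadd γ hfib).nullMeasurableSet) (by
      simp only [measure_preimage_vadd, ENNReal.tsum_const_eq_top_of_ne_zero hne, measure_lt_top])
  have heq : shift (α γ ω) (itinerary α ω) = shift (α γ' ω) (itinerary α ω) := by
    rw [← hα.itinerary_vadd, ← hα.itinerary_vadd]
    exact (h : itinerary α (γ +ᵥ ω) = x).trans (h' : itinerary α (γ' +ᵥ ω) = x).symm
  refine hγ (hα.injective ω (neg_add_eq_zero.1 (haper ω _ ?_)).symm)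
  rw [← shift_shift, heq, shift_shift, neg_add_cancel, shift_zero]

end IsFreeCocycle

end Cocycle

/-! ### Cartesian powers -/

/-- The diagonal transformation `T × ⋯ × T` of a Cartesian power. -/
def diag {X : Type*} (ι : Type*) (T : X → X) : (ι → X) → ι → X := Pi.map fun _ => T

/-- The parametrization of the box `∏ i, visit (-m i)` by the Cartesian power of the base. -/
def box {ι Γ Ω : Type*} (α : Γ → Ω → ℤ) (m : ι → ℤ) (ω : ι → Ω) : ι → Itinerary :=
  fun i => shift (m i) (itinerary α (ω i))

theorem diag_shift_iterate_box {ι Γ Ω : Type*} (α : Γ → Ω → ℤ) (m : ι → ℤ) (n : ℕ) (ω : ι → Ω) :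
    (diag ι (shift 1))^[n] (box α m ω) = box α (fun i => n + m i) ω := by
  rw [diag, Pi.map_iterate, shift_one_iterate]
  exact funext fun i => shift_shift _ _ _

theorem forall_periodic_of_forall_single {ι β : Type*} [Finite ι] [DecidableEq ι]
    {f : (ι → ℤ) → β} (hf : ∀ i, Periodic f (Pi.single i 1)) (v : ι → ℤ) : Periodic f v := by
  cases nonempty_fintype ι
  rw [← Finset.univ_sum_single v]
  refine Finset.sum_induction _ (Periodic f) (fun _ _ => Periodic.add_period) ?_ fun i _ => ?_
  · exact fun x => congrArg f (add_zero x)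
  · simpa [← Pi.single_smul] using (hf i).zsmul (v i)

section Box

variable {ι Γ Ω : Type*} [AddGroup Γ] [AddAction Γ Ω] [MeasurableSpace Ω] {α : Γ → Ω → ℤ}

theorem IsFreeCocycle.box_vadd (hα : IsFreeCocycle α) (m : ι → ℤ) (γ : ι → Γ) (ω : ι → Ω) :
    box α m (γ +ᵥ ω) = box α (fun i => m i + α (γ i) (ω i)) ω := by
  funext i
  exact (congrArg _ (hα.itinerary_vadd _ _)).trans (shift_shift _ _ _)

variable [Countable Γ]

theorem IsFreeCocycle.measurable_box (hα : IsFreeCocycle α) (m : ι → ℤ) : Measurable (box α m) :=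
  measurable_pi_iff.2 fun i =>
    (shift (m i)).measurable.comp (hα.measurable_itinerary.comp (measurable_pi_apply i))

variable [Fintype ι] {P : Measure Ω} [IsFiniteMeasure P] {μ : Measure Itinerary}

namespace IsSuspension

theorem map_box (hμ : IsSuspension (P.map (itinerary α)) μ) (hα : IsFreeCocycle α) (m : ι → ℤ) :
    (Measure.pi fun _ => P).map (box α m) =
      (Measure.pi fun _ => μ).restrict (Set.univ.pi fun i => visit (-m i)) := by
  have := hμ.sigmaFinite
  have hcoord : ∀ i, Measurable (shift (m i) ∘ itinerary α) := fun i =>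
    (shift (m i)).measurable.comp hα.measurable_itinerary
  rw [Measure.restrict_pi_pi]
  simp only [hμ.restrict_visit, neg_neg, Measure.map_map (shift _).measurable
    hα.measurable_itinerary]
  exact Measure.pi_map_pi fun i => (hcoord i).aemeasurable

theorem quasiMeasurePreserving_box (hμ : IsSuspension (P.map (itinerary α)) μ)
    (hα : IsFreeCocycle α) (m : ι → ℤ) :
    Measure.QuasiMeasurePreserving (box α m) (Measure.pi fun _ => P) (Measure.pi fun _ => μ) :=
  ⟨hα.measurable_box m, by
    rw [hμ.map_box hα]; exact Measure.restrict_le_self.absolutelyContinuous⟩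

theorem ae_pi_of_forall_ae_box (hμ : IsSuspension (P.map (itinerary α)) μ)
    (hα : IsFreeCocycle α) {A : Set (ι → Itinerary)} (hA : MeasurableSet A)
    (h : ∀ m, ∀ᵐ ω ∂Measure.pi fun _ => P, box α m ω ∈ A) :
    ∀ᵐ x ∂Measure.pi fun _ => μ, x ∈ A := by
  have := hμ.sigmaFinite
  have hvisit : ∀ᵐ x ∂Measure.pi fun _ : ι => μ, ∀ i, ∃ j, x i ∈ visit j :=
    ae_all_iff.2 fun i =>
      (Measure.quasiMeasurePreserving_eval (fun _ => μ) i).ae hμ.ae_exists_visit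
  have hbox : ∀ m : ι → ℤ, ∀ᵐ x ∂Measure.pi fun _ => μ,
      x ∈ Set.univ.pi (fun i => visit (m i)) → x ∈ A := by
    intro m
    rw [← ae_restrict_iff' (MeasurableSet.univ_pi fun i => measurableSet_visit (m i))]
    have := (ae_map_iff (p := (· ∈ A)) (hα.measurable_box (-m)).aemeasurable hA).2 (h (-m))
    simpa only [hμ.map_box hα, Pi.neg_apply, neg_neg] using this
  filter_upwards [hvisit, ae_all_iff.2 hbox] with x hx hxA
  choose m hm using hx
  exact hxA m fun i _ => hm i

theorem isErgodicMap_diag [ErgodicVAdd (ι → Γ) (ι → Ω) (Measure.pi fun _ => P)]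
    [DecidableEq ι] (hμ : IsSuspension (P.map (itinerary α)) μ) (hα : IsFreeCocycle α)
    (hmove : ∀ A, MeasurableSet A → diag ι (shift 1) ⁻¹' A =ᵐ[Measure.pi fun _ => μ] A →
      ∀ i m, box α (m + Pi.single i 1) ⁻¹' A =ᵐ[Measure.pi fun _ => P] box α m ⁻¹' A) :
    IsErgodicMap (Measure.pi fun _ => μ) (diag ι (shift 1)) := by
  intro A hA hinv
  rw [measure_symmDiff_eq_zero_iff] at hinv
  let germ (m : ι → ℤ) : Germ (ae (Measure.pi fun _ : ι => P)) Prop :=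
    Germ.ofFun fun ω => box α m ω ∈ A
  have hperiodic : ∀ v, Periodic germ v :=
    forall_periodic_of_forall_single fun i m => Germ.coe_eq.2 (hmove A hA hinv i m)
  have hbox : ∀ᵐ ω ∂Measure.pi fun _ => P, ∀ m, box α m ω ∈ A ↔ box α 0 ω ∈ A :=
    ae_all_iff.2 fun m => by
      have hm : germ m = germ 0 := by rw [← hperiodic m 0, zero_add]
      exact (Germ.coe_eq.1 hm).mem_iff
  have hconst : EventuallyConst (box α 0 ⁻¹' A) (ae (Measure.pi fun _ => P)) := by
    refine ErgodicVAdd.aeconst_of_forall_preimage_vadd_ae_eq (G := ι → Γ)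
      (hα.measurable_box 0 hA) fun γ => ?_
    filter_upwards [hbox] with ω hω
    have hγ : box α 0 (γ +ᵥ ω) ∈ A ↔ box α 0 ω ∈ A := by rw [hα.box_vadd, hω]
    exact propext hγ
  rcases eventuallyConst_set.1 hconst with h | h
  · refine .inr (hμ.ae_pi_of_forall_ae_box hα hA fun m => ?_)
    filter_upwards [hbox, h] with ω hω h using (hω m).2 h
  · refine .inl (measure_eq_zero_iff_ae_notMem.2
      (hμ.ae_pi_of_forall_ae_box hα hA.compl fun m => ?_))
    filter_upwards [hbox, h] with ω hω h using fun hm => h ((hω m).1 hm)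

end IsSuspension

end Box

/-! ### Small translations -/

section SmallTranslations

variable {M X κ ι : Type*} [AddGroup M] [AddAction M X] [MeasurableSpace X] {μ : Measure X}
  [VAddInvariantMeasure M X μ]

theorem measure_le_sum_of_forall_exists_vadd_mem [Fintype ι] {u : ι → M} {C : Set X}
    (hu : ∀ x, ∃ i, u i +ᵥ x ∈ C) (E : Set X) :
    μ E ≤ ∑ i, (μ (E ∩ C) + μ (((u i +ᵥ ·) ⁻¹' E) ∆ E)) := by
  calc
    μ E ≤ μ (⋃ i, E ∩ (u i +ᵥ ·) ⁻¹' C) :=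
      measure_mono fun x hx => Set.mem_iUnion.2 <| (hu x).imp fun i hi => ⟨hx, hi⟩
    _ ≤ ∑ i, μ (E ∩ (u i +ᵥ ·) ⁻¹' C) := measure_iUnion_fintype_le _ _
    _ ≤ _ := Finset.sum_le_sum fun i _ => ?_
  calc
    μ (E ∩ (u i +ᵥ ·) ⁻¹' C)
      ≤ μ ((u i +ᵥ ·) ⁻¹' (E ∩ C) ∪ ((u i +ᵥ ·) ⁻¹' E) ∆ E) := measure_mono fun x hx =>
        (em (u i +ᵥ x ∈ E)).imp (fun h => ⟨h, hx.2⟩) fun h => .inr ⟨hx.1, h⟩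
    _ ≤ μ ((u i +ᵥ ·) ⁻¹' (E ∩ C)) + μ (((u i +ᵥ ·) ⁻¹' E) ∆ E) := measure_union_le _ _
    _ = μ (E ∩ C) + μ (((u i +ᵥ ·) ⁻¹' E) ∆ E) := by rw [measure_preimage_vadd]

variable [TopologicalSpace M] [TopologicalSpace X] [R1Space X] [BorelSpace X] [ContinuousVAdd M X]
  [IsFiniteMeasure μ] [μ.InnerRegularCompactLTTop] {l : Filter κ}

theorem tendsto_measure_preimage_vadd_symmDiff {g : κ → M} (hg : Tendsto g l (𝓝 0)) {s : Set X}
    (hs : MeasurableSet s) : Tendsto (fun k => μ (((g k +ᵥ ·) ⁻¹' s) ∆ s)) l (𝓝 0) := by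
  let act : C(M × X, X) := ⟨fun p => p.1 +ᵥ p.2, continuous_vadd⟩
  have hact : Tendsto (fun k => act.curry (g k)) l (𝓝 (act.curry 0)) :=
    (act.curry.continuous.tendsto 0).comp hg
  have hact₀ : act.curry 0 ⁻¹' s = s := Set.ext fun x => by simp [act]
  have := tendsto_measure_symmDiff_preimage_nhds_zero hact
    (Eventually.of_forall fun k => measurePreserving_vadd (g k) μ) (measurePreserving_vadd 0 μ)
    hs.nullMeasurableSet (measure_ne_top _ _)
  rwa [hact₀] at this

/-- The points of `C k` in `A ∆ B` are moved by the small translation `t k` across the boundary of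
`B`, and every point can be brought into `C k` by one of the small translations `u i k`. -/
theorem ae_eq_of_tendsto_zero_of_mem_iff_vadd_mem [l.NeBot] [Finite ι] {t : κ → M}
    (ht : Tendsto t l (𝓝 0)) {u : ι → κ → M} (hu : ∀ i, Tendsto (u i) l (𝓝 0)) {C : κ → Set X}
    (hC : ∀ k x, ∃ i, u i k +ᵥ x ∈ C k) {A B : Set X} (hA : MeasurableSet A)
    (hB : MeasurableSet B) (hAB : ∀ k, ∀ᵐ x ∂μ, x ∈ C k → (x ∈ A ↔ t k +ᵥ x ∈ B)) :
    A =ᵐ[μ] B := by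
  cases nonempty_fintype ι
  have hE : MeasurableSet (A ∆ B) := hA.symmDiff hB
  have hEC : ∀ k, μ (A ∆ B ∩ C k) ≤ μ (((t k +ᵥ ·) ⁻¹' B) ∆ B) := by
    refine fun k => measure_mono_ae ?_
    filter_upwards [hAB k] with x hx ⟨hxE, hxC⟩
    exact hxE.imp (fun h => ⟨(hx hxC).1 h.1, h.2⟩) fun h => ⟨h.1, fun h' => h.2 ((hx hxC).2 h')⟩
  have hle : ∀ k, μ (A ∆ B) ≤ ∑ i,
      (μ (((t k +ᵥ ·) ⁻¹' B) ∆ B) + μ (((u i k +ᵥ ·) ⁻¹' (A ∆ B)) ∆ (A ∆ B))) := fun k =>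
    (measure_le_sum_of_forall_exists_vadd_mem (hC k) _).trans <|
      Finset.sum_le_sum fun i _ => add_le_add_left (hEC k) _
  have hlim := tendsto_finsetSum Finset.univ fun i (_ : i ∈ Finset.univ) =>
    (tendsto_measure_preimage_vadd_symmDiff (μ := μ) ht hB).add
      (tendsto_measure_preimage_vadd_symmDiff (μ := μ) (hu i) hE)
  rw [← measure_symmDiff_eq_zero_iff, ← nonpos_iff_eq_zero]
  simpa using ge_of_tendsto' hlim hle

end SmallTranslations

/-! ### Digit sequences -/

instance {ι Γ Ω : Type*} [AddMonoid Γ] [TopologicalSpace Ω] [AddAction Γ Ω]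
    [AddAction.IsMinimal Γ Ω] : AddAction.IsMinimal (ι → Γ) (ι → Ω) :=
  ⟨fun ω => DenseRange.piMap fun i => denseRange_vadd Γ (ω i)⟩

section Digits

variable {G : Type*} [AddGroup G]

/-- Finitely supported sequences of digits act by translation on all sequences of digits. -/
noncomputable instance : AddAction (ℕ →₀ G) (ℕ → G) :=
  AddAction.compHom _ (Finsupp.coeFnAddHom (M := G))

theorem finsupp_vadd_def (γ : ℕ →₀ G) (ω : ℕ → G) : γ +ᵥ ω = ⇑γ + ω := rfl

instance : VAddAssocClass (ℕ →₀ G) (ℕ → G) (ℕ → G) := ⟨fun γ ω ω' => add_assoc ⇑γ ω ω'⟩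

instance [TopologicalSpace G] : AddAction.IsMinimal (ℕ →₀ G) (ℕ → G) := by
  refine ⟨fun ω ω' => mem_closure_of_tendsto (b := atTop)
    (f := fun N => Finsupp.indicator (Finset.range N) (fun k _ => ω' k - ω k) +ᵥ ω)
    (tendsto_pi_nhds.2 fun l => tendsto_const_nhds.congr' ?_)
    (Eventually.of_forall fun N => ⟨_, rfl⟩)⟩
  filter_upwards [eventually_gt_atTop l] with N hN
  simp [finsupp_vadd_def, Finsupp.indicator_apply, hN]

theorem tendsto_piSingle_nhds_zero [TopologicalSpace G] (g : G) :
    Tendsto (fun k => (Pi.single k g : ℕ → G)) atTop (𝓝 0) := by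
  refine tendsto_pi_nhds.2 fun l => tendsto_const_nhds.congr' ?_
  filter_upwards [eventually_gt_atTop l] with k hk
  rw [Pi.single_eq_of_ne hk.ne, Pi.zero_apply]

section Measure

variable [MeasurableSpace G] [MeasurableAdd G]

instance : MeasurableConstVAdd (ℕ →₀ G) (ℕ → G) := ⟨fun γ => measurable_const_add ⇑γ⟩

instance (P : Measure (ℕ → G)) [P.IsAddLeftInvariant] :
    VAddInvariantMeasure (ℕ →₀ G) (ℕ → G) P :=
  ⟨fun γ _ _ => measure_preimage_add P ⇑γ _⟩

end Measure

instance {ι : Type*} [Fintype ι] [MeasurableSpace G] [TopologicalSpace G] [IsTopologicalAddGroup G]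
    [CompactSpace G] [SecondCountableTopology G] [BorelSpace G] (P : Measure (ℕ → G))
    [IsFiniteMeasure P] [P.IsAddLeftInvariant] :
    ErgodicVAdd (ι → ℕ →₀ G) (ι → ℕ → G) (Measure.pi fun _ => P) :=
  have : (Measure.pi fun _ : ι => P).IsAddLeftInvariant := Measure.pi.isAddLeftInvariant _
  .trans_isMinimal _ (ι → ℕ → G)

/-- The time needed to go from `ω` to `γ +ᵥ ω`, if the copy of the `k`-th column that has the digit
`d` stands at the height `h k d` in the next column. -/
def travelTime (h : ℕ → G → ℤ) (γ : ℕ →₀ G) (ω : ℕ → G) : ℤ :=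
  ∑ k ∈ γ.support, (h k (γ k + ω k) - h k (ω k))

variable {h : ℕ → G → ℤ}

theorem travelTime_eq_sum {γ : ℕ →₀ G} {s : Finset ℕ} (hs : γ.support ⊆ s) (ω : ℕ → G) :
    travelTime h γ ω = ∑ k ∈ s, (h k (γ k + ω k) - h k (ω k)) := by
  refine Finset.sum_subset hs fun k _ hk => ?_
  rw [Finsupp.notMem_support_iff.1 hk, zero_add, sub_self]

theorem travelTime_zero (ω : ℕ → G) : travelTime h 0 ω = 0 := rfl

theorem travelTime_single (k : ℕ) (g : G) (ω : ℕ → G) :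
    travelTime h (Finsupp.single k g) ω = h k (g + ω k) - h k (ω k) := by
  rw [travelTime_eq_sum Finsupp.support_single_subset, Finset.sum_singleton,
    Finsupp.single_eq_same]

theorem travelTime_add (γ γ' : ℕ →₀ G) (ω : ℕ → G) :
    travelTime h (γ + γ') ω = travelTime h γ (γ' +ᵥ ω) + travelTime h γ' ω := by
  classical
  rw [travelTime_eq_sum Finsupp.support_add, travelTime_eq_sum Finset.subset_union_left,
    travelTime_eq_sum Finset.subset_union_right, ← Finset.sum_add_distrib]
  refine Finset.sum_congr rfl fun k _ => ?_
  rw [Finsupp.add_apply, add_assoc, finsupp_vadd_def, Pi.add_apply, sub_add_sub_cancel]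

theorem measurable_travelTime [MeasurableSpace G] [MeasurableAdd G] (hh : ∀ k, Measurable (h k))
    (γ : ℕ →₀ G) : Measurable (travelTime h γ) :=
  Finset.measurable_fun_sum _ fun k _ =>
    ((hh k).comp <| (measurable_const_add (γ k)).comp <| measurable_pi_apply k).sub <|
      (hh k).comp (measurable_pi_apply k)

end Digits

/-! ### Heights of the columns -/

section Lacunary

variable {R : Type*} [CommRing R] [LinearOrder R] [IsStrictOrderedRing R] {b q j : R} {c : ℕ → R}

theorem abs_add_sum_range_le (hj : |j| ≤ b) (hc : ∀ k, |c k| ≤ b * (q - 1) * q ^ k) (n : ℕ) :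
    |j + ∑ k ∈ Finset.range n, c k| ≤ b * q ^ n := by
  induction n with
  | zero => simpa using hj
  | succ n ih =>
    rw [Finset.sum_range_succ, ← add_assoc]
    calc
      |j + ∑ k ∈ Finset.range n, c k + c n| ≤ b * q ^ n + b * (q - 1) * q ^ n :=
        (abs_add_le _ _).trans (add_le_add ih (hc n))
      _ = b * q ^ (n + 1) := by ring

theorem eq_zero_of_add_sum_range_eq_zero (hj : |j| ≤ b) (hc : ∀ k, |c k| ≤ b * (q - 1) * q ^ k)
    (hlt : ∀ k, c k ≠ 0 → b * q ^ k < |c k|) {n : ℕ} (h : j + ∑ k ∈ Finset.range n, c k = 0) :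
    j = 0 ∧ ∀ k < n, c k = 0 := by
  induction n with
  | zero => simpa using h
  | succ n ih =>
    rw [Finset.sum_range_succ, ← add_assoc] at h
    have hcn : c n = 0 := by
      by_contra hne
      refine (hlt n hne).not_ge ?_
      rw [eq_neg_of_add_eq_zero_right h, abs_neg]
      exact abs_add_sum_range_le hj hc n
    rw [hcn, add_zero] at h
    exact ⟨(ih h).1, Nat.forall_lt_succ_right.2 ⟨(ih h).2, hcn⟩⟩

end Lacunary

/-- The leading coefficients of the heights. Their positive differences are `1, 9, 10, 11`, and none
of these is twice another. -/
def lead : ZMod 4 → ℤ := (![0, 1, 10, 11] : Fin 4 → ℤ)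

/-- The bounded terms of the heights. They make the differences of height between the digits `0, 1`
and between the digits `2, 3` differ by one. -/
def pert : ZMod 4 → ℤ := (![0, 0, 0, -1] : Fin 4 → ℤ)

/-- The four copies of the `k`-th column stand at the heights `0, a, 10 a, 11 a - 1` in the next
one, where `a = 100 ^ (k + 1)`. -/
def height (k : ℕ) (d : ZMod 4) : ℤ := 100 ^ (k + 1) * lead d + pert d

theorem height_zero_add_one_sub (k : ℕ) : height k (1 + 0) - height k 0 = 100 ^ (k + 1) := by
  simp [height, lead, pert]

theorem height_two_add_one_sub (k : ℕ) : height k (1 + 2) - height k 2 = 100 ^ (k + 1) - 1 := by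
  rw [height, height, show lead (1 + 2) = 11 from rfl, show lead 2 = 10 from rfl,
    show pert (1 + 2) = -1 from rfl, show pert 2 = 0 from rfl]
  ring

theorem abs_two_mul_lead_sub_le : ∀ u v u' v' : ZMod 4,
    |2 * (lead u - lead v) - (lead u' - lead v')| ≤ 33 := by
  decide

theorem abs_two_mul_pert_sub_le : ∀ u v u' v' : ZMod 4,
    |2 * (pert u - pert v) - (pert u' - pert v')| ≤ 3 := by
  decide

theorem two_mul_lead_sub_ne_zero : ∀ u v u' v' : ZMod 4, ¬ (u = v ∧ u' = v') →
    2 * (lead u - lead v) - (lead u' - lead v') ≠ 0 := by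
  decide

theorem two_mul_height_sub (k : ℕ) (u v u' v' : ZMod 4) :
    2 * (height k u - height k v) - (height k u' - height k v') =
      100 ^ (k + 1) * (2 * (lead u - lead v) - (lead u' - lead v')) +
        (2 * (pert u - pert v) - (pert u' - pert v')) := by
  simp only [height]
  ring

theorem abs_two_mul_height_sub_le (k : ℕ) (u v u' v' : ZMod 4) :
    |2 * (height k u - height k v) - (height k u' - height k v')| ≤ 34 * (100 - 1) * 100 ^ k := by
  have hpow : (1 : ℤ) ≤ 100 ^ k := one_le_pow₀ (by norm_num)
  rw [two_mul_height_sub]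
  refine (abs_add_le _ _).trans ?_
  rw [abs_mul, abs_of_nonneg (by positivity), pow_succ]
  nlinarith [abs_two_mul_lead_sub_le u v u' v', abs_two_mul_pert_sub_le u v u' v']

theorem lt_abs_two_mul_height_sub (k : ℕ) {u v u' v' : ZMod 4} (h : ¬ (u = v ∧ u' = v')) :
    34 * 100 ^ k < |2 * (height k u - height k v) - (height k u' - height k v')| := by
  have hpow : (1 : ℤ) ≤ 100 ^ k := one_le_pow₀ (by norm_num)
  have hlead := Int.one_le_abs (two_mul_lead_sub_ne_zero u v u' v' h)
  rw [two_mul_height_sub]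
  refine lt_of_lt_of_le ?_ (abs_sub_abs_le_abs_add _ _)
  rw [abs_mul, abs_of_nonneg (by positivity), pow_succ]
  nlinarith [abs_two_mul_pert_sub_le u v u' v']

theorem eq_zero_of_travelTime_eq_two_mul_add {γ γ' : ℕ →₀ ZMod 4} {ω ω' : ℕ → ZMod 4} {j : ℤ}
    (hj : |j| ≤ 1) (h : travelTime height γ' ω' = 2 * travelTime height γ ω + j) :
    j = 0 ∧ γ = 0 ∧ γ' = 0 := by
  obtain ⟨N, hN⟩ := (γ.support ∪ γ'.support).exists_nat_subset_range
  rw [travelTime_eq_sum (Finset.subset_union_left.trans hN),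
    travelTime_eq_sum (Finset.subset_union_right.trans hN), Finset.mul_sum, eq_comm,
    ← sub_eq_zero, add_sub_right_comm, ← Finset.sum_sub_distrib, add_comm] at h
  obtain ⟨hj₀, hc⟩ := eq_zero_of_add_sum_range_eq_zero (hj.trans (by norm_num))
    (fun k => abs_two_mul_height_sub_le k _ _ _ _)
    (fun k hk => lt_abs_two_mul_height_sub k fun ⟨h, h'⟩ => hk (by rw [h, h']; ring)) h
  have hγ : ∀ k < N, γ k = 0 ∧ γ' k = 0 := by
    intro k hk
    by_contra hne
    have := lt_abs_two_mul_height_sub k (u := γ k + ω k) (v := ω k) (u' := γ' k + ω' k)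
      (v' := ω' k) (by rwa [add_eq_right, add_eq_right])
    rw [hc k hk, abs_zero] at this
    exact this.not_ge (by positivity)
  have hsupp : ∀ k, k ∈ γ.support ∪ γ'.support → γ k = 0 ∧ γ' k = 0 := fun k hk =>
    hγ k (Finset.mem_range.1 (hN hk))
  simp only [Finset.mem_union, Finsupp.mem_support_iff] at hsupp
  exact ⟨hj₀, Finsupp.ext fun k => by_contra fun hk => hk (hsupp k (.inl hk)).1,
    Finsupp.ext fun k => by_contra fun hk => hk (hsupp k (.inr hk)).2⟩

theorem isFreeCocycle_travelTime_height : IsFreeCocycle (travelTime height) where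
  measurable := measurable_travelTime fun _ => .of_discrete
  map_add := travelTime_add
  eq_zero_of_apply_eq_zero γ ω h :=
    (eq_zero_of_travelTime_eq_two_mul_add (γ' := 0) (ω' := ω) (j := 0) (by simp)
      (by rw [h, travelTime_zero, mul_zero, add_zero])).2.1

instance : Infinite (ℕ →₀ ZMod 4) :=
  .of_injective _ (Finsupp.single_left_injective (by decide : (1 : ZMod 4) ≠ 0))

theorem eq_zero_of_shift_itinerary_eq (ω : ℕ → ZMod 4) (m : ℤ)
    (h : shift m (itinerary (travelTime height) ω) = itinerary (travelTime height) ω) : m = 0 := by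
  have hvisit : ∀ j, itinerary (travelTime height) ω j →
      itinerary (travelTime height) ω (j + m) := fun j hj => by
    rwa [← shift_apply m (itinerary _ ω), h]
  obtain ⟨γ, hγ⟩ := hvisit 0 ⟨0, travelTime_zero ω⟩
  obtain ⟨γ', hγ'⟩ := hvisit _ ⟨γ, hγ⟩
  rw [zero_add] at hγ hγ'
  obtain ⟨-, rfl, -⟩ := eq_zero_of_travelTime_eq_two_mul_add (j := 0) (by simp)
    (hγ'.trans (by rw [hγ, two_mul, add_zero]))
  exact hγ.symm.trans (travelTime_zero ω)

theorem map_itinerary_visit_eq_zero_or (P : Measure (ℕ → ZMod 4)) {p j : ℤ} (hj : |j| ≤ 1)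
    (hpj : p ≠ 0 ∨ j ≠ 0) :
    P.map (itinerary (travelTime height)) (visit p) = 0 ∨
      P.map (itinerary (travelTime height)) (visit (2 * p + j)) = 0 := by
  refine or_iff_not_imp_left.2 fun hp =>
    isFreeCocycle_travelTime_height.map_itinerary_visit_eq_zero fun γ' ω' h' => hp ?_
  refine isFreeCocycle_travelTime_height.map_itinerary_visit_eq_zero fun γ ω h => ?_
  obtain ⟨hj₀, rfl, -⟩ := eq_zero_of_travelTime_eq_two_mul_add hj (h ▸ h')
  exact hpj.elim (· (h.symm.trans (travelTime_zero ω))) (· hj₀)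

theorem box_add_single_piSingle_vadd {ι : Type*} [DecidableEq ι] (m : ι → ℤ) (i : ι) (k : ℕ)
    {ω : ι → ℕ → ZMod 4} (hω : ∀ l, ω l k = if l = i then 2 else 0) :
    box (travelTime height) (m + Pi.single i 1)
        ((fun _ : ι => (Pi.single k 1 : ℕ → ZMod 4)) +ᵥ ω) =
      (diag ι (shift 1))^[100 ^ (k + 1)] (box (travelTime height) m ω) := by
  have hvadd : (fun _ : ι => (Pi.single k 1 : ℕ → ZMod 4)) +ᵥ ω =
      (fun _ : ι => Finsupp.single k (1 : ZMod 4)) +ᵥ ω := by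
    funext l
    exact congrArg (· + ω l) (Finsupp.single_eq_pi_single k 1).symm
  rw [hvadd, isFreeCocycle_travelTime_height.box_vadd, diag_shift_iterate_box]
  congr 1
  funext l
  rw [travelTime_single, hω l, Pi.add_apply]
  push_cast
  split_ifs with hl
  · rw [hl, Pi.single_eq_same, height_two_add_one_sub]
    ring
  · rw [Pi.single_eq_of_ne hl, height_zero_add_one_sub]
    ring

/-! ### Haar measure on digit sequences -/

/-- The Haar probability measure on the compact group of digit sequences. -/
noncomputable def haar : Measure (ℕ → ZMod 4) := Measure.addHaarMeasure ⊤

instance : IsProbabilityMeasure haar :=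
  ⟨Measure.addHaarMeasure_self (K₀ := (⊤ : TopologicalSpace.PositiveCompacts (ℕ → ZMod 4)))⟩

instance : haar.IsAddLeftInvariant :=
  inferInstanceAs (Measure.addHaarMeasure ⊤).IsAddLeftInvariant

theorem IsSuspension.preimage_box_add_single_ae_eq
    {ι : Type*} [Fintype ι] [DecidableEq ι] {μ : Measure Itinerary}
    (hμ : IsSuspension (haar.map (itinerary (travelTime height))) μ) {A : Set (ι → Itinerary)}
    (hA : MeasurableSet A) (hinv : diag ι (shift 1) ⁻¹' A =ᵐ[Measure.pi fun _ => μ] A) (i : ι)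
    (m : ι → ℤ) :
    box (travelTime height) (m + Pi.single i 1) ⁻¹' A =ᵐ[Measure.pi fun _ => haar]
      box (travelTime height) m ⁻¹' A := by
  have hα := isFreeCocycle_travelTime_height
  have := hμ.sigmaFinite
  have hdiag : Measure.QuasiMeasurePreserving (diag ι (shift 1)) (Measure.pi fun _ => μ)
      (Measure.pi fun _ => μ) :=
    (measurePreserving_pi _ _ fun _ => hμ.measurePreserving_shift 1).quasiMeasurePreserving
  refine (ae_eq_of_tendsto_zero_of_mem_iff_vadd_mem (M := ι → ℕ → ZMod 4) (l := atTop)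
    (t := fun k _ => Pi.single k 1) (u := fun (v : ι → ZMod 4) k l => Pi.single k (v l))
    (C := fun k => {ω | ∀ l, ω l k = if l = i then 2 else 0})
    (tendsto_pi_nhds.2 fun _ => tendsto_piSingle_nhds_zero 1)
    (fun v => tendsto_pi_nhds.2 fun l => tendsto_piSingle_nhds_zero (v l))
    (fun k ω => ⟨fun l => (if l = i then 2 else 0) - ω l k, fun l => ?_⟩)
    (hα.measurable_box m hA) (hα.measurable_box _ hA) fun k => ?_).symm
  · simp
  · have hiter := (hμ.quasiMeasurePreserving_box hα m).ae_eq_comp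
      (hdiag.preimage_iterate_ae_eq (100 ^ (k + 1)) hinv)
    filter_upwards [hiter] with ω hω hωC
    rw [Set.mem_preimage, Set.mem_preimage, box_add_single_piSingle_vadd m i k hωC]
    exact Iff.of_eq hω.symm

end InfiniteErgodicIndex

open InfiniteErgodicIndex

theorem stmt9 :
    ∃ (X : Type) (_ : MeasurableSpace X) (_ : StandardBorelSpace X)
      (μ : Measure X) (_ : NoAtoms μ) (_ : SigmaFinite μ) (T : X ≃ᵐ X),
      μ Set.univ = ⊤ ∧ MeasurePreserving T μ μ ∧
      (∀ n : ℕ, 0 < n →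
        IsErgodicMap (Measure.pi fun _ : Fin n => μ)
          (fun x : Fin n → X => fun i => T (x i))) ∧
      ¬ IsConservativeMap (μ.prod μ) (fun z : X × X => (T z.1, T (T z.2))) ∧
      ¬ (∀ (n : ℕ) (e : Fin n → ℤ), 0 < n → (∀ i, e i ≠ 0) →
          IsErgodicMap (Measure.pi fun _ : Fin n => μ)
            (fun x : Fin n → X => fun i => ((T.toEquiv : Equiv.Perm X) ^ e i) (x i))) := by
  have hα := isFreeCocycle_travelTime_height
  obtain ⟨μ, hμ⟩ := (hα.isPalm_map_itinerary (P := haar)).exists_isSuspension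
  have : IsProbabilityMeasure (haar.map (itinerary (travelTime height))) :=
    Measure.isProbabilityMeasure_map hα.measurable_itinerary.aemeasurable
  have : NullSingletonClass (haar.map (itinerary (travelTime height))) :=
    hα.nullSingletonClass_map_itinerary eq_zero_of_shift_itinerary_eq
  have : SigmaFinite μ := hμ.sigmaFinite
  have hcons := hμ.not_isConservativeMap_prodSq fun p hp => by
    simpa using map_itinerary_visit_eq_zero_or haar (p := p) (j := 0) (by simp) (.inl hp.ne')
  have herg := hμ.not_isErgodicMap_prodSq fun p =>
    map_itinerary_visit_eq_zero_or haar (p := p) (j := -1) (by simp) (.inr (by simp))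
  refine ⟨Itinerary, inferInstance, inferInstance, μ, hμ.nullSingletonClass, inferInstance, shift 1,
    measure_univ_eq_top_of_not_isConservativeMap_prodSq (hμ.measurePreserving_shift 1) hcons,
    hμ.measurePreserving_shift 1, fun n _ => hμ.isErgodicMap_diag hα fun A hA hinv =>
      hμ.preimage_box_add_single_ae_eq hA hinv, hcons, fun h => herg ?_⟩
  exact isErgodicMap_prodSq_of_isErgodicMap_pi_zpow
    (h 2 ![1, 2] two_pos (by simp [Fin.forall_fin_two]))
end

section
/- There exists a standard Borel space X with a nonatomic σ-finite Borel measure μ satisfying μ(X) = ∞, an invertible measure-preserving transformation T : X → X that is conservative and ergodic, natural numbers p, q with 0 < p < q, and a measurable set A with μ(A) > 0, such that for every nonzero integer i, μ(T^{p i} A ∩ T^{q i} A ∩ A) = 0. In particular, T is not multiply recurrent: there is no positive integer n with μ(A ∩ T^{−p n} A ∩ T^{−q n} A) > 0. -/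
open MeasureTheory

/-!
Take `T` to be the odometer `x ↦ x + 1` on the 2-adic integers, written in binary digits, and `μ`
the Haar measure of the group, under digitwise addition mod 2, of the digit sequences with only
finitely many nonzero odd digits. Off one point, `T x` differs from `x` in finitely many digits, and
flipping finitely many digits preserves `μ`; hence so does `T`. Conversely, of two sequences that
differ in digit `k` only, one is the image of the other under `T^(2^k)`. A `T`-invariant set is
therefore invariant under a dense group of translations, and Steinhaus' theorem makes it null or
conull. The same theorem provides, in any set of positive measure, two points that differ in a
single digit, so `T` is conservative. For the recurrence let `A` be the set of sequences whose odd
digits all vanish. If `i = 2^k * j` with `j` odd, then `T^i` flips digit `k`, so `T^i A` is disjoint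
from `A` when `k` is odd. Since the 2-adic valuations of `i` and `2 * i` differ by one,
`T^i A ∩ T^(2 * i) A ∩ A = ∅`.
-/

open Filter Function Set Topology

section General

variable {X : Type*} [MeasurableSpace X] {μ : Measure X}

lemma isConservativeMap_of_conservative {f : X → X} (hf : Conservative f μ) :
    IsConservativeMap μ f := by
  intro A hA hpos
  obtain ⟨n, hn, hne⟩ := hf.exists_gt_measure_inter_ne_zero hA.nullMeasurableSet hpos.ne' 0
  exact ⟨n, hn, by rwa [inter_comm, pos_iff_ne_zero]⟩

lemma isErgodicMap_of_quasiErgodic {f : X → X} (hf : QuasiErgodic f μ) :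
    IsErgodicMap μ f := fun A hA hinv => by
  simpa using hf.ae_empty_or_univ₀ hA.nullMeasurableSet (measure_symmDiff_eq_zero_iff.1 hinv)

-- Cut `X` into pieces on each of which `f` agrees with one `g i`. As `f` is injective, the images
-- of the pieces are disjoint.
lemma map_le_self_of_ae_exists_eq {ι : Type*} [Countable ι] [Nonempty ι] [MeasurableEq X]
    {f : X → X} (hf : MeasurableEmbedding f) {g : ι → X → X}
    (hg : ∀ i, MeasurePreserving (g i) μ μ) (h : ∀ᵐ x ∂μ, ∃ i, f x = g i x) : μ.map f ≤ μ := by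
  obtain ⟨u, hu⟩ := exists_surjective_nat ι
  let P : ℕ → Set X := disjointed fun n => {x | f x = g (u n) x}
  have hP : ∀ n, MeasurableSet (P n) :=
    MeasurableSet.disjointed fun n => measurableSet_eq_fun hf.measurable (hg (u n)).measurable
  have hfP : ∀ n, ∀ x ∈ P n, f x = g (u n) x := fun n x hx => disjointed_subset _ n hx
  have hcover : ∀ᵐ x ∂μ, x ∈ ⋃ n, P n := by
    filter_upwards [h] with x ⟨i, hi⟩
    obtain ⟨n, rfl⟩ := hu i
    exact iUnion_disjointed.superset (mem_iUnion.2 ⟨n, hi⟩)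
  have hdisj : Pairwise (Disjoint on fun n => f '' P n) := fun m n hmn =>
    (disjoint_image_iff hf.injective).2 (disjoint_disjointed _ hmn)
  refine Measure.le_iff.2 fun A hA => ?_
  calc μ.map f A = μ (f ⁻¹' A) := hf.map_apply μ A
    _ ≤ μ (⋃ n, f ⁻¹' A ∩ P n) := measure_mono_ae <| by
        filter_upwards [hcover] with x hx hxA
        rw [← inter_iUnion]
        exact ⟨hxA, hx⟩
    _ ≤ ∑' n, μ (f ⁻¹' A ∩ P n) := measure_iUnion_le _
    _ ≤ ∑' n, μ (g (u n) ⁻¹' (A ∩ f '' P n)) := ENNReal.tsum_le_tsum fun n =>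
        measure_mono fun x hx => by
          rw [mem_preimage, ← hfP n x hx.2]
          exact ⟨hx.1, mem_image_of_mem f hx.2⟩
    _ = ∑' n, μ (A ∩ f '' P n) := tsum_congr fun n =>
        (hg (u n)).measure_preimage (hA.inter (hf.measurableSet_image.2 (hP n))).nullMeasurableSet
    _ ≤ μ (⋃ n, A ∩ f '' P n) := tsum_meas_le_meas_iUnion_of_disjoint μ
        (fun n => hA.inter (hf.measurableSet_image.2 (hP n)))
        fun m n hmn => (hdisj hmn).mono inter_subset_right inter_subset_right
    _ ≤ μ A := measure_mono (iUnion_subset fun n => inter_subset_left)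

lemma measurePreserving_of_ae_exists_eq {ι : Type*} [Countable ι] [Nonempty ι] [MeasurableEq X]
    (f : X ≃ᵐ X) {g : ι → X → X} (hg : ∀ i, MeasurePreserving (g i) μ μ)
    (h : ∀ᵐ x ∂μ, ∃ i, f x = g i x) (h_symm : ∀ᵐ x ∂μ, ∃ i, f.symm x = g i x) :
    MeasurePreserving f μ μ := by
  refine ⟨f.measurable, (map_le_self_of_ae_exists_eq f.measurableEmbedding hg h).antisymm ?_⟩
  calc μ = (μ.map f.symm).map f := (f.map_map_symm).symm
    _ ≤ μ.map f := Measure.map_mono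
        (map_le_self_of_ae_exists_eq f.symm.measurableEmbedding hg h_symm) f.measurable

lemma nullSingletonClass_map {Y : Type*} [MeasurableSpace Y] [MeasurableSingletonClass Y]
    [NullSingletonClass μ] {f : X → Y} (hf : Measurable f) (hinj : Injective f) :
    NullSingletonClass (μ.map f) where
  measure_singleton y := by
    rw [Measure.map_apply hf (measurableSet_singleton y)]
    exact (subsingleton_singleton.preimage hinj).measure_zero μ

lemma preimage_iterate_eq_image_zpow_neg {α : Type*} (e : Equiv.Perm α) (n : ℕ) (s : Set α) :
    e^[n] ⁻¹' s = (e ^ (-n : ℤ)) '' s := by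
  rw [zpow_neg, zpow_natCast, Equiv.Perm.iterate_eq_pow]
  exact ((e ^ n).image_symm_eq_preimage s).symm

lemma apply_zpow_of_apply_eq_add {α A : Type*} [AddGroup A] {e : Equiv.Perm α} {φ : α → A}
    {c : A} (h : ∀ x, φ (e x) = φ x + c) (j : ℤ) (x : α) : φ ((e ^ j) x) = φ x + j • c := by
  induction j with
  | zero => simp
  | succ n ih =>
    rw [add_comm, zpow_one_add, Equiv.Perm.mul_apply, h, ih, add_comm 1, add_one_zsmul,
      add_assoc]
  | pred n ih =>
    have := h ((e ^ (-(n : ℤ) - 1)) x)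
    rw [← Equiv.Perm.mul_apply, ← zpow_one_add, add_sub_cancel, ih] at this
    rw [sub_zsmul, one_zsmul, ← add_assoc, this, add_neg_cancel_right]

end General

section Group

lemma measurePreserving_add_right_map {G H : Type*} [AddZeroClass G] [MeasurableSpace G]
    [MeasurableAdd G] [AddZeroClass H] [MeasurableSpace H] [MeasurableAdd H] {φ : G →+ H}
    (hφ : Measurable φ) (μ : Measure G) [μ.IsAddRightInvariant] (g : G) :
    MeasurePreserving (· + φ g) (μ.map φ) (μ.map φ) :=
  hφ.measurePreserving μ |>.of_semiconj (measurePreserving_add_right μ g) (fun x => map_add φ x g)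
    (measurable_add_const _)

variable {G : Type*} [AddGroup G] [MeasurableSpace G] [TopologicalSpace G]
  [IsTopologicalAddGroup G] [LocallyCompactSpace G] [BorelSpace G] {μ : Measure G}
  [μ.IsAddHaarMeasure] [μ.InnerRegular]

lemma eventually_exists_mem_add_mem {s : Set G} (hs : MeasurableSet s) (hpos : μ s ≠ 0) :
    ∀ᶠ g in 𝓝 (0 : G), ∃ x ∈ s, g + x ∈ s := by
  filter_upwards [Measure.sub_mem_nhds_zero_of_addHaar_pos μ s hs (pos_iff_ne_zero.2 hpos)]
  rintro _ ⟨y, hy, x, hx, rfl⟩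
  exact ⟨x, hx, by simpa using hy⟩

-- If `g + x ∈ s` for all `x` in a non-null part `E` of `sᶜ`, then Steinhaus' theorem for `E` lets
-- us replace `g` by an element of the dense set, which preserves `sᶜ`.
lemma preimage_vadd_ae_le_of_dense {s : Set G} (hs : MeasurableSet s)
    (hd : Dense {g : G | (g +ᵥ ·) ⁻¹' s = s}) (g : G) : (g +ᵥ ·) ⁻¹' s ≤ᵐ[μ] s := by
  rw [ae_le_set]
  by_contra hpos
  have hE : MeasurableSet ((g +ᵥ ·) ⁻¹' s \ s) := (measurable_const_add g hs).diff hs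
  have hlim : Tendsto (fun γ => -γ + g) (𝓝 g) (𝓝 0) :=
    Continuous.tendsto' (by fun_prop) _ _ (neg_add_cancel g)
  obtain ⟨γ, hγ, x, hx, hγx⟩ :=
    hd.inter_nhds_nonempty (hlim.eventually (eventually_exists_mem_add_mem hE hpos))
  refine hγx.2 ?_
  rw [← hγ]
  simpa [vadd_eq_add, add_assoc] using hx.1

lemma aeconst_of_dense_preimage_vadd_eq [MeasurableAdd₂ G] [SFinite μ] {s : Set G}
    (hs : MeasurableSet s) (hd : Dense {g : G | (g +ᵥ ·) ⁻¹' s = s}) :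
    EventuallyConst s (ae μ) := by
  refine aeconst_of_forall_preimage_vadd_ae_eq G hs.nullMeasurableSet fun g => ?_
  refine (preimage_vadd_ae_le_of_dense hs hd g).antisymm ?_
  have hd_compl : Dense {g : G | (g +ᵥ ·) ⁻¹' sᶜ = sᶜ} := by
    simpa only [preimage_compl, compl_inj_iff] using hd
  simpa only [preimage_compl, compl_compl] using
    (preimage_vadd_ae_le_of_dense (μ := μ) hs.compl hd_compl g).compl

end Group

lemma denseRange_finsupp_coe {ι M : Type*} [Zero M] [TopologicalSpace M] :
    DenseRange ((⇑) : (ι →₀ M) → ι → M) := fun x =>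
  mem_closure_of_tendsto (b := atTop)
    (f := fun s : Finset ι => ⇑(Finsupp.indicator s fun i _ => x i))
    (tendsto_pi_nhds.2 fun i => tendsto_nhds_of_eventually_eq <| by
      filter_upwards [eventually_ge_atTop {i}] with s hs
      exact Finsupp.indicator_of_mem (Finset.singleton_subset_iff.1 hs) _)
    (.of_forall fun _ => mem_range_self _)

lemma tendsto_pi_single_nhds_zero {ι M : Type*} [DecidableEq ι] [Zero M] [TopologicalSpace M]
    (c : M) : Tendsto (fun i : ι => (Pi.single i c : ι → M)) cofinite (𝓝 0) :=
  tendsto_pi_nhds.2 fun j => tendsto_nhds_of_eventually_eq <| by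
    filter_upwards [(finite_singleton j).compl_mem_cofinite] with i hi
    exact Pi.single_eq_of_ne (M := fun _ => M) (Ne.symm hi) c

section Odometer

/-- The group of binary sequences with componentwise addition. As a measurable space it is also the
space of 2-adic integers `∑ x n * 2 ^ n`, but the addition of `Bits` carries nothing over. -/
abbrev Bits : Type := ℕ → ZMod 2

/-- The group of finitely supported binary sequences, with the discrete topology. -/
abbrev FinBits : Type := ℕ →₀ ZMod 2

/-- The sequence without its zeroth digit: halving, rounded down, on 2-adic integers. -/
def tail (x : Bits) : Bits := fun n => x (n + 1)

/-- Addition of `1` on 2-adic integers in binary digits, as a function: the carry reaches digit `j`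
exactly when all earlier digits are `1`. -/
def odometerFun (x : Bits) : Bits := fun j => x j + ∏ i ∈ Finset.range j, x i

lemma prod_odometerFun_add_one (x : Bits) (j : ℕ) :
    ∏ i ∈ Finset.range j, (odometerFun x i + 1) = ∏ i ∈ Finset.range j, x i := by
  induction j with
  | zero => rfl
  | succ j ih =>
    have key : ∀ P b : ZMod 2, P * (b + P + 1) = P * b := by decide
    rw [Finset.prod_range_succ, ih, Finset.prod_range_succ, odometerFun, key]

lemma odometerFun_odometerFun_add_one (x : Bits) :
    odometerFun (odometerFun x + 1) = x + 1 := by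
  ext j
  have key : ∀ P b : ZMod 2, b + P + 1 + P = b + 1 := by decide
  have := prod_odometerFun_add_one x j
  simp only [odometerFun, Pi.add_apply, Pi.one_apply] at this ⊢
  rw [this, key]

lemma measurable_odometerFun : Measurable odometerFun := by
  unfold odometerFun
  fun_prop

/-- The odometer `odometerFun` as a measurable equivalence. Complementing all digits conjugates
adding `1` to subtracting `1`, whence the formula for the inverse. -/
def odometer : Bits ≃ᵐ Bits where
  toFun := odometerFun
  invFun x := odometerFun (x + 1) + 1
  left_inv x := by simp only [odometerFun_odometerFun_add_one, CharTwo.add_cancel_right]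
  right_inv x := by
    have := odometerFun_odometerFun_add_one (x + 1)
    rwa [CharTwo.add_cancel_right] at this
  measurable_toFun := measurable_odometerFun
  measurable_invFun := (measurable_odometerFun.comp (measurable_add_const 1)).add_const 1

lemma odometer_apply (x : Bits) (j : ℕ) :
    odometer x j = x j + ∏ i ∈ Finset.range j, x i := rfl

lemma odometer_symm_apply (x : Bits) : odometer.symm x = odometer (x + 1) + 1 := rfl

-- On 2-adic integers: adding `2` and then halving is halving and then adding `1`.
lemma tail_odometer_odometer (x : Bits) :
    tail (odometer (odometer x)) = odometer (tail x) := by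
  have hprod : ∀ j, ∏ i ∈ Finset.range (j + 1), odometer x i =
      (x 0 + 1) * ∏ i ∈ Finset.range j, x (i + 1) := fun j => by
    induction j with
    | zero => simp [odometer_apply]
    | succ j ih =>
      have key : ∀ a b P : ZMod 2, (a + 1) * P * (b + P * a) = (a + 1) * (P * b) := by decide
      rw [Finset.prod_range_succ, ih, odometer_apply, Finset.prod_range_succ', key,
        Finset.prod_range_succ]
  ext j
  have key : ∀ a b P : ZMod 2, b + P * a + (a + 1) * P = b + P := by decide
  rw [tail, odometer_apply, odometer_apply, hprod, Finset.prod_range_succ', key]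
  rfl

lemma semiconj_tail_iterate_odometer (n : ℕ) : Semiconj tail odometer^[2 * n] odometer^[n] := by
  rw [iterate_mul]
  exact Semiconj.iterate_right tail_odometer_odometer n

lemma iterate_two_pow_succ_odometer_apply_zero (k : ℕ) (x : Bits) :
    odometer^[2 ^ (k + 1)] x 0 = x 0 := by
  have h : (fun y : Bits => y 0) ∘ odometer^[2] = fun y => y 0 := by
    ext y
    simp [odometer_apply, add_assoc, CharTwo.add_self_eq_zero]
  rw [pow_succ', iterate_mul]
  exact congrFun (iterate_invariant h _) x

lemma iterate_two_pow_odometer_apply (k : ℕ) (x : Bits) :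
    odometer^[2 ^ k] x k = x k + 1 := by
  induction k generalizing x with
  | zero => simp [odometer_apply]
  | succ k ih =>
    rw [pow_succ']
    exact (congrFun (semiconj_tail_iterate_odometer (2 ^ k) x) k).trans (ih (tail x))

lemma iterate_two_pow_odometer_of_apply_eq_zero {k : ℕ} {x : Bits} (hx : x k = 0) :
    odometer^[2 ^ k] x = x + Pi.single k 1 := by
  induction k generalizing x with
  | zero =>
    ext (_ | j)
    · simp [odometer_apply]
    · simp [odometer_apply, Finset.prod_range_succ', hx]
  | succ k ih =>
    ext (_ | j)
    · simp [iterate_two_pow_succ_odometer_apply_zero]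
    · have := congrFun (ih (x := tail x) hx) j
      rw [← semiconj_tail_iterate_odometer, ← pow_succ'] at this
      simpa [tail, Pi.single_apply] using this

lemma iterate_two_pow_odometer_eq_or (k : ℕ) (x : Bits) :
    odometer^[2 ^ k] x = x + Pi.single k 1 ∨ odometer^[2 ^ k] (x + Pi.single k 1) = x := by
  have key : ∀ b : ZMod 2, b = 0 ∨ b + 1 = 0 := by decide
  refine (key (x k)).imp iterate_two_pow_odometer_of_apply_eq_zero fun h => ?_
  rw [iterate_two_pow_odometer_of_apply_eq_zero (by simpa using h), CharTwo.add_cancel_right]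

lemma exists_odometer_eq_add_finsupp {x : Bits} (hx : x ≠ 1) :
    ∃ γ : FinBits, odometer x = x + γ := by
  have key : ∀ b : ZMod 2, b ≠ 1 → b = 0 := by decide
  obtain ⟨n, hn⟩ := Function.ne_iff.1 hx
  let carry : Bits := fun j => ∏ i ∈ Finset.range j, x i
  have hcarry : carry.support ⊆ Iic n := fun j hj => by
    contrapose! hj
    rw [mem_Iic, not_le, ← Finset.mem_range] at hj
    exact notMem_support.2 (Finset.prod_eq_zero hj (key _ hn))
  exact ⟨.ofSupportFinite carry ((finite_Iic n).subset hcarry), rfl⟩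

lemma exists_odometer_symm_eq_add_finsupp {x : Bits} (hx : x ≠ 0) :
    ∃ γ : FinBits, odometer.symm x = x + γ := by
  obtain ⟨γ, hγ⟩ := exists_odometer_eq_add_finsupp (x := x + 1) (by simpa using hx)
  exact ⟨γ, by rw [odometer_symm_apply, hγ, add_right_comm, CharTwo.add_cancel_right]⟩

lemma add_finsupp_mem_iff_of_preimage_odometer_eq {s : Set Bits} (hs : odometer ⁻¹' s = s)
    (γ : FinBits) (x : Bits) : x + γ ∈ s ↔ x ∈ s := by
  have hiter (n : ℕ) (y : Bits) : odometer^[n] y ∈ s ↔ y ∈ s := by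
    rw [← mem_preimage, preimage_iterate_eq, iterate_fixed hs]
  induction γ using Finsupp.induction_linear generalizing x with
  | zero => simp
  | add f g hf hg =>
    rw [Finsupp.coe_add, ← add_assoc]
    exact (hg _).trans (hf x)
  | single k b =>
    have key : ∀ b : ZMod 2, b = 0 ∨ b = 1 := by decide
    obtain rfl | rfl := key b
    · simp
    · rw [Finsupp.single_eq_pi_single]
      obtain h | h := iterate_two_pow_odometer_eq_or k x
      · rw [← h, hiter]
      · rw [← hiter (2 ^ k), h]

end Odometer

section InvariantMeasure

instance : TopologicalSpace FinBits := ⊥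

instance : DiscreteTopology FinBits := ⟨rfl⟩

instance : MeasurableSpace FinBits := ⊤

instance : DiscreteMeasurableSpace FinBits := ⟨fun _ => trivial⟩

instance : NoncompactSpace FinBits :=
  not_compactSpace_iff.1 fun _ =>
    not_finite_iff_infinite.2 inferInstance (finite_of_compact_of_discrete (X := FinBits))

/-- The digit sequence with prescribed even digits `p.1` and prescribed odd digits `p.2`. It embeds
the noncompact group `Bits × FinBits` into `Bits`. -/
def interleave : Bits × FinBits →+ Bits where
  toFun p := Sum.elim p.1 p.2 ∘ Equiv.natSumNatEquivNat.symm
  map_zero' := by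
    ext n
    obtain ⟨m | m, rfl⟩ := Equiv.natSumNatEquivNat.surjective n <;> simp
  map_add' p q := by
    ext n
    obtain ⟨m | m, rfl⟩ := Equiv.natSumNatEquivNat.surjective n <;> simp

lemma interleave_apply_two_mul (p : Bits × FinBits) (n : ℕ) : interleave p (2 * n) = p.1 n :=
  congrArg (Sum.elim p.1 p.2) (Equiv.natSumNatEquivNat.symm_apply_apply (.inl n))

lemma interleave_apply_two_mul_add_one (p : Bits × FinBits) (n : ℕ) :
    interleave p (2 * n + 1) = p.2 n :=
  congrArg (Sum.elim p.1 p.2) (Equiv.natSumNatEquivNat.symm_apply_apply (.inr n))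

lemma injective_interleave : Injective interleave := fun p q h => by
  refine Prod.ext (funext fun n => ?_) (Finsupp.ext fun n => ?_)
  · simpa only [interleave_apply_two_mul] using congrFun h (2 * n)
  · simpa only [interleave_apply_two_mul_add_one] using congrFun h (2 * n + 1)

lemma measurable_interleave : Measurable interleave := by
  refine measurable_pi_iff.2 fun n => ?_
  obtain ⟨m, rfl | rfl⟩ := n.even_or_odd'
  · simp only [interleave_apply_two_mul]
    exact (measurable_pi_apply m).comp measurable_fst
  · simp only [interleave_apply_two_mul_add_one]
    exact (Measurable.of_discrete (f := fun γ : FinBits => γ m)).comp measurable_snd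

/-- The isomorphism that `interleave` restricts to on pairs of finitely supported sequences. -/
noncomputable def interleaveFinsupp : FinBits × FinBits ≃+ FinBits :=
  Finsupp.sumFinsuppAddEquivProdFinsupp.symm.trans (Finsupp.domCongr Equiv.natSumNatEquivNat)

lemma interleave_coe_finsupp (p : FinBits × FinBits) :
    interleave (⇑p.1, p.2) = interleaveFinsupp p := by
  ext n
  obtain ⟨m | m, rfl⟩ := Equiv.natSumNatEquivNat.surjective n <;>
    simp [interleave, interleaveFinsupp]

/-- The infinite invariant measure of the odometer: Haar measure on `Bits × FinBits`, carried over
to `Bits` by `interleave`. -/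
noncomputable def bitsMeasure : Measure Bits :=
  (Measure.addHaar : Measure (Bits × FinBits)).map interleave

lemma tendsto_prodMk_single_nhds_zero :
    Tendsto (fun n : ℕ => ((Pi.single n 1, 0) : Bits × FinBits)) atTop (𝓝 0) := by
  rw [← Nat.cofinite_eq_atTop]
  exact (tendsto_pi_single_nhds_zero 1).prodMk_nhds tendsto_const_nhds

instance : NeBot (𝓝[≠] (0 : Bits × FinBits)) :=
  (tendsto_nhdsWithin_iff.2 ⟨tendsto_prodMk_single_nhds_zero, .of_forall fun n => by simp⟩).neBot

instance : NullSingletonClass bitsMeasure :=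
  nullSingletonClass_map measurable_interleave injective_interleave

instance : SigmaFinite bitsMeasure :=
  (measurable_interleave.measurableEmbedding injective_interleave).sigmaFinite_map

lemma bitsMeasure_apply {s : Set Bits} (hs : MeasurableSet s) :
    bitsMeasure s = Measure.addHaar (interleave ⁻¹' s) :=
  Measure.map_apply measurable_interleave hs

lemma bitsMeasure_univ : bitsMeasure univ = ⊤ := by
  rw [bitsMeasure_apply .univ, preimage_univ]
  exact measure_univ_of_isAddLeftInvariant _

lemma measurePreserving_add_finsupp_bitsMeasure (γ : FinBits) :
    MeasurePreserving (fun x : Bits => x + γ) bitsMeasure bitsMeasure := by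
  obtain ⟨p, rfl⟩ := interleaveFinsupp.surjective γ
  rw [← interleave_coe_finsupp]
  exact measurePreserving_add_right_map measurable_interleave _ (⇑p.1, p.2)

lemma measurePreserving_odometer : MeasurePreserving odometer bitsMeasure bitsMeasure :=
  measurePreserving_of_ae_exists_eq odometer measurePreserving_add_finsupp_bitsMeasure
    ((Measure.ae_ne bitsMeasure 1).mono fun _ => exists_odometer_eq_add_finsupp)
    ((Measure.ae_ne bitsMeasure 0).mono fun _ => exists_odometer_symm_eq_add_finsupp)

lemma interleave_single (n : ℕ) : interleave (Pi.single n 1, 0) = Pi.single (2 * n) 1 := by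
  ext j
  obtain ⟨m, rfl | rfl⟩ := j.even_or_odd'
  · simp [interleave_apply_two_mul, Pi.single_apply]
  · rw [interleave_apply_two_mul_add_one, Pi.single_eq_of_ne (by lia), Finsupp.zero_apply]

lemma conservative_odometer : Conservative odometer bitsMeasure where
  toQuasiMeasurePreserving := measurePreserving_odometer.quasiMeasurePreserving
  exists_mem_iterate_mem' := fun s hs hpos => by
    rw [bitsMeasure_apply hs] at hpos
    obtain ⟨n, p, hp, hnp⟩ := (tendsto_prodMk_single_nhds_zero.eventually
      (eventually_exists_mem_add_mem (measurable_interleave hs) hpos)).exists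
    rw [mem_preimage, map_add, interleave_single, add_comm] at hnp
    obtain h | h := iterate_two_pow_odometer_eq_or (2 * n) (interleave p)
    · exact ⟨_, hp, _, (Nat.two_pow_pos _).ne', h ▸ hnp⟩
    · exact ⟨_, hnp, _, (Nat.two_pow_pos _).ne', by rwa [h]⟩

lemma ergodic_odometer : Ergodic odometer bitsMeasure where
  toMeasurePreserving := measurePreserving_odometer
  aeconst_set s hs hinv := by
    have hd : Dense {g : Bits × FinBits | (g +ᵥ ·) ⁻¹' (interleave ⁻¹' s) = interleave ⁻¹' s} := by
      refine (denseRange_finsupp_coe.prodMap denseRange_id).mono ?_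
      rintro _ ⟨p, rfl⟩
      ext q
      have h :=
        add_finsupp_mem_iff_of_preimage_odometer_eq hinv (interleaveFinsupp p) (interleave q)
      rwa [← interleave_coe_finsupp, ← map_add, add_comm] at h
    exact (measurable_interleave.measurePreserving _).aeconst_preimage hs.nullMeasurableSet |>.1
      (aeconst_of_dense_preimage_vadd_eq (measurable_interleave hs) hd)

end InvariantMeasure

section Recurrence

/-- The sequences supported on even positions: the set that does not recur. -/
def evenBits : Set Bits := {x | ∀ k, Odd k → x k = 0}

lemma measurableSet_evenBits : MeasurableSet evenBits := by
  unfold evenBits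
  measurability

lemma bitsMeasure_evenBits_pos : 0 < bitsMeasure evenBits := by
  rw [bitsMeasure_apply measurableSet_evenBits]
  have hopen : IsOpen (univ ×ˢ {0} : Set (Bits × FinBits)) := isOpen_univ.prod (isOpen_discrete _)
  refine (hopen.measure_pos _ ⟨0, by simp⟩).trans_le (measure_mono ?_)
  rintro ⟨x, γ⟩ ⟨-, rfl⟩ _ ⟨n, rfl⟩
  exact interleave_apply_two_mul_add_one _ n

lemma disjoint_zpow_image_evenBits {k : ℕ} (hk : Odd k) {j : ℤ} (hj : Odd j) :
    Disjoint ((odometer.toEquiv ^ (2 ^ k * j) : Equiv.Perm Bits) '' evenBits) evenBits := by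
  have hflip (x : Bits) : (odometer.toEquiv ^ (2 ^ k) : Equiv.Perm Bits) x k = x k + 1 := by
    rw [← Equiv.Perm.iterate_eq_pow]
    exact iterate_two_pow_odometer_apply k x
  rw [disjoint_left]
  rintro _ ⟨x, hx, rfl⟩ hTx
  have h := apply_zpow_of_apply_eq_add (φ := fun y : Bits => y k) hflip j x
  rw [← zpow_natCast, ← zpow_mul, Nat.cast_pow, Nat.cast_ofNat] at h
  simp [hTx k hk, hx k hk, (ZMod.intCast_eq_one_iff_odd).2 hj] at h

lemma zpow_image_inter_zpow_two_mul_image_evenBits {i : ℤ} (hi : i ≠ 0) :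
    ((odometer.toEquiv : Equiv.Perm Bits) ^ i) '' evenBits ∩
      ((odometer.toEquiv : Equiv.Perm Bits) ^ (2 * i)) '' evenBits ∩ evenBits = ∅ := by
  obtain ⟨k, j, hj, rfl⟩ : ∃ (k : ℕ) (j : ℤ), Odd j ∧ i = 2 ^ k * j := by
    obtain ⟨j, hij, hj⟩ :=
      (Int.finiteMultiplicity_iff.2 ⟨by decide, hi⟩ : FiniteMultiplicity 2 i
        ).exists_eq_pow_mul_and_not_dvd
    exact ⟨_, j, by rwa [← Int.not_even_iff_odd, even_iff_two_dvd], hij⟩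
  obtain hk | hk := k.even_or_odd
  · have := disjoint_zpow_image_evenBits hk.add_one hj
    rw [pow_succ', mul_assoc] at this
    rw [inter_assoc, this.inter_eq, inter_empty]
  · rw [inter_right_comm, (disjoint_zpow_image_evenBits hk hj).inter_eq, empty_inter]

end Recurrence

theorem stmt10 :
    ∃ (X : Type) (_ : MeasurableSpace X) (_ : StandardBorelSpace X)
      (μ : Measure X) (_ : NoAtoms μ) (_ : SigmaFinite μ) (T : X ≃ᵐ X),
      μ Set.univ = ⊤ ∧ MeasurePreserving T μ μ ∧
      IsConservativeMap μ ⇑T ∧ IsErgodicMap μ ⇑T ∧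
      ∃ (p q : ℕ) (A : Set X), 0 < p ∧ p < q ∧ MeasurableSet A ∧ 0 < μ A ∧
        (∀ i : ℤ, i ≠ 0 →
          μ (((T.toEquiv : Equiv.Perm X) ^ ((p : ℤ) * i)) '' A ∩
             ((T.toEquiv : Equiv.Perm X) ^ ((q : ℤ) * i)) '' A ∩ A) = 0) ∧
        ¬ ∃ n : ℕ, 0 < n ∧
            0 < μ (A ∩ (⇑T)^[p * n] ⁻¹' A ∩ (⇑T)^[q * n] ⁻¹' A) := by
  have hnull (i : ℤ) (hi : i ≠ 0) :
      bitsMeasure (((odometer.toEquiv : Equiv.Perm Bits) ^ (((1 : ℕ) : ℤ) * i)) '' evenBits ∩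
        ((odometer.toEquiv : Equiv.Perm Bits) ^ (((2 : ℕ) : ℤ) * i)) '' evenBits ∩
        evenBits) = 0 := by
    rw [Nat.cast_one, one_mul, Nat.cast_ofNat, zpow_image_inter_zpow_two_mul_image_evenBits hi,
      measure_empty]
  refine ⟨Bits, inferInstance, inferInstance, bitsMeasure, (inferInstance : NullSingletonClass _),
    inferInstance, odometer, bitsMeasure_univ, measurePreserving_odometer,
    isConservativeMap_of_conservative conservative_odometer,
    isErgodicMap_of_quasiErgodic ergodic_odometer.quasiErgodic, 1, 2, evenBits, one_pos,
    one_lt_two, measurableSet_evenBits, bitsMeasure_evenBits_pos, hnull, ?_⟩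
  rintro ⟨n, hn, hpos⟩
  have hzero := hnull (-n) (by simpa using hn.ne')
  rw [mul_neg, mul_neg, ← Nat.cast_mul, ← Nat.cast_mul, ← preimage_iterate_eq_image_zpow_neg,
    ← preimage_iterate_eq_image_zpow_neg, inter_comm, ← inter_assoc] at hzero
  exact hpos.ne' hzero
end
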